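/- arXiv:1807.07802 — 2 statements merged into one kernel-verified Lean document; each statement's English description precedes it below -/
import Mathlib

section
/- Let Γ = (V,E) be a finite simplicial graph with an edge labeling ψ : E → {2,3,4,...}. If Γ has no induced cycle of length greater than 3, and for every complete (induced) subgraph Δ of Γ the Coxeter group C(Δ) is slender, then the Coxeter group C(Γ) is coherent. -/
def Group.Slender (G : Type*) [Group G] : Prop := ∀ H : Subgroup G, H.FG

def Group.FinitelyPresented (G : Type*) [Group G] : Prop :=
  ∃ (n : ℕ) (rels : Set (FreeGroup (Fin n))), rels.Finite ∧ Nonempty (PresentedGroup rels ≃* G)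

def Group.Coherent (G : Type*) [Group G] : Prop :=
  ∀ H : Subgroup G, H.FG → Group.FinitelyPresented H

def SimpleGraph.NoInducedCycleGT3 {V : Type*} (Γ : SimpleGraph V) : Prop :=
  ∀ n : ℕ, 4 ≤ n → IsEmpty (SimpleGraph.cycleGraph n ↪g Γ)

/-- The restriction of a Coxeter matrix to a set of indices
(corresponding to an induced subgraph of the Coxeter graph). -/
def CoxeterMatrix.restrict {V : Type*} (M : CoxeterMatrix V) (S : Set V) : CoxeterMatrix S where
  M a b := M a b
  isSymm := Matrix.IsSymm.ext fun a b => M.isSymm.apply a b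
  diagonal a := M.diagonal a
  off_diagonal a b h := M.off_diagonal a b (fun hc => h (Subtype.ext hc))

/-- `M` is the Coxeter matrix associated to the simplicial graph `Γ` with edge labeling
`ψ : E → {2,3,4,...}` (recorded by the values of `M` on adjacent pairs): non-adjacent
distinct vertices get the label `0` (that is, `∞`: no relation). -/
def CoxeterMatrix.IsMatrixOf {V : Type*} (M : CoxeterMatrix V) (Γ : SimpleGraph V) : Prop :=
  (∀ v w, Γ.Adj v w → 2 ≤ M v w) ∧ (∀ v w, v ≠ w → ¬Γ.Adj v w → M v w = 0)

namespace CoxCoh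

open Group

/-- Extensions of finitely presented groups by finitely presented groups (auxiliary form). -/
theorem isFP_of_extension_aux {G Q P : Type*} [Group G] [Group Q] [Group P] (f : G →* Q)
    (hP : IsFinitelyPresented P) {n : ℕ}
    (φ : FreeGroup (Fin n) →* Q) (hφs : Function.Surjective φ)
    (S : Set (FreeGroup (Fin n))) (hSfin : S.Finite) (hS : Subgroup.normalClosure S = φ.ker)
    (X : Set f.ker) (hX : Subgroup.closure X = ⊤) (hXfin : X.Finite)
    (g : Fin n → G) (hg : ∀ i, f (g i) = φ (FreeGroup.of i))
    (il : f.ker →* P) (ir : FreeGroup (Fin n) →* P) (F : P →* G)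
    (hFil : ∀ x, F (il x) = (x : G)) (hFir : ∀ x, F (ir x) = FreeGroup.lift g x)
    (hind : ∀ (C : P → Prop), (∀ x, C (il x)) → (∀ x, C (ir x)) →
      (∀ x y, C x → C y → C (x * y)) → ∀ p, C p) :
    IsFinitelyPresented G := by
  have hfF : ∀ w, f (FreeGroup.lift g w) = φ w := by
    intro w
    have : f.comp (FreeGroup.lift g) = φ := by
      ext i; simp [hg]
    exact DFunLike.congr_fun this w
  have hsurj : Function.Surjective F := by
    intro x
    obtain ⟨w, hw⟩ := hφs (f x)
    refine ⟨il ⟨x * (FreeGroup.lift g w)⁻¹, ?_⟩ * ir w, ?_⟩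
    · rw [MonoidHom.mem_ker, map_mul, map_inv, hfF, hw, mul_inv_cancel]
    · rw [map_mul, hFil, hFir]; simp
  have hmem : ∀ s ∈ S, FreeGroup.lift g s ∈ f.ker := by
    intro s hs
    rw [MonoidHom.mem_ker, hfF, ← MonoidHom.mem_ker, ← hS]
    exact Subgroup.subset_normalClosure hs
  have hc1 : ∀ (a : G) (x : f.ker), a * x * a⁻¹ ∈ f.ker := fun a x =>
    (inferInstance : f.ker.Normal).conj_mem _ x.2 a
  let r1 : Fin n × f.ker → P := fun p =>
    ir (.of p.1) * il p.2 * (ir (.of p.1))⁻¹ * (il ⟨_, hc1 (g p.1) p.2⟩)⁻¹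
  let r2 : Fin n × f.ker → P := fun p =>
    (ir (.of p.1))⁻¹ * il p.2 * (ir (.of p.1)) * (il ⟨_, hc1 (g p.1)⁻¹ p.2⟩)⁻¹
  let r3 : S → P := fun s => ir s * (il ⟨_, hmem s s.2⟩)⁻¹
  let R : Set P := r1 '' (Set.univ ×ˢ X) ∪ r2 '' (Set.univ ×ˢ X) ∪ Set.range r3
  have hRfin : R.Finite := by
    have := hSfin.to_subtype
    refine (((Set.finite_univ.prod hXfin).image _).union
      ((Set.finite_univ.prod hXfin).image _)).union (Set.finite_range _)
  refine IsFinitelyPresented.of_surjective F hsurj ⟨R, hRfin, ?_⟩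
  apply le_antisymm
  · apply Subgroup.normalClosure_le_normal
    rintro _ ((⟨⟨i, x⟩, -, rfl⟩ | ⟨⟨i, x⟩, -, rfl⟩) | ⟨s, rfl⟩)
    · simp [r1, hFil, hFir, MonoidHom.mem_ker]
    · simp [r2, hFil, hFir, MonoidHom.mem_ker]
    · simp [r3, hFil, hFir, MonoidHom.mem_ker]
  · let K := Subgroup.normalClosure R
    let q : P →* P ⧸ K := QuotientGroup.mk' K
    have hq1 : ∀ r ∈ R, q r = 1 := fun r hr =>
      (QuotientGroup.eq_one_iff r).2 (Subgroup.subset_normalClosure hr)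
    let N' : Subgroup (P ⧸ K) := (q.comp il).range
    have hgen : ∀ (a : P ⧸ K), (∀ x ∈ X, a * q (il x) * a⁻¹ ∈ N') → ∀ y ∈ N', a * y * a⁻¹ ∈ N' := by
      rintro a ha _ ⟨y, rfl⟩
      have : y ∈ Subgroup.closure X := by rw [hX]; trivial
      have hle : Subgroup.closure X ≤ N'.comap ((MulAut.conj a).toMonoidHom.comp (q.comp il)) := by
        rw [Subgroup.closure_le]
        intro x hx
        simpa using ha x hx
      simpa using hle this
    have hN' : N'.Normal := by
      have key : ∀ p : P, q p ∈ Subgroup.normalizer (N' : Set (P ⧸ K)) := by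
        intro p
        refine hind (fun p => q p ∈ Subgroup.normalizer (N' : Set (P ⧸ K))) ?_ ?_ ?_ p
        · intro x
          exact Subgroup.le_normalizer ⟨x, rfl⟩
        · intro w
          have : ∀ i, q (ir (.of i)) ∈ Subgroup.normalizer (N' : Set (P ⧸ K)) := by
            intro i
            have h1 := hgen (q (ir (.of i))) (by
              intro x hx
              have := hq1 (r1 (i, x)) (Or.inl (Or.inl ⟨(i, x), ⟨trivial, hx⟩, rfl⟩))
              simp only [r1, map_mul, map_inv, mul_inv_eq_one] at this
              rw [this]
              exact ⟨_, rfl⟩)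
            have h2 := hgen (q (ir (.of i)))⁻¹ (by
              intro x hx
              have := hq1 (r2 (i, x)) (Or.inl (Or.inr ⟨(i, x), ⟨trivial, hx⟩, rfl⟩))
              simp only [r2, map_mul, map_inv, mul_inv_eq_one] at this
              rw [inv_inv, this]
              exact ⟨_, rfl⟩)
            rw [Subgroup.mem_normalizer_iff]
            intro h
            refine ⟨h1 h, fun hh => ?_⟩
            have := h2 _ hh
            simpa [mul_assoc] using this
          have hle : (⊤ : Subgroup (FreeGroup (Fin n))) ≤
              (Subgroup.normalizer (N' : Set (P ⧸ K))).comap (q.comp ir) := by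
            rw [← FreeGroup.closure_range_of, Subgroup.closure_le]
            rintro _ ⟨i, rfl⟩
            exact this i
          exact hle (Subgroup.mem_top w)
        · intro x y hx hy
          rw [map_mul]; exact mul_mem hx hy
      constructor
      intro x hx a
      obtain ⟨p, rfl⟩ := QuotientGroup.mk'_surjective K a
      exact (Subgroup.mem_normalizer_iff.1 (key p) x).1 hx
    have hdec : ∀ p : P, ∃ w, q p * q (ir w) ∈ N' := by
      intro p
      refine hind (fun p => ∃ w, q p * q (ir w) ∈ N') ?_ ?_ ?_ p
      · intro x
        exact ⟨1, x, by simp⟩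
      · intro w
        exact ⟨w⁻¹, by rw [← map_mul, ← map_mul, mul_inv_cancel, map_one, map_one]; exact one_mem _⟩
      · intro x y hx hy
        obtain ⟨w, hw⟩ := hx
        obtain ⟨v, hv⟩ := hy
        refine ⟨v * w, ?_⟩
        have := mul_mem (hN'.conj_mem _ hv (q x)) hw
        simpa [mul_assoc] using this
    have hkerw : ∀ w ∈ φ.ker, q (ir w) ∈ N' := by
      intro w hw
      rw [← hS] at hw
      have : Subgroup.normalClosure S ≤ N'.comap (q.comp ir) := by
        apply Subgroup.normalClosure_le_normal
        intro s hs
        have := hq1 (r3 ⟨s, hs⟩) (Or.inr ⟨_, rfl⟩)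
        simp only [r3, map_mul, map_inv, mul_inv_eq_one] at this
        exact ⟨_, this.symm⟩
      exact this hw
    intro p hp
    obtain ⟨w, hw⟩ := hdec p
    obtain ⟨x, hx⟩ := id hw
    have hKF : K ≤ F.ker := by
      apply Subgroup.normalClosure_le_normal
      rintro _ ((⟨⟨i, x⟩, -, rfl⟩ | ⟨⟨i, x⟩, -, rfl⟩) | ⟨s, rfl⟩)
      · simp [r1, hFil, hFir, MonoidHom.mem_ker]
      · simp [r2, hFil, hFir, MonoidHom.mem_ker]
      · simp [r3, hFil, hFir, MonoidHom.mem_ker]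
    have hFq : ∀ a b : P, q a = q b → F a = F b := by
      intro a b hab
      have := hKF ((QuotientGroup.eq (s := K)).1 hab)
      rw [MonoidHom.mem_ker, map_mul, map_inv, inv_mul_eq_one] at this
      exact this
    have hwφ : w ∈ φ.ker := by
      have h1 : F (il x) = F (p * ir w) := hFq _ _ (by simpa using hx)
      rw [map_mul, hFil, MonoidHom.mem_ker.1 hp, one_mul, hFir] at h1
      rw [MonoidHom.mem_ker, ← hfF, ← h1]
      exact x.2
    have : q p ∈ N' := by
      have := mul_mem hw (inv_mem (hkerw w hwφ))
      simpa [mul_assoc] using this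
    obtain ⟨y, hy⟩ := this
    have h2 : F (il y) = F p := hFq _ _ hy
    rw [hFil, MonoidHom.mem_ker.1 hp] at h2
    have h3 : y = 1 := Subtype.ext h2
    rw [h3, map_one] at hy
    exact (QuotientGroup.eq_one_iff p).1 hy.symm

/-- Extensions of finitely presented groups by finitely presented groups. -/
theorem isFP_of_extension {G Q : Type*} [Group G] [Group Q] (f : G →* Q)
    (hf : Function.Surjective f) (hN : IsFinitelyPresented f.ker) (hQ : IsFinitelyPresented Q) :
    IsFinitelyPresented G := by
  obtain ⟨n, φ, hφs, S, hSfin, hS⟩ := hQ.out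
  have hNfg : Group.FG f.ker := by
    obtain ⟨m, ψ, hψ, -⟩ := hN.out
    exact Group.fg_of_surjective hψ
  obtain ⟨X, hX, hXfin⟩ := (Subgroup.fg_iff _).1 (Group.fg_def.1 hNfg)
  choose g hg using fun i : Fin n => hf (φ (FreeGroup.of i))
  refine isFP_of_extension_aux (P := Monoid.Coprod f.ker (FreeGroup (Fin n))) f inferInstance
    φ hφs S hSfin hS X hX hXfin g hg Monoid.Coprod.inl Monoid.Coprod.inr
    (Monoid.Coprod.lift f.ker.subtype (FreeGroup.lift g)) (fun x => by simp) (fun x => by simp) ?_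
  intro C h1 h2 h3 p
  induction p using Monoid.Coprod.induction_on with
  | inl x => exact h1 x
  | inr w => exact h2 w
  | mul x y hx hy => exact h3 x y hx hy

/-- All subgroups are finitely presented. -/
def AllFP (G : Type*) [Group G] : Prop := ∀ H : Subgroup G, IsFinitelyPresented H

theorem AllFP.of_injective {G G' : Type*} [Group G] [Group G'] (h : AllFP G) (f : G' →* G)
    (hf : Function.Injective f) : AllFP G' := fun H =>
  have := h (H.map f)
  IsFinitelyPresented.equiv (H.equivMapOfInjective f hf).symm

theorem AllFP.self {G : Type*} [Group G] (h : AllFP G) : IsFinitelyPresented G :=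
  have := h ⊤
  IsFinitelyPresented.equiv Subgroup.topEquiv

theorem AllFP.extension {G Q : Type*} [Group G] [Group Q] (f : G →* Q)
    (hN : AllFP f.ker) (hQ : AllFP Q) : AllFP G := by
  intro H
  let g := (f.comp H.subtype).rangeRestrict
  refine isFP_of_extension g (MonoidHom.rangeRestrict_surjective _) ?_ (hQ _)
  have hk : ∀ x : g.ker, ((x : H) : G) ∈ f.ker := by
    rintro ⟨x, hx⟩
    have := congrArg Subtype.val (MonoidHom.mem_ker.1 hx)
    simpa [g] using this
  let j : g.ker →* f.ker :=
    { toFun := fun x => ⟨((x : H) : G), hk x⟩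
      map_one' := rfl
      map_mul' := fun _ _ => rfl }
  refine (hN.of_injective j ?_).self
  intro x y hxy
  exact Subtype.ext (Subtype.ext (congrArg (fun z : f.ker => (z : G)) hxy))

theorem AllFP.of_finite (G : Type*) [Group G] [Finite G] : AllFP G := fun _ => inferInstance

theorem isFP_of_isCyclic (G : Type*) [Group G] [IsCyclic G] : IsFinitelyPresented G := by
  obtain ⟨g, hg⟩ := IsCyclic.exists_generator (α := G)
  have : (zpowersHom G g).ker.FG := by
    have hc : IsCyclic (zpowersHom G g).ker := inferInstance
    obtain ⟨z, hz⟩ := hc.exists_generator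
    refine (Group.fg_iff_subgroup_fg _).1 (Group.fg_def.2 ⟨{z}, ?_⟩)
    rw [eq_top_iff]
    intro x _
    rw [Finset.coe_singleton, ← Subgroup.zpowers_eq_closure]
    exact hz x
  exact IsFinitelyPresented.of_surjective (zpowersHom G g)
    (fun x => by obtain ⟨k, hk⟩ := hg x; exact ⟨Multiplicative.ofAdd k, by simpa using hk⟩)
    (have h2 := (Group.fg_iff_subgroup_fg _).2 this; .of_FG _)

theorem AllFP.int : AllFP (Multiplicative ℤ) := fun _ => isFP_of_isCyclic _

theorem AllFP.pi_int (k : ℕ) : AllFP (Fin k → Multiplicative ℤ) := by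
  induction k with
  | zero => exact AllFP.of_finite _
  | succ k ih =>
    let f : (Fin (k + 1) → Multiplicative ℤ) →* Multiplicative ℤ := Pi.evalMonoidHom _ 0
    refine AllFP.extension f ?_ AllFP.int
    let j : f.ker →* (Fin k → Multiplicative ℤ) :=
      { toFun := fun x i => (x : Fin (k + 1) → Multiplicative ℤ) i.succ
        map_one' := rfl
        map_mul' := fun _ _ => rfl }
    refine ih.of_injective j ?_
    intro x y hxy
    apply Subtype.ext
    funext i
    refine Fin.cases ?_ (fun i => congrFun hxy i) i
    have hx := MonoidHom.mem_ker.1 x.2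
    have hy := MonoidHom.mem_ker.1 y.2
    exact hx.trans hy.symm

/-- A group with a finite index subgroup embedding in a free abelian group. -/
theorem AllFP.of_finiteIndex {G : Type*} [Group G] (N : Subgroup G) [N.FiniteIndex]
    (hN : AllFP N) : AllFP G := by
  refine AllFP.extension (QuotientGroup.mk' N.normalCore) ?_ (AllFP.of_finite _)
  rw [QuotientGroup.ker_mk']
  exact hN.of_injective (Subgroup.inclusion N.normalCore_le) (Subgroup.inclusion_injective _)

end CoxCoh

namespace CoxCoh

/-- `NBW adj x y z`: there is a nonbacktracking walk starting at `x` whose last step is `y → z`. -/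
inductive NBW {X : Type*} (adj : X → X → Prop) : X → X → X → Prop
  | one {x y : X} : adj x y → NBW adj x x y
  | step {x y z w : X} : NBW adj x y z → adj z w → w ≠ y → NBW adj x z w

theorem NBW.of_reflTransGen {X : Type*} {adj : X → X → Prop}
    {x z : X} (h : Relation.ReflTransGen adj x z) : x = z ∨ ∃ y, NBW adj x y z := by
  induction h with
  | refl => exact Or.inl rfl
  | @tail z w _ hzw ih =>
    rcases ih with rfl | ⟨y, hy⟩
    · exact Or.inr ⟨x, .one hzw⟩
    · by_cases hwy : w = y
      · subst hwy
        cases hy with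
        | one h => exact Or.inl rfl
        | step h1 h2 h3 => exact Or.inr ⟨_, h1⟩
      · exact Or.inr ⟨_, .step hy hzw hwy⟩

theorem NBW.adj_last {X : Type*} {adj : X → X → Prop} {x y z : X} (h : NBW adj x y z) :
    adj y z := by
  cases h with
  | one h => exact h
  | step _ h _ => exact h

theorem NBW.map {X Y : Type*} {adj : X → X → Prop} {adj' : Y → Y → Prop}
    (hsymm : ∀ x y, adj x y → adj y x) (p : X → Y)
    (hp : ∀ x y, adj x y → adj' (p x) (p y))
    (hinj : ∀ x y z, adj x y → adj x z → p y = p z → y = z) {x y z : X} (h : NBW adj x y z) :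
    NBW adj' (p x) (p y) (p z) := by
  induction h with
  | one h => exact .one (hp _ _ h)
  | @step y z w h1 h2 h3 ih =>
    exact .step ih (hp _ _ h2) (fun he => h3 (hinj _ _ _ h2 (hsymm _ _ h1.adj_last) he))

/-- A locally injective map from a connected graph to a tree is injective. -/
theorem injective_of_locally_injective {X Y : Type*} {adj : X → X → Prop} {adj' : Y → Y → Prop}
    (hsymm : ∀ x y, adj x y → adj y x) (p : X → Y)
    (hp : ∀ x y, adj x y → adj' (p x) (p y))
    (hinj : ∀ x y z, adj x y → adj x z → p y = p z → y = z)
    (hNB : ∀ x y z, NBW adj' x y z → x ≠ z)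
    {x z : X} (h : Relation.ReflTransGen adj x z) (hxz : p x = p z) : x = z := by
  rcases NBW.of_reflTransGen h with h | ⟨y, hy⟩
  · exact h
  · exact absurd hxz (hNB _ _ _ (hy.map hsymm p hp hinj))

theorem rtg_symm {X : Type*} {r : X → X → Prop} (hs : ∀ x y, r x y → r y x) {x y : X}
    (h : Relation.ReflTransGen r x y) : Relation.ReflTransGen r y x := by
  have : Std.Symm r := ⟨hs⟩
  exact Relation.ReflTransGen.stdSymm.symm _ _ h

section T1

variable {H Hh X U : Type*} [Group H] [Group Hh] [MulAction H X]

theorem tree_injective (adj : X → X → Prop)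
    (hinv : ∀ (g : H) x y, adj x y → adj (g • x) (g • y))
    (hsymm : ∀ x y, adj x y → adj y x)
    (hNB : ∀ x y z, NBW adj x y z → x ≠ z)
    (π : Hh →* H) (p : U → X) (ρ : U → U) (R : U → Subgroup Hh) (A : U → Hh)
    (hR : ∀ u, ∀ k ∈ R (ρ u), π k • p (ρ u) = p (ρ u))
    (hRinj : ∀ u, ∀ k ∈ R u, π k = 1 → k = 1)
    (hA : ∀ u, π (A u) • p (ρ u) = p u)
    (hρρ : ∀ u, ρ (ρ u) = ρ u) (hAρ : ∀ u, A (ρ u) = 1)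
    (hρ : ∀ (g : H) u v, g • p v = p u → ρ u = ρ v)
    (hedge : ∀ u u' v v', adj (p u) (p u') → adj (p v) (p v') → ρ u = ρ v → ∀ g : Hh,
      (A u)⁻¹ * g * A v ∈ R (ρ u) → π g • p v' = p u' → (A u')⁻¹ * g * A v' ∈ R (ρ u'))
    (hgen : Subgroup.closure ((⋃ u, (R (ρ u) : Set Hh)) ∪ Set.range A) = ⊤)
    (hconn : ∀ u v : U, Relation.ReflTransGen (fun u v => adj (p u) (p v)) u v) [Nonempty U] :
    Function.Injective π := by
  let st : Setoid (Hh × U) :=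
    { r := fun a b => ρ a.2 = ρ b.2 ∧ (A a.2)⁻¹ * (a.1⁻¹ * b.1) * A b.2 ∈ R (ρ a.2)
      iseqv := by
        refine ⟨fun a => ⟨rfl, by simp⟩, ?_, ?_⟩
        · rintro a b ⟨h1, h2⟩
          refine ⟨h1.symm, ?_⟩
          have := inv_mem h2
          rw [← h1]
          simpa [mul_assoc] using this
        · rintro a b c ⟨h1, h2⟩ ⟨h3, h4⟩
          refine ⟨h1.trans h3, ?_⟩
          rw [← h1] at h4
          have := mul_mem h2 h4
          simpa [mul_assoc] using this }
  let Xh := Quotient st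
  let mk : Hh → U → Xh := fun g u => Quotient.mk st (g, u)
  have mk_eq : ∀ g u h v, mk g u = mk h v ↔
      (ρ u = ρ v ∧ (A u)⁻¹ * (g⁻¹ * h) * A v ∈ R (ρ u)) := by
    intro g u h v
    exact Quotient.eq (r := st)
  let P : Xh → X := Quotient.lift (fun a => π a.1 • p a.2) (by
    rintro ⟨g, u⟩ ⟨h, v⟩ ⟨h1, h2⟩
    simp only at h1 h2 ⊢
    have h3 := hR u _ h2
    simp only [map_mul, map_inv, mul_smul] at h3
    rw [inv_smul_eq_iff, hA, h1, hA, inv_smul_eq_iff] at h3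
    exact h3.symm)
  have P_mk : ∀ g u, P (mk g u) = π g • p u := fun g u => rfl
  let adjh : Xh → Xh → Prop := fun x y => ∃ g u u', adj (p u) (p u') ∧ x = mk g u ∧ y = mk g u'
  have hsymmh : ∀ x y, adjh x y → adjh y x := by
    rintro x y ⟨g, u, u', h, h1, h2⟩
    exact ⟨g, u', u, hsymm _ _ h, h2, h1⟩
  have hconn1 : ∀ g u v, Relation.ReflTransGen adjh (mk g u) (mk g v) := by
    intro g u v
    exact (hconn u v).lift (mk g) (fun a b hab => ⟨g, a, b, hab, rfl, rfl⟩)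
  have htrans : ∀ g h u k v, Relation.ReflTransGen adjh (mk h u) (mk k v) →
      Relation.ReflTransGen adjh (mk (g * h) u) (mk (g * k) v) := by
    intro g h u k v hh
    let T : Xh → Xh := Quotient.map (sa := st) (sb := st) (fun a => (g * a.1, a.2)) (by
      rintro a b ⟨h1, h2⟩
      exact ⟨h1, by simpa [mul_assoc] using h2⟩)
    exact hh.lift T (by
      rintro _ _ ⟨g', u, u', h, rfl, rfl⟩
      exact ⟨g * g', u, u', h, rfl, rfl⟩)
  have hsymmR : ∀ x y, Relation.ReflTransGen adjh x y → Relation.ReflTransGen adjh y x := by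
    intro x y h
    exact rtg_symm hsymmh h
  let C : Subgroup Hh :=
    { carrier := {g | ∀ u v, Relation.ReflTransGen adjh (mk 1 u) (mk g v)}
      one_mem' := fun u v => hconn1 1 u v
      mul_mem' := by
        intro a b ha hb u v
        have := htrans a _ _ _ _ (hb u v)
        rw [mul_one] at this
        exact (ha u u).trans this
      inv_mem' := by
        intro a ha u v
        have := htrans a⁻¹ _ _ _ _ (ha v u)
        rw [mul_one, inv_mul_cancel] at this
        exact hsymmR _ _ this }
  have hC : C = ⊤ := by
    rw [eq_top_iff, ← hgen, Subgroup.closure_le]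
    rintro g (hg | ⟨u, rfl⟩)
    · obtain ⟨u, hu⟩ := Set.mem_iUnion.1 hg
      intro v w
      have h1 : mk 1 (ρ u) = mk g (ρ u) := by
        rw [mk_eq]
        refine ⟨rfl, ?_⟩
        rw [hAρ, hρρ]
        simpa using hu
      refine (hconn1 1 v (ρ u)).trans ?_
      rw [h1]
      exact hconn1 _ _ _
    · intro v w
      have h1 : mk 1 u = mk (A u) (ρ u) := by
        rw [mk_eq]
        refine ⟨(hρρ u).symm, ?_⟩
        rw [hAρ]
        simp
      refine (hconn1 1 v u).trans ?_
      rw [h1]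
      exact hconn1 _ _ _
  rw [injective_iff_map_eq_one]
  intro g hg
  obtain ⟨u0⟩ := ‹Nonempty U›
  have hgC : g ∈ C := hC ▸ Subgroup.mem_top g
  have key := injective_of_locally_injective (adj' := adj) hsymmh P (by
      rintro _ _ ⟨g, u, u', h, rfl, rfl⟩
      exact hinv _ _ _ h) (by
      rintro x _ _ ⟨g, u, u', h, h1, rfl⟩ ⟨k, v, v', h', h2, rfl⟩ h3
      rw [P_mk, P_mk] at h3
      have h4 := (mk_eq _ _ _ _).1 (h1.symm.trans h2)
      have h5 : π (g⁻¹ * k) • p v' = p u' := by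
        rw [map_mul, map_inv, mul_smul, ← h3, inv_smul_smul]
      rw [mk_eq]
      exact ⟨hρ _ _ _ h5, hedge u u' v v' h h' h4.1 _ h4.2 h5⟩) hNB (hgC (ρ u0) (ρ u0)) (by
      rw [P_mk, P_mk, hg, map_one])
  have h2 := ((mk_eq _ _ _ _).1 key).2
  rw [hAρ, hρρ] at h2
  exact hRinj _ g (by simpa using h2) hg

end T1

end CoxCoh

namespace CoxCoh

open Group

/-- Finite connected sets containing a given finite set. -/
theorem exists_finite_connected {X : Type*} {adj : X → X → Prop}
    (hsymm : ∀ x y, adj x y → adj y x)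
    (x0 : X) (Y : Set X) (hY : Y.Finite) (hconn : ∀ y ∈ Y, Relation.ReflTransGen adj x0 y) :
    ∃ U : Set X, U.Finite ∧ x0 ∈ U ∧ Y ⊆ U ∧
      ∀ u v : U, Relation.ReflTransGen (fun a b : U => adj a b) u v := by
  have h1 : ∀ y, Relation.ReflTransGen adj x0 y → ∃ U : Set X, U.Finite ∧ x0 ∈ U ∧ y ∈ U ∧
      ∀ u ∈ U, Relation.ReflTransGen (fun a b => a ∈ U ∧ b ∈ U ∧ adj a b) x0 u := by
    intro y h
    induction h with
    | refl =>
      refine ⟨{x0}, Set.finite_singleton _, rfl, rfl, ?_⟩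
      rintro u rfl
      exact .refl
    | @tail y z _ hyz ih =>
      obtain ⟨U, hU, hx, hy, hc⟩ := ih
      refine ⟨insert z U, hU.insert z, Or.inr hx, Or.inl rfl, ?_⟩
      have hm : ∀ u, Relation.ReflTransGen (fun a b => a ∈ U ∧ b ∈ U ∧ adj a b) x0 u →
        Relation.ReflTransGen (fun a b => a ∈ insert z U ∧ b ∈ insert z U ∧ adj a b) x0 u :=
        fun u h => Relation.ReflTransGen.mono (fun a b h => ⟨Or.inr h.1, Or.inr h.2.1, h.2.2⟩) _ _ h
      rintro u (rfl | hu)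
      · exact (hm _ (hc y hy)).tail ⟨Or.inr hy, Or.inl rfl, hyz⟩
      · exact hm _ (hc u hu)
  choose! W hW hWx hWy hWc using h1
  let U : Set X := {x0} ∪ ⋃ y ∈ Y, W y
  have hUc : ∀ u ∈ U, Relation.ReflTransGen (fun a b => a ∈ U ∧ b ∈ U ∧ adj a b) x0 u := by
    rintro u (rfl | hu)
    · exact .refl
    · simp only [Set.mem_iUnion] at hu
      obtain ⟨y, hy, hu⟩ := hu
      have hsub : W y ⊆ U := fun a ha => Or.inr (Set.mem_biUnion hy ha)
      exact Relation.ReflTransGen.mono (fun a b h => ⟨hsub h.1, hsub h.2.1, h.2.2⟩) _ _ (hWc y (hconn y hy) u hu)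
  have hx0 : x0 ∈ U := Or.inl rfl
  refine ⟨U, (Set.finite_singleton _).union (hY.biUnion fun y hy => hW y (hconn y hy)), hx0,
    fun y hy => Or.inr (Set.mem_biUnion hy (hWy y (hconn y hy))), ?_⟩
  have h2 : ∀ u (hu : u ∈ U), Relation.ReflTransGen (fun a b : U => adj a b) ⟨x0, hx0⟩ ⟨u, hu⟩ := by
    intro u hu
    have := hUc u hu
    induction this with
    | refl => exact .refl
    | tail _ h ih => exact (ih h.1).tail h.2.2
  intro u v
  exact (rtg_symm (fun a b h => hsymm _ _ h) (h2 u u.2)).trans (h2 v v.2)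

theorem isFP_of_tree {H X : Type*} [Group H] [MulAction H X] (adj : X → X → Prop)
    (hinv : ∀ (g : H) x y, adj x y → adj (g • x) (g • y))
    (hsymm : ∀ x y, adj x y → adj y x)
    (hNB : ∀ x y z, NBW adj x y z → x ≠ z)
    (hconn : ∀ x y, Relation.ReflTransGen adj x y) [Nonempty X]
    (hv : ∀ x : X, ∀ K : Subgroup H, K ≤ MulAction.stabilizer H x → K.FG → IsFinitelyPresented K)
    (he : ∀ x y : X, adj x y → (MulAction.stabilizer H x ⊓ MulAction.stabilizer H y).FG)
    (hfg : Group.FG H) : IsFinitelyPresented H := by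
  classical
  obtain ⟨x0⟩ := ‹Nonempty X›
  obtain ⟨S, hS, hSfin⟩ := (Subgroup.fg_iff _).1 (Group.fg_def.1 hfg)
  obtain ⟨U, hUfin, hx0U, hSU, hUc⟩ := exists_finite_connected hsymm x0 ((fun s : H => s • x0) '' S)
    (hSfin.image _) (fun y _ => hconn x0 y)
  have : Finite U := hUfin.to_subtype
  -- orbit representatives
  let st : Setoid U :=
    { r := fun u v => ∃ g : H, g • (v : X) = u
      iseqv := ⟨fun u => ⟨1, one_smul _ _⟩, fun {u v} ⟨g, h⟩ => ⟨g⁻¹, by rw [← h, inv_smul_smul]⟩,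
        fun {u v w} ⟨g, h⟩ ⟨k, h'⟩ => ⟨g * k, by rw [mul_smul, h', h]⟩⟩ }
  let ρ : U → U := fun u => (Quotient.mk st u).out
  have hρ : ∀ (g : H) (u v : U), g • (v : X) = u → ρ u = ρ v := by
    intro g u v h
    have : Quotient.mk st u = Quotient.mk st v := Quotient.sound (s := st) ⟨g, h⟩
    simp only [ρ, this]
  have hρex : ∀ u : U, ∃ g : H, g • (ρ u : X) = u := by
    intro u
    exact Setoid.symm (Quotient.mk_out (s := st) u)
  have hρρ : ∀ u, ρ (ρ u) = ρ u := fun u => by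
    obtain ⟨g, hg⟩ := hρex u
    exact (hρ g _ _ hg).symm
  choose a' ha' using hρex
  let a : U → H := fun u => if ρ u = u then 1 else a' u
  have ha : ∀ u, a u • (ρ u : X) = u := by
    intro u
    by_cases h : ρ u = u
    · simp only [a, h, if_true, one_smul]
    · simp only [a, h, if_false]; exact ha' u
  have haρ : ∀ u, a (ρ u) = 1 := fun u => by simp only [a, hρρ u, if_true]
  -- the finite set of edge elements
  let Q := U × U × U × U
  have hq : ∀ q : Q, ∃ g : H, (∃ g : H, g • (q.2.2.1 : X) = q.1 ∧ g • (q.2.2.2 : X) = q.2.1) →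
      g • (q.2.2.1 : X) = q.1 ∧ g • (q.2.2.2 : X) = q.2.1 := by
    intro q
    by_cases h : ∃ g : H, g • (q.2.2.1 : X) = q.1 ∧ g • (q.2.2.2 : X) = q.2.1
    · obtain ⟨g, hg⟩ := h
      exact ⟨g, fun _ => hg⟩
    · exact ⟨1, fun h' => absurd h' h⟩
  choose g0 hg0 using hq
  have hE : ∀ e : U × U, ∃ E : Set H, E.Finite ∧ (adj e.1 e.2 →
      Subgroup.closure E = MulAction.stabilizer H (e.1 : X) ⊓ MulAction.stabilizer H (e.2 : X)) := by
    intro e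
    by_cases h : adj e.1 e.2
    · obtain ⟨E, hE, hf⟩ := (Subgroup.fg_iff _).1 (he _ _ h)
      exact ⟨E, hf, fun _ => hE⟩
    · exact ⟨∅, Set.finite_empty, fun h' => absurd h' h⟩
  choose E hEfin hEcl using hE
  let L : Set (Q × H) := {z | z.2 • (z.1.2.2.1 : X) = z.1.1 ∧ z.2 • (z.1.2.2.2 : X) = z.1.2.1} ∩
    (Set.range (fun q => (q, g0 q)) ∪
      ⋃ e : U × U, (fun h => ((e.1, e.2, e.1, e.2), h)) '' E e)
  have hLfin : L.Finite := by
    refine Set.Finite.inter_of_right ?_ _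
    exact (Set.finite_range _).union (Set.finite_iUnion fun e => (hEfin e).image _)
  let D : Set (U × U × H) := {z | z.2.2 • (z.2.1 : X) = z.1} ∩
    (((fun z : Q × H => (z.1.1, z.1.2.2.1, z.2)) '' L ∪
    (fun z : Q × H => (z.1.2.1, z.1.2.2.2, z.2)) '' L) ∪
      Set.range (fun s : S => ((⟨(s : H) • x0, hSU ⟨s, s.2, rfl⟩⟩ : U), (⟨x0, hx0U⟩ : U), (s : H))))
  have hDfin : D.Finite := by
    refine Set.Finite.inter_of_right ?_ _
    have := hSfin.to_subtype
    exact ((hLfin.image _).union (hLfin.image _)).union (Set.finite_range _)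
  let K : U → Subgroup H := fun r =>
    Subgroup.closure ((fun z : U × U × H => (a z.1)⁻¹ * z.2.2 * a z.2.1) '' {z ∈ D | ρ z.1 = r})
  have hKfg : ∀ r, (K r).FG := fun r =>
    (Subgroup.fg_iff _).2 ⟨_, rfl, (hDfin.subset (Set.sep_subset _ _)).image _⟩
  have hKst : ∀ r, K r ≤ MulAction.stabilizer H (r : X) := by
    intro r
    rw [Subgroup.closure_le]
    rintro _ ⟨⟨u, v, g⟩, ⟨⟨h1, -⟩, h2⟩, rfl⟩
    simp only [Set.mem_ofPred_eq] at h1 h2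
    have h3 := hρ g u v h1
    rw [SetLike.mem_coe, MulAction.mem_stabilizer_iff]
    simp only [mul_smul]
    rw [inv_smul_eq_iff, ← h2, ha, h3, ha, h1]
  have hKD : ∀ u v g, (u, v, g) ∈ D → (a u)⁻¹ * g * a v ∈ K (ρ u) := fun u v g h =>
    Subgroup.subset_closure ⟨(u, v, g), ⟨h, rfl⟩, rfl⟩
  have hKbot : ∀ r, ρ r ≠ r → K r = ⊥ := by
    intro r hr
    rw [eq_bot_iff, Subgroup.closure_le]
    rintro _ ⟨⟨u, v, g⟩, ⟨-, h2⟩, rfl⟩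
    simp only at h2
    exact absurd (by rw [← h2, hρρ]) hr
  -- presentations of the vertex groups
  have hpres : ∀ r, ∃ (n : ℕ) (ψ : FreeGroup (Fin n) →* H) (T : Set (FreeGroup (Fin n))),
      ψ.range = K r ∧ T.Finite ∧ Subgroup.normalClosure T = ψ.ker := by
    intro r
    obtain ⟨n, φ, hφ, T, hT, hTc⟩ := (hv r (K r) (hKst r) (hKfg r)).out
    refine ⟨n, (K r).subtype.comp φ, T, ?_, hT, ?_⟩
    · rw [MonoidHom.range_comp, MonoidHom.range_eq_top.2 hφ, ← MonoidHom.range_eq_map,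
        Subgroup.range_subtype]
    · rw [hTc]
      ext w
      simp [MonoidHom.mem_ker]
  choose n ψ T hψ hTfin hT using hpres
  have hsec : ∀ r (k : H), ∃ w, k ∈ K r → ψ r w = k := by
    intro r k
    by_cases h : k ∈ K r
    · rw [← hψ r] at h
      obtain ⟨w, hw⟩ := h
      exact ⟨w, fun _ => hw⟩
    · exact ⟨1, fun h' => absurd h' h⟩
  choose sec hsec using hsec
  let jj : ∀ r, FreeGroup (Fin (n r)) →* FreeGroup ((Σ r : U, Fin (n r)) ⊕ U) := fun r =>
    FreeGroup.lift (fun i => FreeGroup.of (Sum.inl ⟨r, i⟩))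
  let AA : U → FreeGroup ((Σ r : U, Fin (n r)) ⊕ U) := fun u => FreeGroup.of (Sum.inr u)
  let Pm : FreeGroup ((Σ r : U, Fin (n r)) ⊕ U) →* H := FreeGroup.lift (Sum.elim (fun z => ψ z.1 (FreeGroup.of z.2)) a)
  have hPmj : ∀ r w, Pm (jj r w) = ψ r w := by
    intro r w
    have : Pm.comp (jj r) = ψ r := by ext i; simp [Pm, jj]
    exact DFunLike.congr_fun this w
  have hPmA : ∀ u, Pm (AA u) = a u := fun u => by simp [Pm, AA]
  let σ : U → U → H → FreeGroup ((Σ r : U, Fin (n r)) ⊕ U) := fun u v g => AA u * jj (ρ u) (sec (ρ u) ((a u)⁻¹ * g * a v)) * (AA v)⁻¹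
  have hPmσ : ∀ u v g, (u, v, g) ∈ D → Pm (σ u v g) = g := by
    intro u v g h
    simp only [σ, map_mul, map_inv, hPmA, hPmj, hsec _ _ (hKD _ _ _ h)]
    group
  have hLD1 : ∀ u u' v v' g, ((u, u', v, v'), g) ∈ L → (u, v, g) ∈ D := by
    intro u u' v v' g h
    exact ⟨h.1.1, Or.inl (Or.inl ⟨_, h, rfl⟩)⟩
  have hLD2 : ∀ u u' v v' g, ((u, u', v, v'), g) ∈ L → (u', v', g) ∈ D := by
    intro u u' v v' g h
    exact ⟨h.1.2, Or.inl (Or.inr ⟨_, h, rfl⟩)⟩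
  let Rel : Set (FreeGroup ((Σ r : U, Fin (n r)) ⊕ U)) := ((⋃ r, jj r '' T r) ∪ Set.range (fun u => AA (ρ u))) ∪
    (fun z : Q × H => σ z.1.1 z.1.2.2.1 z.2 * (σ z.1.2.1 z.1.2.2.2 z.2)⁻¹) '' L
  have hRelfin : Rel.Finite := ((Set.finite_iUnion fun r => (hTfin r).image _).union
    (Set.finite_range _)).union (hLfin.image _)
  let N := Subgroup.normalClosure Rel
  have hNker : N ≤ Pm.ker := by
    apply Subgroup.normalClosure_le_normal
    rintro _ ((hr | ⟨u, rfl⟩) | ⟨⟨⟨u, u', v, v'⟩, g⟩, hz, rfl⟩)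
    · obtain ⟨r, t, ht, rfl⟩ := Set.mem_iUnion.1 hr
      have : t ∈ (ψ r).ker := by rw [← hT]; exact Subgroup.subset_normalClosure ht
      rw [SetLike.mem_coe, MonoidHom.mem_ker, hPmj]
      exact this
    · rw [SetLike.mem_coe, MonoidHom.mem_ker, hPmA, haρ]
    · rw [SetLike.mem_coe, MonoidHom.mem_ker, map_mul, map_inv, hPmσ _ _ _ (hLD1 _ _ _ _ _ hz),
        hPmσ _ _ _ (hLD2 _ _ _ _ _ hz), mul_inv_cancel]
  have hPmsurj : Function.Surjective Pm := by
    rw [← MonoidHom.range_eq_top, eq_top_iff, ← hS, Subgroup.closure_le]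
    intro s hs
    exact ⟨_, hPmσ ⟨s • x0, hSU ⟨s, hs, rfl⟩⟩ ⟨x0, hx0U⟩ s ⟨rfl, Or.inr ⟨⟨s, hs⟩, rfl⟩⟩⟩
  let q : FreeGroup ((Σ r : U, Fin (n r)) ⊕ U) →* FreeGroup ((Σ r : U, Fin (n r)) ⊕ U) ⧸ N := QuotientGroup.mk' N
  have hq1 : ∀ r ∈ Rel, q r = 1 := fun r hr =>
    (QuotientGroup.eq_one_iff r).2 (Subgroup.subset_normalClosure hr)
  let π : FreeGroup ((Σ r : U, Fin (n r)) ⊕ U) ⧸ N →* H := QuotientGroup.lift N Pm hNker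
  have hπq : ∀ x, π (q x) = Pm x := fun x => rfl
  have hjker : ∀ r w, ψ r w = 1 → q (jj r w) = 1 := by
    intro r w hw
    have h1 : w ∈ Subgroup.normalClosure (T r) := by rw [hT]; exact hw
    have h2 : Subgroup.normalClosure (T r) ≤ (q.comp (jj r)).ker := by
      apply Subgroup.normalClosure_le_normal
      intro t ht
      exact hq1 _ (Or.inl (Or.inl (Set.mem_iUnion.2 ⟨r, t, ht, rfl⟩)))
    exact h2 h1
  have hinj : Function.Injective π := by
    have : Nonempty U := ⟨⟨x0, hx0U⟩⟩
    have hsecmul : ∀ r k1 k2, k1 ∈ K r → k2 ∈ K r →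
        q (jj r (sec r (k1 * k2))) = q (jj r (sec r k1)) * q (jj r (sec r k2)) := by
      intro r k1 k2 h1 h2
      have := hjker r (sec r (k1 * k2) * (sec r k1 * sec r k2)⁻¹) (by
        simp [hsec r _ h1, hsec r _ h2, hsec r _ (mul_mem h1 h2)])
      rw [map_mul, map_mul, map_inv, map_inv, mul_inv_eq_one] at this
      rw [this, map_mul, map_mul]
    have hsecinv : ∀ r k1, k1 ∈ K r →
        q (jj r (sec r (k1⁻¹))) = (q (jj r (sec r k1)))⁻¹ := by
      intro r k1 h1
      have := hsecmul r k1⁻¹ k1 (inv_mem h1) h1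
      rw [inv_mul_cancel, hjker r (sec r 1) (hsec r 1 (one_mem _))] at this
      exact (eq_inv_of_mul_eq_one_left this.symm)
    refine tree_injective adj hinv hsymm hNB π (fun u : U => (u : X)) ρ
      (fun u => (q.comp (jj u)).range) (fun u => q (AA u)) ?_ ?_ ?_ hρρ ?_ hρ ?_ ?_ hUc
    · rintro u _ ⟨w, rfl⟩
      have : ψ (ρ u) w ∈ K (ρ u) := by rw [← hψ]; exact ⟨w, rfl⟩
      have := hKst _ this
      rw [MonoidHom.comp_apply, hπq, hPmj]
      exact this
    · rintro u _ ⟨w, rfl⟩ h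
      rw [MonoidHom.comp_apply, hπq, hPmj] at h
      exact hjker _ _ h
    · intro u
      rw [hπq, hPmA]
      exact ha u
    · intro u
      exact hq1 _ (Or.inl (Or.inr ⟨u, rfl⟩))
    · intro u u' v v' huu hvv hρuv g hg hgv
      -- the chosen element
      obtain ⟨w, hw⟩ := hg
      have hw' : q (jj (ρ u) w) = (q (AA u))⁻¹ * g * q (AA v) := hw
      have hk := congrArg π hw'
      rw [hπq, hPmj, map_mul, map_mul, map_inv, hπq, hπq, hPmA, hPmA] at hk
      have hkK : (a u)⁻¹ * π g * a v ∈ K (ρ u) := by rw [← hk, ← hψ]; exact ⟨w, rfl⟩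
      have hgu : π g • (v : X) = u := by
        have := hKst _ hkK
        rw [MulAction.mem_stabilizer_iff, mul_smul, mul_smul, hρuv, ha, inv_smul_eq_iff,
          ← hρuv, ha] at this
        exact this
      have hgdec : g = q (AA u) * q (jj (ρ u) (sec (ρ u) ((a u)⁻¹ * π g * a v))) * (q (AA v))⁻¹ := by
        have : q (jj (ρ u) (sec (ρ u) ((a u)⁻¹ * π g * a v))) = q (jj (ρ u) w) := by
          have := hjker (ρ u) (sec (ρ u) ((a u)⁻¹ * π g * a v) * w⁻¹) (by
            rw [map_mul, map_inv, hsec _ _ hkK, ← hk, mul_inv_cancel])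
          rwa [map_mul, map_mul, map_inv, map_inv, mul_inv_eq_one] at this
        rw [this, hw']
        group
      let g1 := g0 (u, u', v, v')
      have hg1 : g1 • (v : X) = u ∧ g1 • (v' : X) = u' := hg0 (u, u', v, v') ⟨π g, hgu, hgv⟩
      have hg1L : ((u, u', v, v'), g1) ∈ L := ⟨hg1, Or.inl ⟨_, rfl⟩⟩
      obtain ⟨h, hdef⟩ : ∃ h, h = g1⁻¹ * π g := ⟨_, rfl⟩
      have hh : h ∈ MulAction.stabilizer H (v : X) ⊓ MulAction.stabilizer H (v' : X) := by
        constructor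
        · change h • (v : X) = v
          rw [hdef, mul_smul, hgu, ← hg1.1, inv_smul_smul]
        · change h • (v' : X) = v'
          rw [hdef, mul_smul, hgv, ← hg1.2, inv_smul_smul]
      have hσeq : ∀ u u' v v' g, ((u, u', v, v'), g) ∈ L → q (σ u v g) = q (σ u' v' g) := by
        intro u u' v v' g hz
        have := hq1 (σ u v g * (σ u' v' g)⁻¹) (Or.inr ⟨_, hz, rfl⟩)
        rwa [map_mul, map_inv, mul_inv_eq_one] at this
      have hprop : (a v)⁻¹ * h * a v ∈ K (ρ v) ∧ (a v')⁻¹ * h * a v' ∈ K (ρ v') ∧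
          q (σ v v h) = q (σ v' v' h) := by
        rw [← hEcl (v, v') hvv] at hh
        clear hdef
        induction hh using Subgroup.closure_induction with
        | mem x hx =>
          have hxs : x ∈ MulAction.stabilizer H (v : X) ⊓ MulAction.stabilizer H (v' : X) := by
            rw [← hEcl (v, v') hvv]; exact Subgroup.subset_closure hx
          have hL : ((v, v', v, v'), x) ∈ L :=
            ⟨⟨hxs.1, hxs.2⟩, Or.inr (Set.mem_iUnion.2 ⟨(v, v'), x, hx, rfl⟩)⟩
          exact ⟨hKD _ _ _ (hLD1 _ _ _ _ _ hL), hKD _ _ _ (hLD2 _ _ _ _ _ hL), hσeq _ _ _ _ _ hL⟩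
        | one =>
          refine ⟨by simp, by simp, ?_⟩
          have h1 : ∀ r, q (jj r (sec r 1)) = 1 := fun r => hjker r _ (hsec r 1 (one_mem _))
          simp only [σ, mul_one, inv_mul_cancel, map_mul, h1, map_inv, mul_inv_cancel]
        | mul x y _ _ hx hy =>
          have e : ∀ v, (a v)⁻¹ * (x * y) * a v = ((a v)⁻¹ * x * a v) * ((a v)⁻¹ * y * a v) :=
            fun v => by group
          refine ⟨by rw [e]; exact mul_mem hx.1 hy.1, by rw [e]; exact mul_mem hx.2.1 hy.2.1, ?_⟩
          have e2 : ∀ v, (a v)⁻¹ * x * a v ∈ K (ρ v) → (a v)⁻¹ * y * a v ∈ K (ρ v) →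
              q (σ v v (x * y)) = q (σ v v x) * q (σ v v y) := by
            intro v h1 h2
            simp only [σ, map_mul, map_inv]
            rw [e, hsecmul _ _ _ h1 h2]
            group
          rw [e2 v hx.1 hy.1, e2 v' hx.2.1 hy.2.1, hx.2.2, hy.2.2]
        | inv x _ hx =>
          have e : ∀ v, (a v)⁻¹ * x⁻¹ * a v = ((a v)⁻¹ * x * a v)⁻¹ := fun v => by group
          refine ⟨by rw [e]; exact inv_mem hx.1, by rw [e]; exact inv_mem hx.2.1, ?_⟩
          have e2 : ∀ v, (a v)⁻¹ * x * a v ∈ K (ρ v) → q (σ v v x⁻¹) = (q (σ v v x))⁻¹ := by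
            intro v h1
            simp only [σ, map_mul, map_inv]
            rw [e, hsecinv _ _ h1]
            group
          rw [e2 v hx.1, e2 v' hx.2.1, hx.2.2]
      have hsplit : ∀ u v, (a u)⁻¹ * g1 * a v ∈ K (ρ u) → ρ u = ρ v → (a v)⁻¹ * h * a v ∈ K (ρ v) →
          q (σ u v (π g)) = q (σ u v g1) * q (σ v v h) := by
        intro u v h1 h2 h3
        have e : (a u)⁻¹ * π g * a v = ((a u)⁻¹ * g1 * a v) * ((a v)⁻¹ * h * a v) := by
          simp only [hdef]; group
        rw [← h2] at h3
        simp only [σ, map_mul, map_inv]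
        rw [e, hsecmul _ _ _ h1 h3, h2]
        group
      have hρ' : ρ u' = ρ v' := hρ _ _ _ hgv
      have hg2 : g = q (σ u' v' (π g)) := by
        have h0 : g = q (σ u v (π g)) := by
          simp only [σ, map_mul, map_inv]; exact hgdec
        rw [hsplit u' v' (hKD _ _ _ (hLD2 _ _ _ _ _ hg1L)) hρ' hprop.2.1, ← hprop.2.2,
          ← hσeq _ _ _ _ _ hg1L, ← hsplit u v (hKD _ _ _ (hLD1 _ _ _ _ _ hg1L)) hρuv hprop.1]
        exact h0
      refine ⟨sec (ρ u') ((a u')⁻¹ * π g * a v'), ?_⟩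
      rw [MonoidHom.comp_apply, eq_comm]
      calc (q (AA u'))⁻¹ * g * q (AA v') = (q (AA u'))⁻¹ * q (σ u' v' (π g)) * q (AA v') := by
            rw [← hg2]
        _ = _ := by
            simp only [σ, map_mul, map_inv]
            group
    · rw [eq_top_iff]
      rintro x -
      obtain ⟨x, rfl⟩ := QuotientGroup.mk'_surjective N x
      let C := Subgroup.closure ((⋃ u, (((q.comp (jj (ρ u))).range : Subgroup (FreeGroup ((Σ r : U, Fin (n r)) ⊕ U) ⧸ N)) : Set (FreeGroup ((Σ r : U, Fin (n r)) ⊕ U) ⧸ N))) ∪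
        Set.range (fun u => q (AA u)))
      have : (⊤ : Subgroup (FreeGroup ((Σ r : U, Fin (n r)) ⊕ U))) ≤ C.comap q := by
        rw [← FreeGroup.closure_range_of, Subgroup.closure_le]
        rintro _ ⟨⟨r, i⟩ | u, rfl⟩
        · by_cases hr : ρ r = r
          · refine Subgroup.subset_closure (Or.inl (Set.mem_iUnion.2 ⟨r, ?_⟩))
            rw [hr]
            exact ⟨FreeGroup.of i, by simp [jj]⟩
          · have h1 : ψ r (FreeGroup.of i) ∈ K r := by rw [← hψ]; exact ⟨_, rfl⟩
            rw [hKbot r hr, Subgroup.mem_bot] at h1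
            have h2 := hjker r _ h1
            have h3 : jj r (FreeGroup.of i) = FreeGroup.of (Sum.inl ⟨r, i⟩) := by simp [jj]
            rw [h3] at h2
            rw [SetLike.mem_coe, Subgroup.mem_comap, h2]
            exact one_mem _
        · exact Subgroup.subset_closure (Or.inr ⟨u, rfl⟩)
      exact this (Subgroup.mem_top x)
  refine IsFinitelyPresented.of_surjective Pm hPmsurj ⟨Rel, hRelfin, ?_⟩
  apply le_antisymm hNker
  intro x hx
  have : q x = 1 := hinj (by rw [hπq, map_one]; exact hx)
  exact (QuotientGroup.eq_one_iff x).1 this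

end CoxCoh

namespace CoxCoh

open Group Monoid

/-- Coherence, in terms of Mathlib's finitely presented groups. -/
def Coh (G : Type*) [Group G] : Prop := ∀ H : Subgroup G, H.FG → IsFinitelyPresented H

/-- All subgroups finitely generated. -/
def Sl (G : Type*) [Group G] : Prop := ∀ H : Subgroup G, H.FG

theorem exists_equiv_comap {A G H : Type*} [Group A] [Group G] [Group H] (f : A →* G)
    (hf : Function.Injective f) (j : H →* G) (hj : Function.Injective j) (C : Subgroup H)
    (hC : C.map j ≤ f.range) : Nonempty (C ≃* (C.map j).comap f) := by
  have h1 : ((C.map j).comap f).map f = C.map j := by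
    rw [Subgroup.map_comap_eq, inf_eq_right.2 hC]
  have e1 := C.equivMapOfInjective j hj
  have e2 := ((C.map j).comap f).equivMapOfInjective f hf
  rw [h1] at e2
  exact ⟨e1.trans e2.symm⟩

theorem Coh.transfer {A G H : Type*} [Group A] [Group G] [Group H] (hA : Coh A) (f : A →* G)
    (hf : Function.Injective f) (j : H →* G) (hj : Function.Injective j) (C : Subgroup H)
    (hC : C.map j ≤ f.range) (hfg : C.FG) : IsFinitelyPresented C := by
  obtain ⟨e⟩ := exists_equiv_comap f hf j hj C hC
  have hC' : Group.FG C := (Group.fg_iff_subgroup_fg _).2 hfg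
  have h2 : Group.FG ((C.map j).comap f) := Group.fg_of_surjective (f := e.toMonoidHom) e.surjective
  have := hA _ ((Group.fg_iff_subgroup_fg _).1 h2)
  exact IsFinitelyPresented.equiv e.symm

theorem Sl.transfer {A G H : Type*} [Group A] [Group G] [Group H] (hA : Sl A) (f : A →* G)
    (hf : Function.Injective f) (j : H →* G) (hj : Function.Injective j) (C : Subgroup H)
    (hC : C.map j ≤ f.range) : C.FG := by
  obtain ⟨e⟩ := exists_equiv_comap f hf j hj C hC
  have := (Group.fg_iff_subgroup_fg _).2 (hA ((C.map j).comap f))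
  exact (Group.fg_iff_subgroup_fg _).1
    (Group.fg_of_surjective (f := e.symm.toMonoidHom) e.symm.surjective)

section Amalgam

variable {K : Type*} [Group K] {A : Bool → Type*} [∀ i, Group (A i)] (φ : ∀ i, K →* A i)

/-- Vertices of the Bass–Serre tree of an amalgam. -/
abbrev BSV := Σ i : Bool, PushoutI φ ⧸ (PushoutI.of (φ := φ) i).range

/-- The vertex given by a group element. -/
def bsv (i : Bool) (g : PushoutI φ) : BSV φ := ⟨i, QuotientGroup.mk g⟩

/-- Adjacency in the Bass–Serre tree. -/
def bsadj (x y : BSV φ) : Prop := ∃ i j g, i ≠ j ∧ x = bsv φ i g ∧ y = bsv φ j g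

theorem bsv_surj (x : BSV φ) : ∃ i g, x = bsv φ i g := by
  obtain ⟨i, q⟩ := x
  obtain ⟨g, rfl⟩ := QuotientGroup.mk_surjective q
  exact ⟨i, g, rfl⟩

theorem bsv_eq {i j : Bool} {g h : PushoutI φ} : bsv φ i g = bsv φ j h ↔
    i = j ∧ g⁻¹ * h ∈ (PushoutI.of (φ := φ) i).range := by
  constructor
  · intro e
    have hi : i = j := congrArg Sigma.fst e
    subst hi
    refine ⟨rfl, ?_⟩
    have := (Sigma.mk.inj_iff.1 e).2
    exact QuotientGroup.eq.1 (eq_of_heq this)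
  · rintro ⟨rfl, hm⟩
    have : (QuotientGroup.mk g : PushoutI φ ⧸ (PushoutI.of (φ := φ) i).range) = QuotientGroup.mk h :=
      QuotientGroup.eq.2 hm
    simp only [bsv, this]

theorem smul_bsv (g h : PushoutI φ) (i : Bool) : g • bsv φ i h = bsv φ i (g * h) := rfl

variable {φ}

theorem bs_nbw {x y z : BSV φ} (h : NBW (bsadj φ) x y z) :
    ∃ (i0 iy iz : Bool) (c1 cn : PushoutI φ) (w : CoprodI.Word A), x = bsv φ i0 c1 ∧
      y = bsv φ iy cn ∧ z = bsv φ iz cn ∧ iy ≠ iz ∧ PushoutI.Reduced φ w ∧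
      PushoutI.ofCoprodI w.prod = cn⁻¹ * c1 ∧ w.fstIdx ≠ some iz ∧ (w = .empty → i0 ≠ iz) := by
  induction h with
  | one h =>
    obtain ⟨i, j, g, hij, rfl, rfl⟩ := h
    refine ⟨i, i, j, g, g, .empty, rfl, rfl, rfl, hij, ?_, by simp, ?_, fun _ => hij⟩
    · intro a ha
      simp [CoprodI.Word.empty] at ha
    · simp [CoprodI.Word.fstIdx, CoprodI.Word.empty]
  | @step y z v h1 h2 h3 ih =>
    obtain ⟨i0, iy, iz, c1, cn, w, hx, hy, hz, hne, hred, hprod, hfst, -⟩ := ih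
    obtain ⟨i, j, g, hij, hz', hv⟩ := h2
    rw [hz, bsv_eq] at hz'
    obtain ⟨rfl, m, hm⟩ := hz'
    have hjy : j = iy := by
      revert hij hne; cases j <;> cases iz <;> cases iy <;> simp
    subst hjy
    have hmr : m ∉ (φ iz).range := by
      rintro ⟨k, rfl⟩
      apply h3
      rw [hv, hy, eq_comm, bsv_eq]
      refine ⟨rfl, φ j k, ?_⟩
      rw [← hm, PushoutI.of_apply_eq_base, PushoutI.of_apply_eq_base]
    have hm1 : m⁻¹ ≠ 1 := fun h => hmr (by rw [inv_eq_one.1 h]; exact one_mem _)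
    refine ⟨i0, iz, j, c1, g, CoprodI.Word.cons m⁻¹ w hfst hm1, hx, ?_, hv, hij, ?_, ?_, ?_, ?_⟩
    · rw [hz, bsv_eq]; exact ⟨rfl, m, hm⟩
    · intro a ha
      simp only [CoprodI.Word.cons, List.mem_cons] at ha
      rcases ha with rfl | ha
      · simpa using hmr
      · exact hred a ha
    · rw [CoprodI.Word.prod_cons, map_mul, hprod, PushoutI.ofCoprodI_of, map_inv, hm]
      group
    · rw [CoprodI.Word.fstIdx_cons]
      simpa using hij
    · intro h
      have := congrArg CoprodI.Word.toList h
      simp [CoprodI.Word.cons, CoprodI.Word.empty] at this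

theorem bs_NB (hφ : ∀ i, Function.Injective (φ i)) (x y z : BSV φ) (h : NBW (bsadj φ) x y z) :
    x ≠ z := by
  rintro rfl
  obtain ⟨i0, iy, iz, c1, cn, w, hx, hy, hz, hne, hred, hprod, hfst, hemp⟩ := bs_nbw h
  rw [hz, bsv_eq] at hx
  obtain ⟨rfl, m, hm⟩ := hx
  by_cases hmr : m ∈ (φ iz).range
  · obtain ⟨k, rfl⟩ := hmr
    refine hemp (hred.eq_empty_of_mem_range hφ ?_) rfl
    rw [hprod, ← hm, PushoutI.of_apply_eq_base]
    exact ⟨k, rfl⟩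
  · have hm1 : m⁻¹ ≠ 1 := fun h => hmr (by rw [inv_eq_one.1 h]; exact one_mem _)
    have hred' : PushoutI.Reduced φ (CoprodI.Word.cons m⁻¹ w hfst hm1) := by
      intro a ha
      simp only [CoprodI.Word.cons, List.mem_cons] at ha
      rcases ha with rfl | ha
      · simpa using hmr
      · exact hred a ha
    have := hred'.eq_empty_of_mem_range hφ (by
      rw [CoprodI.Word.prod_cons, map_mul, hprod, PushoutI.ofCoprodI_of, map_inv, hm,
        inv_mul_cancel]
      exact one_mem _)
    have := congrArg CoprodI.Word.toList this
    simp [CoprodI.Word.cons, CoprodI.Word.empty] at this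

theorem bsadj_smul (g : PushoutI φ) (x y : BSV φ) (h : bsadj φ x y) :
    bsadj φ (g • x) (g • y) := by
  obtain ⟨i, j, k, hij, rfl, rfl⟩ := h
  exact ⟨i, j, g * k, hij, rfl, rfl⟩

theorem bsadj_symm (x y : BSV φ) (h : bsadj φ x y) : bsadj φ y x := by
  obtain ⟨i, j, k, hij, rfl, rfl⟩ := h
  exact ⟨j, i, k, hij.symm, rfl, rfl⟩

theorem bs_conn (x y : BSV φ) : Relation.ReflTransGen (bsadj φ) x y := by
  have h0 : ∀ i j g, Relation.ReflTransGen (bsadj φ) (bsv φ i g) (bsv φ j g) := by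
    intro i j g
    by_cases h : i = j
    · subst h; exact .refl
    · exact .single ⟨i, j, g, h, rfl, rfl⟩
  have htr : ∀ (g : PushoutI φ) x y, Relation.ReflTransGen (bsadj φ) x y →
      Relation.ReflTransGen (bsadj φ) (g • x) (g • y) := fun g x y h =>
    h.lift _ (fun a b hab => bsadj_smul g a b hab)
  have hof : ∀ k (a : A k) i j,
      Relation.ReflTransGen (bsadj φ) (bsv φ i 1) (bsv φ j (PushoutI.of k a)) := by
    intro k a i j
    refine (h0 i k 1).trans ?_
    have : bsv φ k 1 = bsv φ k (PushoutI.of k a) := by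
      rw [bsv_eq]
      exact ⟨rfl, a, by simp⟩
    rw [this]
    exact h0 _ _ _
  have hC : ∀ g i j, Relation.ReflTransGen (bsadj φ) (bsv φ i 1) (bsv φ j g) := by
    intro g
    induction g using PushoutI.induction_on with
    | of k a => exact hof k a
    | base k =>
      rw [← PushoutI.of_apply_eq_base φ true k]
      exact hof _ _
    | mul x y hx hy =>
      intro i j
      refine (hx i i).trans ?_
      have := htr x _ _ (hy i j)
      rwa [smul_bsv, smul_bsv, mul_one] at this
  obtain ⟨i, g, rfl⟩ := bsv_surj φ x
  obtain ⟨j, h, rfl⟩ := bsv_surj φ y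
  have := htr g _ _ (hC (g⁻¹ * h) i j)
  rwa [smul_bsv, smul_bsv, mul_one, mul_inv_cancel_left] at this

theorem stab_conj {G : Type*} [Group G] (H : Subgroup G) (c : G) :
    Function.Injective ((MulAut.conj c).toMonoidHom.comp H.subtype) :=
  (MulAut.conj c).injective.comp H.subtype_injective

theorem coh_pushout (hφ : ∀ i, Function.Injective (φ i)) (hA : ∀ i, Coh (A i)) (hK : Sl K) :
    Coh (PushoutI φ) := by
  intro H hH
  have : Nonempty (BSV φ) := ⟨bsv φ true 1⟩
  refine isFP_of_tree (H := H) (X := BSV φ) (bsadj φ) (fun g x y h => bsadj_smul (g : PushoutI φ) x y h)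
    bsadj_symm (bs_NB hφ) bs_conn ?_ ?_ ((Group.fg_iff_subgroup_fg _).2 hH)
  · intro x C hC hCfg
    obtain ⟨i, g, rfl⟩ := bsv_surj φ x
    refine (hA i).transfer (PushoutI.of (φ := φ) i) (PushoutI.of_injective hφ i)
      ((MulAut.conj g⁻¹).toMonoidHom.comp H.subtype) (stab_conj H _) C ?_ hCfg
    rintro _ ⟨c, hc, rfl⟩
    have h1 : (c : PushoutI φ) • bsv φ i g = bsv φ i g := hC hc
    rw [smul_bsv, eq_comm, bsv_eq] at h1
    simpa [mul_assoc] using h1.2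
  · rintro x y ⟨i, j, g, hij, rfl, rfl⟩
    refine hK.transfer (PushoutI.base φ) (PushoutI.base_injective hφ)
      ((MulAut.conj g⁻¹).toMonoidHom.comp H.subtype) (stab_conj H _) _ ?_
    rw [← PushoutI.inf_of_range_eq_base_range hφ hij]
    rintro _ ⟨c, hc, rfl⟩
    have h1 : (c : PushoutI φ) • bsv φ i g = bsv φ i g := hc.1
    have h2 : (c : PushoutI φ) • bsv φ j g = bsv φ j g := hc.2
    rw [smul_bsv, eq_comm, bsv_eq] at h1 h2
    exact ⟨by simpa [mul_assoc] using h1.2, by simpa [mul_assoc] using h2.2⟩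

end Amalgam

end CoxCoh

namespace CoxCoh

open Real

/-- Chebyshev-like sequence. -/
noncomputable def us (c : ℝ) : ℕ → ℝ
  | 0 => 0
  | 1 => 1
  | n + 2 => c * us c (n + 1) - us c n

theorem us_zero (c : ℝ) : us c 0 = 0 := by simp [us]
theorem us_one (c : ℝ) : us c 1 = 1 := by simp [us]
theorem us_add_two (c : ℝ) (n : ℕ) : us c (n + 2) = c * us c (n + 1) - us c n := by rw [us]

theorem us_cos (θ : ℝ) (k : ℕ) : us (2 * cos θ) k * sin θ = sin (k * θ) ∧
    us (2 * cos θ) (k + 1) * sin θ = sin ((k + 1 : ℕ) * θ) := by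
  induction k with
  | zero => simp [us_zero, us_one]
  | succ k ih =>
    refine ⟨ih.2, ?_⟩
    rw [us_add_two, sub_mul, mul_assoc, ih.1, ih.2]
    push_cast
    have h1 : ((k : ℝ) + 1 + 1) * θ = (k + 1) * θ + θ := by ring
    have h2 : (k : ℝ) * θ = (k + 1) * θ - θ := by ring
    rw [h1, h2, sin_add, sin_sub]
    ring

theorem us_two (k : ℕ) : us 2 k = k ∧ us 2 (k + 1) = (k + 1 : ℕ) := by
  induction k with
  | zero => simp [us_zero, us_one]
  | succ k ih =>
    refine ⟨ih.2, ?_⟩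
    rw [us_add_two, ih.1, ih.2]
    push_cast
    ring

theorem sin_pi_div_pos {m : ℕ} (hm : 2 ≤ m) : 0 < sin (π / m) := by
  have hm' : (2 : ℝ) ≤ m := by exact_mod_cast hm
  apply sin_pos_of_pos_of_lt_pi
  · exact div_pos pi_pos (by linarith)
  · rw [div_lt_iff₀ (by linarith)]
    nlinarith [pi_pos]

theorem us_nonneg {m k : ℕ} (hm : m ≠ 1) (hk : m = 0 ∨ k ≤ m) : 0 ≤ us (2 * cos (π / m)) k := by
  by_cases h0 : m = 0
  · subst h0
    have := (us_two k).1
    simp only [Nat.cast_zero, div_zero, cos_zero, mul_one]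
    rw [this]
    positivity
  · have hm2 : 2 ≤ m := by omega
    have hk' : k ≤ m := by omega
    have hs := sin_pi_div_pos hm2
    have := (us_cos (π / m) k).1
    have hm' : (0 : ℝ) < m := by exact_mod_cast (by omega : 0 < m)
    have hsk : 0 ≤ sin (k * (π / m)) := by
      apply sin_nonneg_of_nonneg_of_le_pi
      · positivity
      · rw [← mul_div_assoc, div_le_iff₀ hm']
        have : (k : ℝ) ≤ m := by exact_mod_cast hk'
        nlinarith [pi_pos]
    rw [← this] at hsk
    exact nonneg_of_mul_nonneg_left hsk hs

section Rep

variable {B : Type*} [Fintype B] [DecidableEq B] (M : CoxeterMatrix B)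

/-- The bilinear form of a Coxeter matrix. -/
noncomputable def bf : (B → ℝ) →ₗ[ℝ] (B → ℝ) →ₗ[ℝ] ℝ :=
  Matrix.toLinearMap₂' ℝ (Matrix.of fun i j => -cos (π / M i j))

/-- Simple roots. -/
def al (i : B) : B → ℝ := Pi.single i 1

theorem bf_al (i j : B) : bf M (al i) (al j) = -cos (π / M i j) := by
  simp only [bf, Matrix.toLinearMap₂'_apply, Matrix.of_apply]
  rw [Finset.sum_eq_single i, Finset.sum_eq_single j]
  · simp [al]
  · intro b _ hb; simp [al, Pi.single_eq_of_ne hb]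
  · simp
  · intro b _ hb; simp [al, Pi.single_eq_of_ne hb]
  · simp

theorem bf_symm (x y : B → ℝ) : bf M x y = bf M y x := by
  simp only [bf, Matrix.toLinearMap₂'_apply, Matrix.of_apply]
  rw [Finset.sum_comm]
  refine Finset.sum_congr rfl fun i _ => Finset.sum_congr rfl fun j _ => ?_
  rw [M.symmetric i j]
  simp only [smul_eq_mul]
  ring

theorem bf_al_self (i : B) : bf M (al i) (al i) = 1 := by
  rw [bf_al, M.diagonal]; simp

theorem al_ext {W : Type*} [AddCommMonoid W] [Module ℝ W] {f g : (B → ℝ) →ₗ[ℝ] W}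
    (h : ∀ i, f (al i) = g (al i)) : f = g := by
  apply LinearMap.pi_ext'
  intro i
  ext
  exact h i

/-- Simple reflections as linear maps. -/
noncomputable def rf0 (s : B) : (B → ℝ) →ₗ[ℝ] (B → ℝ) :=
  LinearMap.id - (2 : ℝ) • (bf M (al s)).smulRight (al s)

theorem rf0_apply (s : B) (v : B → ℝ) : rf0 M s v = v - (2 * bf M (al s) v) • al s := by
  simp [rf0, smul_smul]

theorem rf0_rf0 (s : B) (v : B → ℝ) : rf0 M s (rf0 M s v) = v := by
  simp only [rf0_apply, map_sub, map_smul, bf_al_self, smul_eq_mul]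
  module

/-- Simple reflections. -/
noncomputable def rf (s : B) : (B → ℝ) ≃ₗ[ℝ] (B → ℝ) :=
  LinearEquiv.ofLinear (rf0 M s) (rf0 M s) (LinearMap.ext (rf0_rf0 M s))
    (LinearMap.ext (rf0_rf0 M s))

theorem rf_apply (s : B) (v : B → ℝ) : rf M s v = v - (2 * bf M (al s) v) • al s :=
  rf0_apply M s v

theorem rf_al_comb {s t : B} (x y : ℝ) : rf M s (x • al s + y • al t) =
    (2 * cos (π / M s t) * y - x) • al s + y • al t := by
  simp only [rf_apply, map_add, map_smul, bf_al_self, bf_al, smul_eq_mul]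
  module

theorem rf_al_comb' {s t : B} (x y : ℝ) : rf M t (x • al s + y • al t) =
    x • al s + (2 * cos (π / M s t) * x - y) • al t := by
  rw [add_comm, rf_al_comb, M.symmetric t s, add_comm]

theorem rf_pow_al (s t : B) (n : ℕ) : ((rf M s * rf M t) ^ n) (al s) =
    us (2 * cos (π / M s t)) (2 * n + 1) • al s + us (2 * cos (π / M s t)) (2 * n) • al t := by
  induction n with
  | zero => simp [us_zero, us_one]
  | succ n ih =>
    rw [pow_succ', LinearEquiv.mul_apply, ih, LinearEquiv.mul_apply, rf_al_comb', rf_al_comb,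
      ← us_add_two, ← us_add_two]
    rfl

theorem rf_pow_al' (s t : B) (n : ℕ) : ((rf M s * rf M t) ^ (n + 1)) (al t) =
    -(us (2 * cos (π / M s t)) (2 * n + 2) • al s +
      us (2 * cos (π / M s t)) (2 * n + 1) • al t) := by
  induction n with
  | zero =>
    have h := rf_al_comb' M (s := s) (t := t) 0 1
    simp only [zero_smul, zero_add, one_smul] at h
    rw [pow_one, LinearEquiv.mul_apply, h]
    have h := rf_al_comb M (s := s) (t := t) 0 (-1)
    simp only [zero_smul, zero_add] at h
    simp only [mul_zero, zero_sub, us_one, us_zero, us_add_two, zero_add]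
    rw [h]
    module
  | succ n ih =>
    rw [pow_succ', LinearEquiv.mul_apply, ih, LinearEquiv.mul_apply, map_neg, map_neg, rf_al_comb',
      rf_al_comb, ← us_add_two, ← us_add_two]
    rfl

theorem rf_orth (s t : B) (n : ℕ) (z : B → ℝ) (hs : bf M (al s) z = 0) (ht : bf M (al t) z = 0) :
    ((rf M s * rf M t) ^ n) z = z := by
  induction n with
  | zero => rfl
  | succ n ih =>
    rw [pow_succ', LinearEquiv.mul_apply, ih, LinearEquiv.mul_apply, rf_apply M t, ht]
    simp [rf_apply, hs]

theorem rf_liftable : M.IsLiftable (rf M) := by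
  intro s t
  by_cases hst : s = t
  · subst hst
    rw [M.diagonal, pow_one]
    ext v : 1
    exact rf0_rf0 M s v
  by_cases h0 : M s t = 0
  · rw [h0, pow_zero]
  have hm : 2 ≤ M s t := by
    have := M.off_diagonal s t hst
    omega
  have hsin := sin_pi_div_pos hm
  have hm' : (M s t : ℝ) ≠ 0 := by exact_mod_cast h0
  obtain ⟨m', hm1⟩ : ∃ m', M s t = m' + 1 := ⟨M s t - 1, by omega⟩
  have hu : ∀ (k : ℕ) (x : ℝ), sin (k * (π / M s t)) = x * sin (π / M s t) →
      us (2 * cos (π / M s t)) k = x := by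
    intro k x h
    have := (us_cos (π / M s t) k).1
    rw [h] at this
    exact mul_right_cancel₀ hsin.ne' this
  have hs : ((rf M s * rf M t) ^ M s t) (al s) = al s := by
    rw [rf_pow_al, hu (2 * M s t) 0, hu (2 * M s t + 1) 1]
    · simp
    · rw [one_mul]
      have : ((2 * M s t + 1 : ℕ) : ℝ) * (π / M s t) = π / M s t + 2 * π := by
        push_cast; field_simp; ring
      rw [this, sin_add_two_pi]
    · rw [zero_mul]
      have : ((2 * M s t : ℕ) : ℝ) * (π / M s t) = 2 * π := by
        push_cast; field_simp
      rw [this, sin_two_pi]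
  have ht : ((rf M s * rf M t) ^ M s t) (al t) = al t := by
    conv_lhs => rw [hm1, rf_pow_al']
    rw [hu (2 * m' + 2) 0, hu (2 * m' + 1) (-1)]
    · simp
    · have : ((2 * m' + 1 : ℕ) : ℝ) * (π / M s t) = -(π / M s t) + 2 * π := by
        have h2 : (2 * m' + 1 : ℕ) = (2 * (M s t : ℝ) - 1) := by rw [hm1]; push_cast; ring
        rw [h2]; field_simp; ring
      rw [this, sin_add_two_pi, sin_neg]; ring
    · rw [zero_mul]
      have : ((2 * m' + 2 : ℕ) : ℝ) * (π / M s t) = 2 * π := by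
        have h2 : (2 * m' + 2 : ℕ) = (2 * (M s t : ℝ)) := by rw [hm1]; push_cast; ring
        rw [h2]; field_simp
      rw [this, sin_two_pi]
  ext z : 1
  -- decompose z
  set θ := π / M s t with hθ
  let a := bf M (al s) z
  let b := bf M (al t) z
  have hD : 1 - cos θ ^ 2 ≠ 0 := by
    have := sin_sq_add_cos_sq θ
    have h3 : 0 < sin θ ^ 2 := by positivity
    nlinarith
  let x := (a + cos θ * b) / (1 - cos θ ^ 2)
  let y := (b + cos θ * a) / (1 - cos θ ^ 2)
  let o := z - (x • al s + y • al t)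
  have hz : z = o + (x • al s + y • al t) := by simp [o]
  have ho1 : bf M (al s) o = 0 := by
    simp only [o, map_sub, map_add, map_smul, bf_al_self, bf_al, smul_eq_mul, ← hθ]
    change a - (x * 1 + y * -cos θ) = 0
    simp only [x, y]
    field_simp
    ring
  have ho2 : bf M (al t) o = 0 := by
    simp only [o, map_sub, map_add, map_smul, bf_al_self, bf_al, smul_eq_mul, M.symmetric t s, ← hθ]
    change b - (x * -cos θ + y * 1) = 0
    simp only [x, y]
    field_simp
    ring
  rw [hz, map_add, map_add, map_smul, map_smul, hs, ht, rf_orth M s t _ o ho1 ho2]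
  rfl

/-- The geometric representation. -/
noncomputable def rep : M.Group →* ((B → ℝ) ≃ₗ[ℝ] (B → ℝ)) :=
  M.toCoxeterSystem.lift ⟨rf M, rf_liftable M⟩

theorem rep_simple (s : B) : rep M (M.simple s) = rf M s := by
  rw [← M.toCoxeterSystem_simple]
  exact M.toCoxeterSystem.lift_apply_simple (rf_liftable M) s

theorem rep_mul (v w : M.Group) (x : B → ℝ) : rep M (v * w) x = rep M v (rep M w x) := by
  rw [map_mul, LinearEquiv.mul_apply]

theorem rep_one (x : B → ℝ) : rep M 1 x = x := by
  rw [map_one]; rfl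

theorem rep_inv_rep (w : M.Group) (x : B → ℝ) : rep M w⁻¹ (rep M w x) = x := by
  rw [← rep_mul, inv_mul_cancel, rep_one]

theorem rep_rep_inv (w : M.Group) (x : B → ℝ) : rep M w (rep M w⁻¹ x) = x := by
  rw [← rep_mul, mul_inv_cancel, rep_one]

theorem simple_eq (s : B) : M.toCoxeterSystem.simple s = M.simple s := by
  rw [M.toCoxeterSystem_simple]

theorem rep_bf (w : M.Group) (x y : B → ℝ) : bf M (rep M w x) (rep M w y) = bf M x y := by
  induction w using M.toCoxeterSystem.simple_induction_left with
  | one => rw [rep_one, rep_one]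
  | mul_simple_left w i h =>
    rw [simple_eq, rep_mul, rep_mul, rep_simple, rf_apply, rf_apply, ← h]
    simp only [map_sub, map_smul, LinearMap.sub_apply, LinearMap.smul_apply, bf_al_self, smul_eq_mul,
      bf_symm M _ (al i)]
    ring

end Rep

end CoxCoh

namespace CoxCoh

open Real CoxeterSystem

section Rep

variable {B : Type*} [Fintype B] [DecidableEq B] (M : CoxeterMatrix B)

/-- alternating product ending in `t`. -/
noncomputable def aw (s t : B) : ℕ → M.Group
  | 0 => 1
  | k + 1 => M.toCoxeterSystem.simple (if Even k then t else s) * aw s t k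

theorem aw_eq (s t : B) (k : ℕ) :
    aw M s t k = M.toCoxeterSystem.wordProd (alternatingWord s t k) := by
  induction k with
  | zero => simp [aw, alternatingWord]
  | succ k ih => rw [alternatingWord_succ', wordProd_cons, aw, ih]

theorem aw_length (s t : B) (k : ℕ) : M.toCoxeterSystem.length (aw M s t k) ≤ k := by
  rw [aw_eq]
  exact (length_wordProd_le _ _).trans (length_alternatingWord s t k).le

theorem rep_aw (s t : B) (k : ℕ) : rep M (aw M s t k) (al s) =
    if Even k then us (2 * cos (π / M s t)) (k + 1) • al s + us (2 * cos (π / M s t)) k • al t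
    else us (2 * cos (π / M s t)) k • al s + us (2 * cos (π / M s t)) (k + 1) • al t := by
  induction k with
  | zero => simp [aw, us_zero, us_one, rep_one]
  | succ k ih =>
    rw [aw, rep_mul, ih, simple_eq, rep_simple]
    by_cases hk : Even k
    · have hk' : ¬ Even (k + 1) := by rw [Nat.even_add_one]; simpa using hk
      rw [if_pos hk, if_pos hk, if_neg hk', rf_al_comb', us_add_two]
    · have hk' : Even (k + 1) := by rw [Nat.even_add_one]; simpa using hk
      rw [if_neg hk, if_neg hk, if_pos hk', rf_al_comb, us_add_two]

theorem al_nonneg (s : B) : 0 ≤ (al s : B → ℝ) := by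
  rw [al]; exact Pi.single_nonneg.2 zero_le_one

theorem rep_al_nonneg (n : ℕ) : ∀ (w : M.Group) (s : B), M.toCoxeterSystem.length w = n →
    ¬ M.toCoxeterSystem.IsRightDescent w s → 0 ≤ rep M w (al s) := by
  induction n using Nat.strong_induction_on with
  | _ n IH =>
  intro w s hn hs
  set cs := M.toCoxeterSystem with hcs
  by_cases hw : w = 1
  · subst hw; rw [rep_one]; exact al_nonneg s
  obtain ⟨t, ht⟩ := cs.exists_rightDescent_of_ne_one hw
  have hst : s ≠ t := by rintro rfl; exact hs ht
  let p : ℕ → Prop := fun k => ∃ v, w = v * aw M s t k ∧ cs.length v + k = cs.length w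
  have hex : ∃ k, ¬ p k := ⟨cs.length w + 1, by rintro ⟨v, -, h⟩; omega⟩
  classical
  have hnp := Nat.find_spec hex
  have hmin : ∀ j, j < Nat.find hex → p j := fun j hj => not_not.1 (Nat.find_min hex hj)
  have p0 : p 0 := ⟨w, by simp [aw], rfl⟩
  have p1 : p 1 := by
    refine ⟨w * cs.simple t, by simp [aw, ← hcs], (cs.isRightDescent_iff).1 ht⟩
  obtain ⟨j, hj⟩ : ∃ j, Nat.find hex = j + 2 := by
    rcases h : Nat.find hex with _ | _ | j
    · rw [h] at hnp; exact absurd p0 hnp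
    · rw [h] at hnp; exact absurd p1 hnp
    · exact ⟨j, rfl⟩
  rw [hj] at hnp hmin
  obtain ⟨v, hv, hlv⟩ := hmin (j + 1) (by omega)
  have hlt : cs.length v < n := by omega
  have hnext : ¬ cs.IsRightDescent v (if Even (j + 1) then t else s) := by
    intro h
    rw [isRightDescent_iff] at h
    refine hnp ⟨v * cs.simple (if Even (j + 1) then t else s), ?_, by omega⟩
    rw [aw, mul_assoc, ← hcs, simple_mul_simple_cancel_left, hv]
  have hprev : ¬ cs.IsRightDescent v (if Even j then t else s) := by
    intro h
    rw [isRightDescent_iff] at h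
    have h1 : w = v * cs.simple (if Even j then t else s) * aw M s t j := by
      rw [hv, aw, mul_assoc]
    have h2 := cs.length_mul_le (v * cs.simple (if Even j then t else s)) (aw M s t j)
    rw [← h1] at h2
    have h3 := aw_length M s t j
    rw [← hcs] at h3
    omega
  have hvs : ¬ cs.IsRightDescent v s ∧ ¬ cs.IsRightDescent v t := by
    by_cases hk : Even j
    · have hk' : ¬ Even (j + 1) := by rw [Nat.even_add_one]; simpa using hk
      rw [if_neg hk'] at hnext
      rw [if_pos hk] at hprev
      exact ⟨hnext, hprev⟩
    · have hk' : Even (j + 1) := by rw [Nat.even_add_one]; simpa using hk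
      rw [if_pos hk'] at hnext
      rw [if_neg hk] at hprev
      exact ⟨hprev, hnext⟩
  have hm : M s t = 0 ∨ j + 2 ≤ M s t := by
    by_contra hcon
    push Not at hcon
    obtain ⟨hm0, hmlt⟩ := hcon
    obtain ⟨u, hu, hlu⟩ := hmin (M s t) (by omega)
    obtain ⟨m', hm'⟩ : ∃ m', M s t = m' + 1 := ⟨M s t - 1, by omega⟩
    have h1 := cs.wordProd_braidWord_eq s t
    rw [braidWord, braidWord, ← aw_eq, M.symmetric t s] at h1
    rw [h1, hm', alternatingWord_succ, wordProd_concat, ← mul_assoc] at hu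
    apply hs
    rw [IsRightDescent, hu, simple_mul_simple_cancel_right, ← hu]
    have h2 := cs.length_mul_le u (cs.wordProd (alternatingWord s t m'))
    have h3 := aw_length M s t m'
    rw [aw_eq, ← hcs] at h3
    omega
  have hM1 := M.off_diagonal s t hst
  have hu1 : 0 ≤ us (2 * cos (π / M s t)) (j + 1) := us_nonneg hM1 (by omega)
  have hu2 : 0 ≤ us (2 * cos (π / M s t)) (j + 1 + 1) := us_nonneg hM1 (by omega)
  have IHs := IH _ hlt v s rfl hvs.1
  have IHt := IH _ hlt v t rfl hvs.2
  rw [hv, rep_mul, rep_aw]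
  split_ifs
  · rw [map_add, map_smul, map_smul]
    exact add_nonneg (smul_nonneg hu2 IHs) (smul_nonneg hu1 IHt)
  · rw [map_add, map_smul, map_smul]
    exact add_nonneg (smul_nonneg hu1 IHs) (smul_nonneg hu2 IHt)

theorem rep_al_pos {w : M.Group} {s : B} (h : ¬ M.toCoxeterSystem.IsRightDescent w s) :
    0 ≤ rep M w (al s) := rep_al_nonneg M _ w s rfl h

theorem rf_al (s : B) : rf M s (al s) = -al s := by
  rw [rf_apply, bf_al_self]; module

theorem rep_al_neg {w : M.Group} {s : B} (h : M.toCoxeterSystem.IsRightDescent w s) :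
    rep M w (al s) ≤ 0 := by
  rw [isRightDescent_iff_not_isRightDescent_mul] at h
  have := rep_al_pos M h
  rw [rep_mul, simple_eq, rep_simple, rf_al, map_neg] at this
  exact neg_nonneg.1 this

/-- roots -/
def IsRoot (β : B → ℝ) : Prop := ∃ w s, β = rep M w (al s)

variable {M}

theorem isRoot_al (s : B) : IsRoot M (al s) := ⟨1, s, (rep_one M _).symm⟩

theorem IsRoot.rep {β : B → ℝ} (h : IsRoot M β) (w : M.Group) : IsRoot M (rep M w β) := by
  obtain ⟨v, s, rfl⟩ := h
  exact ⟨w * v, s, (rep_mul M _ _ _).symm⟩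

theorem IsRoot.neg {β : B → ℝ} (h : IsRoot M β) : IsRoot M (-β) := by
  obtain ⟨v, s, rfl⟩ := h
  exact ⟨v * M.simple s, s, by rw [rep_mul, rep_simple, rf_al, map_neg]⟩

theorem IsRoot.bf_self {β : B → ℝ} (h : IsRoot M β) : bf M β β = 1 := by
  obtain ⟨v, s, rfl⟩ := h
  rw [rep_bf, bf_al_self]

theorem IsRoot.pos_or_neg {β : B → ℝ} (h : IsRoot M β) : 0 ≤ β ∨ β ≤ 0 := by
  obtain ⟨v, s, rfl⟩ := h
  by_cases hd : M.toCoxeterSystem.IsRightDescent v s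
  · exact Or.inr (rep_al_neg M hd)
  · exact Or.inl (rep_al_pos M hd)

theorem IsRoot.ne_zero {β : B → ℝ} (h : IsRoot M β) : β ≠ 0 := by
  rintro rfl
  have := h.bf_self
  simp at this

theorem IsRoot.not_both {β : B → ℝ} (h : IsRoot M β) (h1 : 0 ≤ β) (h2 : β ≤ 0) : False :=
  h.ne_zero (le_antisymm h2 h1)

theorem IsRoot.not_nonneg {β : B → ℝ} (h : IsRoot M β) : ¬ 0 ≤ β ↔ β ≤ 0 :=
  ⟨fun h1 => h.pos_or_neg.resolve_left h1, fun h2 h1 => h.not_both h1 h2⟩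

theorem IsRoot.not_nonpos {β : B → ℝ} (h : IsRoot M β) : ¬ β ≤ 0 ↔ 0 ≤ β :=
  ⟨fun h1 => h.pos_or_neg.resolve_right h1, fun h2 h1 => h.not_both h2 h1⟩

/-- reflections as group elements -/
theorem IsRoot.exists_refl {β : B → ℝ} (h : IsRoot M β) :
    ∃ t : M.Group, t * t = 1 ∧ ∀ v, CoxCoh.rep M t v = v - (2 * bf M β v) • β := by
  obtain ⟨w, s, rfl⟩ := h
  refine ⟨w * M.simple s * w⁻¹, ?_, fun v => ?_⟩
  · have := M.toCoxeterSystem.simple_mul_simple_self s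
    rw [simple_eq] at this
    calc w * M.simple s * w⁻¹ * (w * M.simple s * w⁻¹) = w * (M.simple s * M.simple s) * w⁻¹ := by
          group
      _ = 1 := by rw [this]; group
  · rw [rep_mul, rep_mul, rep_simple, rf_apply, map_sub, map_smul, rep_rep_inv]
    congr 3
    rw [← rep_bf M w, rep_rep_inv]

theorem simple_perm {β : B → ℝ} (h : IsRoot M β) (s : B) (hpos : 0 ≤ β) (hne : β ≠ al s) :
    0 ≤ rf M s β := by
  by_contra hcon
  have hr : IsRoot M (rf M s β) := by
    have := h.rep (M.simple s)
    rwa [rep_simple] at this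
  have hneg := hr.not_nonneg.1 hcon
  have hzero : ∀ i, i ≠ s → β i = 0 := by
    intro i hi
    have h1 := hneg i
    rw [rf_apply] at h1
    simp only [al, Pi.sub_apply, Pi.smul_apply, Pi.single_eq_of_ne hi, smul_zero, sub_zero,
      Pi.zero_apply] at h1
    exact le_antisymm h1 (hpos i)
  have hβ : β = β s • al s := by
    ext i
    by_cases hi : i = s
    · subst hi; simp [al]
    · rw [hzero i hi]; simp [al, Pi.single_eq_of_ne hi]
  have hb := h.bf_self
  rw [hβ] at hb
  simp only [map_smul, LinearMap.smul_apply, bf_al_self, smul_eq_mul] at hb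
  have h3 : β s = 1 := by
    have := hpos s
    simp only [Pi.zero_apply] at this
    nlinarith
  rw [h3, one_smul] at hβ
  exact hne hβ

variable (M) in
/-- inversion set -/
def Inv (w : M.Group) : Set (B → ℝ) := {β | IsRoot M β ∧ 0 ≤ β ∧ rep M w β ≤ 0}

theorem inv_finite (w : M.Group) : (Inv M w).Finite := by
  induction w using M.toCoxeterSystem.simple_induction_right with
  | one =>
    convert Set.finite_empty
    ext β
    simp only [Inv, rep_one, Set.mem_ofPred_eq, Set.mem_empty_iff_false, iff_false]
    rintro ⟨h1, h2, h3⟩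
    exact h1.not_both h2 h3
  | mul_simple_right w i h =>
    refine ((h.image (rf M i)).insert (al i)).subset ?_
    rintro β ⟨h1, h2, h3⟩
    rw [rep_mul, simple_eq, rep_simple] at h3
    by_cases hb : β = al i
    · exact Or.inl hb
    · right
      refine ⟨rf M i β, ⟨?_, simple_perm h1 i h2 hb, h3⟩, rf0_rf0 M i β⟩
      have := h1.rep (M.simple i)
      rwa [rep_simple] at this

theorem eq_one_of_inv_empty {w : M.Group} (h : ∀ β, IsRoot M β → 0 ≤ β → 0 ≤ rep M w β) :
    w = 1 := by
  by_contra hw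
  obtain ⟨s, hs⟩ := M.toCoxeterSystem.exists_rightDescent_of_ne_one hw
  exact ((isRoot_al s).rep w).not_both (h _ (isRoot_al s) (al_nonneg s)) (rep_al_neg M hs)

theorem eq_one_of_rep {w : M.Group} (h : ∀ s, rep M w (al s) = al s) : w = 1 := by
  by_contra hw
  obtain ⟨s, hs⟩ := M.toCoxeterSystem.exists_rightDescent_of_ne_one hw
  have := rep_al_neg M hs
  rw [h] at this
  exact (isRoot_al (M := M) s).not_both (al_nonneg s) this

end Rep

section Parabolic

variable {B B' : Type*} (M : CoxeterMatrix B) (M' : CoxeterMatrix B')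

noncomputable def para (f : B' → B) (hM : ∀ i j, M' i j = M (f i) (f j)) : M'.Group →* M.Group :=
  M'.toCoxeterSystem.lift ⟨fun i => M.toCoxeterSystem.simple (f i), fun i j => by
    rw [hM]; exact M.toCoxeterSystem.simple_mul_simple_pow _ _⟩

theorem para_simple (f : B' → B) (hM : ∀ i j, M' i j = M (f i) (f j)) (i : B') :
    para M M' f hM (M'.simple i) = M.simple (f i) := by
  rw [← M.toCoxeterSystem_simple, ← M'.toCoxeterSystem_simple]
  exact M'.toCoxeterSystem.lift_apply_simple (f := fun i => M.toCoxeterSystem.simple (f i)) _ i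

theorem para_injective [Finite B] [Finite B'] (f : B' → B) (hf : Function.Injective f)
    (hM : ∀ i j, M' i j = M (f i) (f j)) : Function.Injective (para M M' f hM) := by
  classical
  cases nonempty_fintype B
  cases nonempty_fintype B'
  let E : (B' → ℝ) →ₗ[ℝ] (B → ℝ) := Fintype.linearCombination ℝ fun i => al (f i)
  have hE : ∀ i, E (al i) = al (f i) := by
    intro i
    simp [E, al, Fintype.linearCombination_apply_single]
  have hbf : ∀ x y, bf M (E x) (E y) = bf M' x y := by
    have : (bf M).compl₁₂ E E = bf M' := by
      apply al_ext
      intro i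
      apply al_ext
      intro j
      rw [LinearMap.compl₁₂_apply, hE, hE, bf_al, bf_al, hM]
    intro x y
    rw [← this]
    rfl
  have hrep : ∀ w x, rep M (para M M' f hM w) (E x) = E (rep M' w x) := by
    intro w
    induction w using M'.toCoxeterSystem.simple_induction_left with
    | one => intro x; rw [map_one, rep_one, rep_one]
    | mul_simple_left w i h =>
      intro x
      rw [map_mul, simple_eq, para_simple, rep_mul, rep_mul, h, rep_simple, rep_simple, rf_apply,
        rf_apply, ← hE, hbf, map_sub, map_smul]
  have hEinj : Function.Injective E := by
    intro x y hxy
    ext i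
    have h1 : ∀ z, E z (f i) = z i := by
      intro z
      simp only [E, Fintype.linearCombination_apply, Finset.sum_apply, Pi.smul_apply, al]
      rw [Finset.sum_eq_single i]
      · simp
      · intro j _ hj
        rw [Pi.single_eq_of_ne (fun h => hj (hf h).symm)]; simp
      · simp
    rw [← h1 x, hxy, h1 y]
  rw [injective_iff_map_eq_one]
  intro w hw
  apply eq_one_of_rep
  intro s
  apply hEinj
  rw [← hrep, hw, rep_one]

end Parabolic

end CoxCoh

namespace CoxCoh

open Real

section S1

variable {B : Type*} [Fintype B] [DecidableEq B] {M : CoxeterMatrix B}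

theorem seq_root {c : ℝ} {r : ℕ → B → ℝ} (h0 : IsRoot M (r 0)) (h1 : IsRoot M (r 1))
    (hc : 2 * bf M (r 0) (r 1) = c) (hr : ∀ k, r (k + 2) = c • r (k + 1) - r k) (k : ℕ) :
    IsRoot M (r k) ∧ IsRoot M (r (k + 1)) ∧ 2 * bf M (r k) (r (k + 1)) = c := by
  induction k with
  | zero => exact ⟨h0, h1, hc⟩
  | succ k ih =>
    obtain ⟨i1, i2, i3⟩ := ih
    refine ⟨i2, ?_, ?_⟩
    · obtain ⟨t, -, ht⟩ := i2.exists_refl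
      have := (i1.rep t).neg
      rw [ht, bf_symm, i3, ← neg_sub, neg_neg] at this
      convert this using 1
      rw [hr]
    · rw [hr, map_sub, map_smul, i2.bf_self, bf_symm M (r (k + 1)) (r k), smul_eq_mul]
      linarith

theorem us_growth {c : ℝ} (hc : 2 ≤ c) (k : ℕ) : 0 ≤ us c k ∧ us c k + 1 ≤ us c (k + 1) := by
  induction k with
  | zero => simp [us_zero, us_one]
  | succ k ih =>
    refine ⟨by linarith [ih.1, ih.2], ?_⟩
    rw [us_add_two]
    nlinarith [ih.1, ih.2]

theorem noncross_core {β γ : B → ℝ} (hβ : IsRoot M β) (hγ : IsRoot M γ) (hB : bf M β γ ≤ -1)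
    (pβ : 0 ≤ β) (pγ : 0 ≤ γ) (g : M.Group) (nβ : rep M g β ≤ 0) (nγ : rep M g γ ≤ 0) : False := by
  set c : ℝ := -2 * bf M β γ with hc
  have hc2 : 2 ≤ c := by linarith
  let r : ℕ → B → ℝ := fun k => us c (k + 1) • β + us c k • γ
  have r0 : r 0 = β := by simp [r, us_zero, us_one]
  have r1 : r 1 = c • β + γ := by simp [r, us_zero, us_one, us_add_two]
  have hroot : ∀ k, IsRoot M (r k) := by
    intro k
    refine (seq_root (c := c) (r := r) ?_ ?_ ?_ ?_ k).1
    · rwa [r0]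
    · rw [r1]
      obtain ⟨t, -, ht⟩ := hβ.exists_refl
      have := hγ.rep t
      rw [ht] at this
      convert this using 1
      rw [hc]; module
    · rw [r0, r1, map_add, map_smul, hβ.bf_self, smul_eq_mul]; linarith
    · intro k
      simp only [r, us_add_two c (k + 1), us_add_two c k]
      module
  have hinv : ∀ k, r k ∈ Inv M g := by
    intro k
    have h1 := (us_growth hc2 k).1
    have h2 := (us_growth hc2 (k + 1)).1
    refine ⟨hroot k, add_nonneg (smul_nonneg h2 pβ) (smul_nonneg h1 pγ), ?_⟩
    simp only [r, map_add, map_smul]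
    exact add_nonpos (smul_nonpos_of_nonneg_of_nonpos h2 nβ) (smul_nonpos_of_nonneg_of_nonpos h1 nγ)
  obtain ⟨i, hi⟩ : ∃ i, 0 < β i := by
    by_contra hcon
    push Not at hcon
    exact hβ.not_both pβ hcon
  have hmono : StrictMono fun k => r k i := by
    apply strictMono_nat_of_lt_succ
    intro k
    have h1 := (us_growth hc2 k).2
    have h2 := (us_growth hc2 (k + 1)).2
    have h3 := pγ i
    simp only [Pi.zero_apply] at h3
    simp only [r, Pi.add_apply, Pi.smul_apply, smul_eq_mul]
    nlinarith
  have hinj : Function.Injective r := fun a b hab => hmono.injective (by simp [hab])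
  exact Set.infinite_of_injective_forall_mem hinj hinv (inv_finite g)

theorem noncross {β γ : B → ℝ} (hβ : IsRoot M β) (hγ : IsRoot M γ) (hB : bf M β γ ≤ -1)
    (u v : M.Group) (pβ : 0 ≤ rep M u β) (pγ : 0 ≤ rep M u γ)
    (nβ : rep M v β ≤ 0) (nγ : rep M v γ ≤ 0) : False := by
  refine noncross_core (hβ.rep u) (hγ.rep u) (by rwa [rep_bf]) pβ pγ (v * u⁻¹) ?_ ?_
  · rwa [rep_mul, rep_inv_rep]
  · rwa [rep_mul, rep_inv_rep]

theorem no_pos_recurrence {c : ℝ} (hc : c < 2) (a : ℕ → ℝ) (ha : ∀ k, 0 < a k)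
    (hr : ∀ k, a (k + 2) = c * a (k + 1) - a k) : False := by
  have hd : ∀ k, a (k + 2) - a (k + 1) = a (k + 1) - a k - (2 - c) * a (k + 1) := by
    intro k; rw [hr]; ring
  by_cases h : ∃ k, a (k + 1) - a k < 0
  · obtain ⟨k, hk⟩ := h
    have h1 : ∀ j, a (k + j + 1) - a (k + j) ≤ a (k + 1) - a k := by
      intro j
      induction j with
      | zero => simp
      | succ j ih =>
        have := hd (k + j)
        have h2 := ha (k + j + 1)
        have h3 : 0 < (2 - c) * a (k + j + 1) := mul_pos (by linarith) h2
        rw [← add_assoc]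
        linarith
    have h2 : ∀ j : ℕ, a (k + j) ≤ a k + j * (a (k + 1) - a k) := by
      intro j
      induction j with
      | zero => simp
      | succ j ih =>
        have := h1 j
        push_cast
        rw [← add_assoc]
        linarith
    obtain ⟨n, hn⟩ := exists_nat_gt (a k / (a k - a (k + 1)))
    rw [div_lt_iff₀ (by linarith)] at hn
    have := h2 n
    have := ha (k + n)
    linarith
  · push Not at h
    have hmono : ∀ k, a 0 ≤ a k := by
      intro k
      induction k with
      | zero => exact le_rfl
      | succ k ih => linarith [h k]
    have h2 : ∀ k : ℕ, a (k + 1) - a k ≤ a 1 - a 0 - k * ((2 - c) * a 0) := by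
      intro k
      induction k with
      | zero => simp
      | succ k ih =>
        have h3 := hd k
        have h4 : (2 - c) * a 0 ≤ (2 - c) * a (k + 1) :=
          mul_le_mul_of_nonneg_left (hmono _) (by linarith)
        push_cast
        linarith
    have hp : 0 < (2 - c) * a 0 := mul_pos (by linarith) (ha 0)
    obtain ⟨n, hn⟩ := exists_nat_gt ((a 1 - a 0) / ((2 - c) * a 0))
    rw [div_lt_iff₀ hp] at hn
    linarith [h2 n, h n]

theorem seq_cos {θ : ℝ} {r : ℕ → B → ℝ} (h0 : IsRoot M (r 0))
    (hc : bf M (r 0) (r 1) = cos θ) (hr : ∀ k, r (k + 2) = (2 * cos θ) • r (k + 1) - r k) (k : ℕ) :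
    bf M (r 0) (r k) = cos (k * θ) ∧ bf M (r 0) (r (k + 1)) = cos ((k + 1 : ℕ) * θ) := by
  induction k with
  | zero => simp [h0.bf_self, hc]
  | succ k ih =>
    refine ⟨ih.2, ?_⟩
    rw [hr, map_sub, map_smul, ih.1, ih.2, smul_eq_mul]
    push_cast
    have h1 : ((k : ℝ) + 1 + 1) * θ = (k + 1) * θ + θ := by ring
    have h2 : (k : ℝ) * θ = (k + 1) * θ - θ := by ring
    rw [h1, h2, cos_add, cos_sub]
    ring

theorem no_eventually_pos {c : ℝ} (hc : c < 2) (s : ℕ → B → ℝ) (K : ℕ)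
    (hr : ∀ k, s (k + 2) = c • s (k + 1) - s k) (hs : ∀ k, IsRoot M (s k))
    (hp : ∀ k, K ≤ k → 0 ≤ s k) : False := by
  refine no_pos_recurrence hc (fun k => ∑ i, s (K + k) i) ?_ ?_
  · intro k
    have h1 := hp (K + k) (by omega)
    refine lt_of_le_of_ne (Finset.sum_nonneg fun i _ => h1 i) ?_
    intro h
    refine (hs (K + k)).ne_zero ?_
    funext i
    exact (Finset.sum_eq_zero_iff_of_nonneg (fun i _ => h1 i)).1 h.symm i (Finset.mem_univ i)
  · intro k
    simp only [← add_assoc, hr, Pi.sub_apply, Pi.smul_apply, smul_eq_mul, Finset.sum_sub_distrib,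
      Finset.mul_sum]

theorem finite_order {β γ : B → ℝ} (hβ : IsRoot M β) (hγ : IsRoot M γ) (θ : ℝ)
    (hθ : bf M β γ = cos θ) (hlt : |bf M β γ| < 1) : ∃ n : ℕ, 0 < n ∧ cos (n * θ) = 1 := by
  set c : ℝ := 2 * cos θ with hc
  let r : ℕ → B → ℝ := fun k => us c k • γ - (c * us c k - us c (k + 1)) • β
  have r0 : r 0 = β := by simp [r, us_zero, us_one]
  have r1 : r 1 = γ := by simp [r, us_zero, us_one, us_add_two]
  have hr : ∀ k, r (k + 2) = c • r (k + 1) - r k := by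
    intro k
    simp only [r, us_add_two c (k + 1), us_add_two c k]
    module
  have hroot := seq_root (M := M) (c := c) (r := r) (by rwa [r0]) (by rwa [r1])
    (by rw [r0, r1, hθ]) hr
  have hcos : ∀ i k, bf M (r i) (r (i + k)) = cos (k * θ) := by
    intro i k
    refine (seq_cos (M := M) (r := fun k => r (i + k)) (hroot i).1 ?_ (fun k => hr (i + k)) k).1
    have := (hroot i).2.2
    simp only [add_zero]
    linarith
  have hclt : c ^ 2 < 4 := by
    rw [hθ] at hlt
    have := (sq_lt_one_iff_abs_lt_one (cos θ)).2 hlt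
    rw [hc]; nlinarith
  by_cases hinj : Function.Injective fun k => r (2 * k)
  · exfalso
    obtain ⟨t0, -, ht0⟩ := hβ.exists_refl
    obtain ⟨t1, -, ht1⟩ := hγ.exists_refl
    have hβγ : 2 * bf M β γ = c := by rw [hθ]
    have hγβ : 2 * bf M γ β = c := by rw [bf_symm, hβγ]
    have hρ : ∀ k, rep M (t1 * t0) (r k) = r (k + 2) ∧
        rep M (t1 * t0) (r (k + 1)) = r (k + 3) := by
      intro k
      induction k with
      | zero =>
        constructor
        · rw [r0, hr, r0, zero_add, r1, rep_mul, ht0, hβ.bf_self, map_sub, map_smul, ht1, hγβ]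
          module
        · rw [zero_add, r1, rep_mul, ht0, hβγ, map_sub, map_smul, ht1, ht1, hγβ, hγ.bf_self,
            hr 1, hr 0, zero_add, r1, r0]
          module
      | succ k ih =>
        refine ⟨ih.2, ?_⟩
        rw [show k + 1 + 1 = k + 2 from rfl, hr, map_sub, map_smul, ih.1, ih.2, ← hr]
    have hs : ∀ k, r (2 * (k + 2)) = (c ^ 2 - 2) • r (2 * (k + 1)) - r (2 * k) := by
      intro k
      have e1 := hr (2 * k)
      have e2 := hr (2 * k + 1)
      have e3 := hr (2 * k + 2)
      have e4 : c • r (2 * k + 1) = r (2 * k + 2) + r (2 * k) := by rw [e1]; module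
      rw [show 2 * (k + 2) = 2 * k + 2 + 2 by ring, show 2 * (k + 1) = 2 * k + 2 by ring, e3,
        show 2 * k + 2 + 1 = 2 * k + 1 + 2 by ring, e2, smul_sub, e4,
        show 2 * k + 1 + 1 = 2 * k + 2 by ring]
      module
    have hfin : {k | r (2 * k) ∈ Inv M (t1 * t0)}.Finite :=
      Set.Finite.preimage hinj.injOn (inv_finite (t1 * t0))
    have hfin2 : {k | -r (2 * k) ∈ Inv M (t1 * t0)}.Finite :=
      Set.Finite.preimage (f := fun k => -r (2 * k)) (fun a _ b _ hab => hinj (neg_injective hab))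
        (inv_finite (t1 * t0))
    obtain ⟨K, hK⟩ := (hfin.union hfin2).bddAbove
    have hstep : ∀ k, K < k → (0 ≤ r (2 * k) ↔ 0 ≤ r (2 * (k + 1))) := by
      intro k hk
      have hroot1 := (hroot (2 * k)).1
      have hroot2 := (hroot (2 * (k + 1))).1
      have e : rep M (t1 * t0) (r (2 * k)) = r (2 * (k + 1)) := (hρ (2 * k)).1
      constructor
      · intro h
        by_contra hcon
        have := hK (a := k) (Or.inl ⟨hroot1, h, by rw [e]; exact hroot2.not_nonneg.1 hcon⟩)
        omega
      · intro h
        by_contra hcon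
        have := hK (a := k) (Or.inr ⟨hroot1.neg, neg_nonneg.2 (hroot1.not_nonneg.1 hcon),
          by rw [map_neg, e]; exact neg_nonpos.2 h⟩)
        omega
    have hall : ∀ j, (0 ≤ r (2 * (K + 1)) ↔ 0 ≤ r (2 * (K + 1 + j))) := by
      intro j
      induction j with
      | zero => rfl
      | succ j ih => rw [ih, hstep _ (by omega)]; rfl
    rcases (hroot (2 * (K + 1))).1.pos_or_neg with h | h
    · refine no_eventually_pos (M := M) (c := c ^ 2 - 2) (by linarith) (fun k => r (2 * k)) (K + 1) hs
        (fun k => (hroot _).1) ?_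
      intro k hk
      obtain ⟨j, rfl⟩ := Nat.exists_eq_add_of_le hk
      exact (hall j).1 h
    · refine no_eventually_pos (M := M) (c := c ^ 2 - 2) (by linarith) (fun k => -r (2 * k)) (K + 1) ?_
        (fun k => (hroot _).1.neg) ?_
      · intro k
        simp only [hs]
        module
      intro k hk
      obtain ⟨j, rfl⟩ := Nat.exists_eq_add_of_le hk
      refine neg_nonneg.2 ((hroot _).1.not_nonneg.1 fun h' => ?_)
      exact (hroot _).1.not_both ((hall j).2 h') h
  · simp only [Function.Injective, not_forall] at hinj
    obtain ⟨i, j, hij, hne⟩ := hinj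
    have key : ∀ i j, i < j → r (2 * i) = r (2 * j) → ∃ n : ℕ, 0 < n ∧ cos (n * θ) = 1 := by
      intro i j hlt h
      refine ⟨2 * j - 2 * i, by omega, ?_⟩
      rw [← hcos (2 * i), show 2 * i + (2 * j - 2 * i) = 2 * j by omega, ← h, (hroot _).1.bf_self]
    rcases lt_or_gt_of_ne hne with h | h
    · exact key i j h hij
    · exact key j i h hij.symm

end S1

end CoxCoh

namespace CoxCoh

open Real

theorem cos_mod_five {θ y : ℝ} {n : ℕ} (hn : 0 < n) (hcos : cos (n * θ) = 1)
    (hy : IsIntegral ℤ y) (h : 2 * cos θ - 2 = 5 * y) : y = 0 := by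
  set ζ : ℂ := Complex.exp (θ * Complex.I) with hζ
  have hζn : ζ ^ n = 1 := by
    have hs : sin (n * θ) = 0 := by
      have := sin_sq_add_cos_sq (n * θ)
      rw [hcos] at this
      nlinarith
    rw [hζ, ← Complex.exp_nat_mul, ← mul_assoc]
    have : ((n : ℂ) * (θ : ℂ)) = ((n * θ : ℝ) : ℂ) := by push_cast; rfl
    rw [this, Complex.exp_mul_I, ← Complex.ofReal_cos, ← Complex.ofReal_sin, hcos, hs]
    simp
  have hζ0 : ζ ≠ 0 := Complex.exp_ne_zero _
  have hζi : ζ + ζ⁻¹ = ((2 * cos θ : ℝ) : ℂ) := by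
    rw [hζ, ← Complex.exp_neg, Complex.ofReal_mul, Complex.ofReal_cos, Complex.cos]
    push_cast
    rw [neg_mul]
    ring
  have hintg : IsIntegral ℚ ζ := by
    refine IsIntegral.of_pow hn ?_
    rw [hζn]; exact isIntegral_one
  let K := IntermediateField.adjoin ℚ {ζ}
  haveI : FiniteDimensional ℚ K := IntermediateField.adjoin.finiteDimensional hintg
  haveI : NumberField K := {}
  let g : K := IntermediateField.AdjoinSimple.gen ℚ ζ
  have hg : (g : ℂ) = ζ := IntermediateField.AdjoinSimple.coe_gen ℚ ζ
  let z : K := (5 : K)⁻¹ * (g + g⁻¹ - 2)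
  have hz : (z : ℂ) = (y : ℂ) := by
    have : (z : ℂ) = (5 : ℂ)⁻¹ * ((g : ℂ) + (g : ℂ)⁻¹ - 2) := rfl
    rw [this, hg, hζi]
    have h2 : (2 : ℂ) = ((2 : ℝ) : ℂ) := by simp
    rw [h2, ← Complex.ofReal_sub, h]
    push_cast
    field_simp
  have hzint : IsIntegral ℤ z := by
    rw [← isIntegral_algebraMap_iff (algebraMap K ℂ).injective]
    change IsIntegral ℤ (z : ℂ)
    rw [hz]
    exact hy.map (Algebra.ofId ℝ ℂ |>.restrictScalars ℤ)
  have hgn : g ^ n = 1 := by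
    apply Subtype.ext
    change (g : ℂ) ^ n = 1
    rw [hg, hζn]
  have hb : ∀ φ : K →+* ℂ, ‖φ z‖ ≤ 4 / 5 := by
    intro φ
    have h1 : ‖φ g‖ = 1 := by
      refine Complex.norm_eq_one_of_pow_eq_one (n := n) ?_ hn.ne'
      rw [← map_pow, hgn, map_one]
    have h2 : φ z = (5 : ℂ)⁻¹ * (φ g + (φ g)⁻¹ - 2) := by
      simp only [z, map_mul, map_inv₀, map_sub, map_add, map_ofNat]
    have h3 : ‖φ g + (φ g)⁻¹ - 2‖ ≤ 4 := by
      calc ‖φ g + (φ g)⁻¹ - 2‖ ≤ ‖φ g‖ + ‖(φ g)⁻¹‖ + ‖(2 : ℂ)‖ :=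
            (norm_sub_le _ _).trans (by gcongr; exact norm_add_le _ _)
        _ = 4 := by rw [norm_inv, h1]; norm_num
    rw [h2, norm_mul, norm_inv]
    have : ‖(5 : ℂ)‖ = 5 := by norm_num
    rw [this]
    linarith
  by_contra hy0
  have hz0 : z ≠ 0 := by
    intro h0
    rw [h0] at hz
    exact hy0 (Complex.ofReal_eq_zero.1 hz.symm)
  obtain ⟨m, hm, hzm⟩ := NumberField.Embeddings.pow_eq_one_of_norm_le_one K ℂ hz0 hzint
    (fun φ => (hb φ).trans (by norm_num))
  have h1 := hb K.val.toRingHom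
  have h2 : ‖K.val.toRingHom z‖ = 1 := by
    refine Complex.norm_eq_one_of_pow_eq_one (n := m) ?_ hm.ne'
    rw [← map_pow, hzm, map_one]
  rw [h2] at h1
  norm_num at h1

theorem finiteIndex_of_map {G α : Type*} [Group G] [Finite α] (H : Subgroup G) (f : G → α)
    (hf : ∀ x y, f x = f y → x⁻¹ * y ∈ H) : H.FiniteIndex := by
  haveI : Finite (G ⧸ H) := by
    refine Finite.of_injective (fun q : G ⧸ H => f q.out) ?_
    intro a b hab
    have := hf _ _ hab
    rw [← QuotientGroup.eq, QuotientGroup.out_eq', QuotientGroup.out_eq'] at this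
    exact this
  exact Subgroup.finiteIndex_of_finite_quotient

section S3

variable {B : Type*} [Fintype B] [DecidableEq B] (M : CoxeterMatrix B)

/-- The ring generated by the entries of the form. -/
noncomputable def Oring : Subalgebra ℤ ℝ :=
  Algebra.adjoin ℤ (Set.range fun p : B × B => 2 * cos (π / M p.1 p.2))

theorem gen_integral (m : ℕ) : IsIntegral ℤ (2 * cos (π / m)) := by
  have := Real.isIntegral_two_mul_cos_rat_mul_pi (1 / m)
  push_cast at this
  rwa [one_div, inv_mul_eq_div] at this

theorem Oring_fg : Module.Finite ℤ (Oring M) := by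
  have := fg_adjoin_of_finite (R := ℤ) (s := Set.range fun p : B × B => 2 * cos (π / M p.1 p.2))
    (Set.finite_range _) (by rintro _ ⟨p, rfl⟩; exact gen_integral _)
  exact Module.Finite.iff_fg.2 this

theorem Oring_integral {x : ℝ} (hx : x ∈ Oring M) : IsIntegral ℤ x := by
  haveI := Oring_fg M
  have := Algebra.IsIntegral.isIntegral (R := ℤ) (⟨x, hx⟩ : Oring M)
  exact this.map (Oring M).val

theorem gen_mem (i j : B) : 2 * cos (π / M i j) ∈ Oring M :=
  Algebra.subset_adjoin ⟨(i, j), rfl⟩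

/-- the lattice -/
def Lat : AddSubgroup (B → ℝ) where
  carrier := {x | ∀ i, x i ∈ Oring M}
  zero_mem' := fun _ => (Oring M).zero_mem
  add_mem' := fun ha hb i => (Oring M).add_mem (ha i) (hb i)
  neg_mem' := fun ha i => (Oring M).neg_mem (ha i)

theorem mem_Lat {x : B → ℝ} : x ∈ Lat M ↔ ∀ i, x i ∈ Oring M := Iff.rfl

theorem al_mem (i : B) : al i ∈ Lat M := by
  intro j
  by_cases h : j = i
  · subst h; simp [al, (Oring M).one_mem]
  · simp [al, Pi.single_eq_of_ne h, (Oring M).zero_mem]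

theorem smul_mem_Lat {a : ℝ} (ha : a ∈ Oring M) {x : B → ℝ} (hx : x ∈ Lat M) : a • x ∈ Lat M :=
  fun i => (Oring M).mul_mem ha (hx i)

theorem eq_sum_al (x : B → ℝ) : x = ∑ i, x i • al i := by
  conv_lhs => rw [pi_eq_sum_univ' x]
  simp [al]

theorem bf_mem {x y : B → ℝ} (hx : x ∈ Lat M) (hy : y ∈ Lat M) : 2 * bf M x y ∈ Oring M := by
  rw [bf, Matrix.toLinearMap₂'_apply, Finset.mul_sum]
  refine (Oring M).sum_mem fun i _ => ?_
  rw [Finset.mul_sum]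
  refine (Oring M).sum_mem fun j _ => ?_
  have : 2 * x i • y j • Matrix.of (fun i j => -cos (π / M i j)) i j =
      x i * (y j * -(2 * cos (π / M i j))) := by
    simp only [Matrix.of_apply, smul_eq_mul]; ring
  rw [this]
  exact (Oring M).mul_mem (hx i) ((Oring M).mul_mem (hy j) ((Oring M).neg_mem (gen_mem M i j)))

theorem rep_mem_Lat (w : M.Group) : ∀ x ∈ Lat M, rep M w x ∈ Lat M := by
  induction w using M.toCoxeterSystem.simple_induction_left with
  | one => intro x hx; rwa [rep_one]
  | mul_simple_left w i h =>
    intro x hx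
    rw [rep_mul, simple_eq, rep_simple, rf_apply]
    exact (Lat M).sub_mem (h x hx) (smul_mem_Lat M (bf_mem M (al_mem M i) (h x hx)) (al_mem M i))

/-- the lattice `5 L`. -/
def Lat5 : AddSubgroup (B → ℝ) := (Lat M).map (DistribMulAction.toAddMonoidHom (B → ℝ) (5 : ℝ))

theorem mem_Lat5 {x : B → ℝ} : x ∈ Lat5 M ↔ ∃ y ∈ Lat M, (5 : ℝ) • y = x := Iff.rfl

theorem rep_mem_Lat5 (w : M.Group) {x : B → ℝ} (hx : x ∈ Lat5 M) : rep M w x ∈ Lat5 M := by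
  obtain ⟨y, hy, rfl⟩ := (mem_Lat5 M).1 hx
  exact (mem_Lat5 M).2 ⟨rep M w y, rep_mem_Lat M w y hy, by rw [map_smul]⟩

theorem smul_mem_Lat5 {a : ℝ} (ha : a ∈ Oring M) {x : B → ℝ} (hx : x ∈ Lat5 M) : a • x ∈ Lat5 M := by
  obtain ⟨y, hy, rfl⟩ := (mem_Lat5 M).1 hx
  exact (mem_Lat5 M).2 ⟨a • y, smul_mem_Lat M ha hy, by rw [smul_comm]⟩

/-- congruence subgroup -/
def W0 : Subgroup M.Group where
  carrier := {g | ∀ i, rep M g (al i) - al i ∈ Lat5 M}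
  one_mem' := fun i => by rw [rep_one, sub_self]; exact (Lat5 M).zero_mem
  mul_mem' := by
    intro g h hg hh i
    have := (Lat5 M).add_mem (rep_mem_Lat5 M g (hh i)) (hg i)
    rwa [map_sub, ← rep_mul, sub_add_sub_cancel] at this
  inv_mem' := by
    intro g hg i
    have := (Lat5 M).neg_mem (rep_mem_Lat5 M g⁻¹ (hg i))
    rwa [map_sub, rep_inv_rep, neg_sub] at this

theorem finite_quot : Finite (Oring M ⧸ Ideal.span {(5 : Oring M)}) := by
  haveI := Oring_fg M
  apply Module.finite_of_fg_torsion
  intro x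
  obtain ⟨x, rfl⟩ := Ideal.Quotient.mk_surjective x
  refine ⟨⟨5, by simp⟩, ?_⟩
  change (5 : ℤ) • (Ideal.Quotient.mk (Ideal.span {(5 : Oring M)}) x) = 0
  rw [← map_zsmul, Ideal.Quotient.eq_zero_iff_mem, zsmul_eq_mul]
  exact Ideal.mul_mem_right _ _ (Ideal.subset_span (by simp))

instance W0_finiteIndex : (W0 M).FiniteIndex := by
  haveI := finite_quot M
  refine finiteIndex_of_map (W0 M) (fun w => fun i j : B => Ideal.Quotient.mk (Ideal.span {(5 : Oring M)})
    ⟨rep M w (al i) j, rep_mem_Lat M w _ (al_mem M i) j⟩) ?_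
  intro x y hxy i
  have h1 : rep M y (al i) - rep M x (al i) ∈ Lat5 M := by
    have h2 : ∀ j, ∃ a : Oring M, rep M y (al i) j - rep M x (al i) j = 5 * (a : ℝ) := by
      intro j
      have h3 := congrFun (congrFun hxy i) j
      have h4 := (Ideal.Quotient.eq).1 h3.symm
      obtain ⟨a, ha⟩ := Ideal.mem_span_singleton'.1 h4
      refine ⟨a, ?_⟩
      have := congrArg Subtype.val ha
      change (a : ℝ) * 5 = _ - _ at this
      rw [mul_comm, this]
    choose a ha using h2
    refine (mem_Lat5 M).2 ⟨fun j => a j, fun j => (a j).2, ?_⟩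
    funext j
    exact (ha j).symm
  have h2 := rep_mem_Lat5 M x⁻¹ h1
  rwa [map_sub, rep_inv_rep, ← rep_mul] at h2

theorem W0_abs {g : M.Group} (hg : g ∈ W0 M) {β : B → ℝ} (hβ : IsRoot M β) :
    1 ≤ |bf M (rep M g β) β| := by
  by_contra hcon
  push Not at hcon
  have hβL : β ∈ Lat M := by
    obtain ⟨w, s, rfl⟩ := hβ
    exact rep_mem_Lat M w _ (al_mem M s)
  have h1 : rep M g β - β ∈ Lat5 M := by
    have : rep M g β - β = ∑ i, β i • (rep M g (al i) - al i) := by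
      conv_lhs => rw [eq_sum_al β]
      simp only [map_sum, map_smul, smul_sub, Finset.sum_sub_distrib]
    rw [this]
    exact (Lat5 M).sum_mem fun i _ => smul_mem_Lat5 M (hβL i) (hg i)
  obtain ⟨y, hy, hy5⟩ := (mem_Lat5 M).1 h1
  obtain ⟨n, hn, hcos⟩ := finite_order (hβ.rep g) hβ (arccos (bf M (rep M g β) β))
    (cos_arccos (abs_lt.1 hcon).1.le (abs_lt.1 hcon).2.le).symm hcon
  have h2 : 2 * bf M (rep M g β) β - 2 = 5 * (2 * bf M y β) := by
    have : rep M g β = (5 : ℝ) • y + β := by rw [hy5]; module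
    rw [this, map_add, map_smul, LinearMap.add_apply, LinearMap.smul_apply, hβ.bf_self, smul_eq_mul]
    ring
  have h3 := cos_mod_five hn hcos (Oring_integral M (bf_mem M hy hβL))
    (by rw [cos_arccos (abs_lt.1 hcon).1.le (abs_lt.1 hcon).2.le, h2])
  rw [h3] at h2
  have := (abs_lt.1 hcon).2
  linarith

end S3

end CoxCoh

namespace CoxCoh

open Real
open scoped Pointwise Function

theorem not_sl_of_pingpong {G : Type*} [Group G] (c : ℕ → G) (hc : ∀ k, c k * c k = 1)
    (X : ℕ → Set G) (hX : ∀ k, (X k).Nonempty) (hd : ∀ i j, i < j → ∀ x, x ∈ X i → x ∈ X j → False)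
    (hpp : ∀ k x, x ∉ X k → c k * x ∈ X k) : ¬ Sl G := by
  intro hS
  have hd' : Pairwise (Disjoint on X) := by
    intro i j hij
    rw [Function.onFun, Set.disjoint_left]
    intro x hi hj
    rcases lt_or_gt_of_ne hij with h | h
    · exact hd i j h x hi hj
    · exact hd j i h x hj hi
  have hzp : ∀ k (h : Subgroup.zpowers (c k)), h ≠ 1 → (h : G) = c k := by
    rintro k ⟨h, hh⟩ hne
    obtain ⟨n, rfl⟩ := hh
    have h2 : (c k) ^ (2 : ℤ) = 1 := by rw [zpow_two, hc]
    rcases Int.even_or_odd' n with ⟨m, rfl | rfl⟩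
    · exfalso; apply hne; apply Subtype.ext
      change (c k) ^ (2 * m) = 1
      rw [zpow_mul, h2, one_zpow]
    · change (c k) ^ (2 * m + 1) = c k
      rw [zpow_add, zpow_mul, h2, one_zpow, one_mul, zpow_one]
  have hne : ∀ k, c k ≠ 1 := by
    intro k hk
    obtain ⟨x, hx⟩ := hX (k + 1)
    have h1 : x ∉ X k := fun h => hd k (k + 1) (by omega) x h hx
    have := hpp k x h1
    rw [hk, one_mul] at this
    exact h1 this
  have hinj := Monoid.CoprodI.lift_injective_of_ping_pong
    (fun k => (Subgroup.zpowers (c k)).subtype)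
    (Or.inl (by rw [Cardinal.mk_nat]; exact (Cardinal.nat_lt_aleph0 3).le)) X hX hd' (by
      intro i j hij h hne
      rintro _ ⟨x, hx, rfl⟩
      change (h : G) * x ∈ X i
      rw [hzp i h hne]
      exact hpp i x fun hi => Set.disjoint_left.1 (hd' hij) hi hx)
  have hfg := hS (Monoid.CoprodI.lift fun k => (Subgroup.zpowers (c k)).subtype).range
  rw [← Group.fg_iff_subgroup_fg] at hfg
  have hfg2 : Group.FG (Monoid.CoprodI fun k => Subgroup.zpowers (c k)) :=
    Group.fg_of_surjective (f := (MonoidHom.ofInjective hinj).symm.toMonoidHom)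
      (MonoidHom.ofInjective hinj).symm.surjective
  obtain ⟨S, hSc, hSf⟩ := Group.fg_iff.1 hfg2
  classical
  let pr : ∀ k, (Monoid.CoprodI fun k => Subgroup.zpowers (c k)) →* G := fun k =>
    Monoid.CoprodI.lift fun j => if j = k then (Subgroup.zpowers (c j)).subtype else 1
  have hfin : ∀ x, {k | pr k x ≠ 1}.Finite := by
    intro x
    induction x using Monoid.CoprodI.induction_on with
    | one => simp
    | of i m =>
      refine (Set.finite_singleton i).subset ?_
      intro k hk
      by_contra hki
      apply hk
      simp only [pr, Monoid.CoprodI.lift_of]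
      rw [if_neg (fun h => hki h.symm)]
      rfl
    | mul x y hx hy =>
      refine (hx.union hy).subset ?_
      intro k hk
      by_contra hcon
      simp only [Set.mem_union, Set.mem_ofPred_eq, not_or, not_not] at hcon
      apply hk
      rw [map_mul, hcon.1, hcon.2, one_mul]
  have hU : (⋃ x ∈ S, {k | pr k x ≠ 1}).Finite := hSf.biUnion fun x _ => hfin x
  obtain ⟨k, hk⟩ := hU.exists_notMem
  have htriv : ∀ x, pr k x = 1 := by
    intro x
    have hx : x ∈ Subgroup.closure S := by rw [hSc]; trivial
    have : Subgroup.closure S ≤ (pr k).ker := by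
      rw [Subgroup.closure_le]
      intro s hs
      by_contra hcon
      exact hk (Set.mem_biUnion hs hcon)
    exact this hx
  have := htriv (Monoid.CoprodI.of (i := k) ⟨c k, Subgroup.mem_zpowers _⟩)
  simp only [pr, Monoid.CoprodI.lift_of, if_true] at this
  exact hne k this

theorem not_sl_of_triple {G : Type*} [Group G] (t1 t2 t3 : G) (h3 : t3 * t3 = 1)
    (N1 N2 N3 : Set G) (hN3 : N3.Nonempty)
    (d12 : ∀ x, x ∈ N1 → x ∉ N2) (d13 : ∀ x, x ∈ N1 → x ∉ N3) (d23 : ∀ x, x ∈ N2 → x ∉ N3)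
    (p1 : ∀ x, x ∉ N1 → t1 * x ∈ N1) (p2 : ∀ x, x ∉ N2 → t2 * x ∈ N2)
    (p3 : ∀ x, x ∉ N3 → t3 * x ∈ N3) : ¬ Sl G := by
  have hstep : ∀ y, y ∉ N2 → (t1 * t2) * y ∈ N1 := by
    intro y hy
    rw [mul_assoc]
    exact p1 _ fun h => d12 _ h (p2 _ hy)
  have hpow : ∀ n y, y ∈ N3 → (t1 * t2) ^ (n + 1) * y ∈ N1 := by
    intro n y hy
    induction n with
    | zero => rw [zero_add, pow_one]; exact hstep y fun h => d23 _ h hy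
    | succ n ih =>
      rw [pow_succ', mul_assoc]
      exact hstep _ (d12 _ ih)
  refine not_sl_of_pingpong (fun k => (t1 * t2) ^ k * t3 * ((t1 * t2) ^ k)⁻¹) ?_
    (fun k => {x | ((t1 * t2) ^ k)⁻¹ * x ∈ N3}) ?_ ?_ ?_
  · intro k
    calc (t1 * t2) ^ k * t3 * ((t1 * t2) ^ k)⁻¹ * ((t1 * t2) ^ k * t3 * ((t1 * t2) ^ k)⁻¹)
        = (t1 * t2) ^ k * (t3 * t3) * ((t1 * t2) ^ k)⁻¹ := by group
      _ = 1 := by rw [h3]; group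
  · intro k
    obtain ⟨y, hy⟩ := hN3
    refine ⟨(t1 * t2) ^ k * y, ?_⟩
    change _ ∈ N3
    rwa [inv_mul_cancel_left]
  · intro i j hij x hi hj
    obtain ⟨n, rfl⟩ := Nat.exists_eq_add_of_lt hij
    have := hpow n _ hj
    refine d13 _ this ?_
    have hi' : ((t1 * t2) ^ i)⁻¹ * x ∈ N3 := hi
    convert hi' using 1
    rw [add_assoc, pow_add _ i, mul_inv_rev, mul_assoc, mul_inv_cancel_left]
  · intro k x hx
    change _ ∈ N3
    have := p3 _ hx
    convert this using 1
    group

section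

variable {B : Type*} [Fintype B] [DecidableEq B] {M : CoxeterMatrix B}

theorem no_facing_pos (hS : Sl M.Group) {β γ δ : B → ℝ} (hβ : IsRoot M β) (hγ : IsRoot M γ)
    (hδ : IsRoot M δ) (h1 : bf M β γ ≤ -1) (h2 : bf M β δ ≤ -1) (h3 : bf M γ δ ≤ -1)
    (pβ : 0 ≤ β) (pγ : 0 ≤ γ) : False := by
  have key : ∀ {η : B → ℝ}, IsRoot M η → ∃ t : M.Group, t * t = 1 ∧
      (∀ x, x ∉ {x : M.Group | rep M x⁻¹ η ≤ 0} → t * x ∈ {x : M.Group | rep M x⁻¹ η ≤ 0}) ∧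
      (∀ x : M.Group, rep M (t * x)⁻¹ η = - rep M x⁻¹ η) := by
    intro η hη
    obtain ⟨t, ht, h⟩ := hη.exists_refl
    have hti : t⁻¹ = t := inv_eq_of_mul_eq_one_right ht
    have hh : ∀ x : M.Group, rep M (t * x)⁻¹ η = - rep M x⁻¹ η := by
      intro x
      rw [mul_inv_rev, rep_mul, hti, h, hη.bf_self, ← map_neg]
      congr 1
      module
    refine ⟨t, ht, ?_, hh⟩
    intro x hx
    change rep M (t * x)⁻¹ η ≤ 0
    rw [hh]
    exact neg_nonpos.2 ((hη.rep _).not_nonpos.1 hx)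
  obtain ⟨t1, -, p1, q1⟩ := key hβ
  obtain ⟨t2, -, p2, q2⟩ := key hγ
  obtain ⟨t3, i3, p3, q3⟩ := key hδ
  -- existence of a negative and a positive place
  have exneg : ∀ {η : B → ℝ} {t : M.Group}, IsRoot M η →
      (∀ x : M.Group, rep M (t * x)⁻¹ η = - rep M x⁻¹ η) →
      (∃ x : M.Group, rep M x⁻¹ η ≤ 0) ∧ ∃ x : M.Group, 0 ≤ rep M x⁻¹ η := by
    intro η t hη h
    rcases (hη.rep 1⁻¹).pos_or_neg with h1 | h1
    · exact ⟨⟨t * 1, by rw [h]; exact neg_nonpos.2 h1⟩, 1, h1⟩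
    · exact ⟨⟨1, h1⟩, t * 1, by rw [h]; exact neg_nonneg.2 h1⟩
  have d12 : ∀ x : M.Group, rep M x⁻¹ β ≤ 0 → ¬ rep M x⁻¹ γ ≤ 0 := by
    intro x hx hx'
    exact noncross hβ hγ h1 1 x⁻¹ (by rwa [rep_one]) (by rwa [rep_one]) hx hx'
  have gen : ∀ {η ξ : B → ℝ}, IsRoot M η → IsRoot M ξ →
      bf M η δ ≤ -1 → bf M ξ δ ≤ -1 → (∃ x : M.Group, rep M x⁻¹ ξ ≤ 0) →
      (∀ x : M.Group, rep M x⁻¹ η ≤ 0 → ¬ rep M x⁻¹ ξ ≤ 0) →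
      ∀ x : M.Group, rep M x⁻¹ η ≤ 0 → ¬ rep M x⁻¹ δ ≤ 0 := by
    intro η ξ hη hξ e1 e2 ⟨y, hy⟩ hd x hx hx'
    have hno : ∀ z : M.Group, 0 ≤ rep M z⁻¹ η → 0 ≤ rep M z⁻¹ δ → False :=
      fun z a b => noncross hη hδ e1 z⁻¹ x⁻¹ a b hx hx'
    have hyη : 0 ≤ rep M y⁻¹ η := (hη.rep _).not_nonpos.1 fun h => hd y h hy
    have hyδ : rep M y⁻¹ δ ≤ 0 := (hδ.rep _).not_nonneg.1 fun h => hno y hyη h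
    obtain ⟨z, hz⟩ := (exneg hδ q3).2
    have hzη : rep M z⁻¹ η ≤ 0 := (hη.rep _).not_nonneg.1 fun h => hno z h hz
    have hzξ : 0 ≤ rep M z⁻¹ ξ := (hξ.rep _).not_nonpos.1 (hd z hzη)
    exact noncross hξ hδ e2 z⁻¹ y⁻¹ hzξ hz hy hyδ
  exact not_sl_of_triple t1 t2 t3 i3 {x | rep M x⁻¹ β ≤ 0} {x | rep M x⁻¹ γ ≤ 0}
    {x | rep M x⁻¹ δ ≤ 0} (exneg hδ q3).1 d12
    (gen hβ hγ h2 h3 (exneg hγ q2).1 d12)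
    (gen hγ hβ h3 h2 (exneg hβ q1).1 (fun x a b => d12 x b a)) p1 p2 p3 hS

theorem no_facing (hS : Sl M.Group) {β γ δ : B → ℝ} (hβ : IsRoot M β) (hγ : IsRoot M γ)
    (hδ : IsRoot M δ) (h1 : bf M β γ ≤ -1) (h2 : bf M β δ ≤ -1) (h3 : bf M γ δ ≤ -1) : False := by
  have n : ∀ x y, bf M (-x) (-y) = bf M x y := by intro x y; simp
  have h1' := h1; have h2' := h2; have h3' := h3
  rw [bf_symm] at h1' h2' h3'
  have hpp : ∀ {β γ δ : B → ℝ}, IsRoot M β → IsRoot M γ → IsRoot M δ → bf M β γ ≤ -1 →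
      bf M β δ ≤ -1 → bf M γ δ ≤ -1 → β ≤ 0 → γ ≤ 0 → False := by
    intro β γ δ hβ hγ hδ h1 h2 h3 pβ pγ
    exact no_facing_pos hS hβ.neg hγ.neg hδ.neg (by rwa [n]) (by rwa [n]) (by rwa [n])
      (neg_nonneg.2 pβ) (neg_nonneg.2 pγ)
  rcases hβ.pos_or_neg with a | a <;> rcases hγ.pos_or_neg with b | b
  · exact no_facing_pos hS hβ hγ hδ h1 h2 h3 a b
  · rcases hδ.pos_or_neg with c | c
    · exact no_facing_pos hS hβ hδ hγ h2 h1 h3' a c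
    · exact hpp hγ hδ hβ h3 h1' h2' b c
  · rcases hδ.pos_or_neg with c | c
    · exact no_facing_pos hS hγ hδ hβ h3 h1' h2' b c
    · exact hpp hβ hδ hγ h2 h1 h3' a c
  · exact hpp hβ hγ hδ h1 h2 h3 a b

end

end CoxCoh

namespace CoxCoh

open Real

section

variable {B : Type*} [Fintype B] [DecidableEq B] {M : CoxeterMatrix B}

/-- The set of roots `± W0 ρ` on the same side as `ρ`. -/
def Om (M : CoxeterMatrix B) (ρ : B → ℝ) : Set (B → ℝ) :=
  {β | (∃ g ∈ W0 M, β = rep M g ρ ∨ β = -rep M g ρ) ∧ 1 ≤ bf M β ρ}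

theorem Om_root {ρ : B → ℝ} (hρ : IsRoot M ρ) {β : B → ℝ} (h : β ∈ Om M ρ) : IsRoot M β := by
  obtain ⟨⟨g, -, rfl | rfl⟩, -⟩ := h
  · exact hρ.rep g
  · exact (hρ.rep g).neg

theorem orb_abs {ρ : B → ℝ} (hρ : IsRoot M ρ) {β γ : B → ℝ}
    (hβ : ∃ g ∈ W0 M, β = rep M g ρ ∨ β = -rep M g ρ)
    (hγ : ∃ g ∈ W0 M, γ = rep M g ρ ∨ γ = -rep M g ρ) : 1 ≤ |bf M β γ| := by
  obtain ⟨g, hg, hb⟩ := hβ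
  obtain ⟨h, hh, hc⟩ := hγ
  have h1 := W0_abs M ((W0 M).mul_mem ((W0 M).inv_mem hh) hg) hρ
  rw [rep_mul, ← rep_bf M h, rep_rep_inv] at h1
  rcases hb with rfl | rfl <;> rcases hc with rfl | rfl <;> simpa using h1

theorem orb_root {ρ : B → ℝ} (hρ : IsRoot M ρ) {β : B → ℝ}
    (hβ : ∃ g ∈ W0 M, β = rep M g ρ ∨ β = -rep M g ρ) : IsRoot M β := by
  obtain ⟨g, -, rfl | rfl⟩ := hβ
  · exact hρ.rep g
  · exact (hρ.rep g).neg

/-- transitivity of being on the same side -/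
theorem orb_trans (hS : Sl M.Group) {ρ : B → ℝ} (hρ : IsRoot M ρ) {β γ δ : B → ℝ}
    (hβ : ∃ g ∈ W0 M, β = rep M g ρ ∨ β = -rep M g ρ)
    (hγ : ∃ g ∈ W0 M, γ = rep M g ρ ∨ γ = -rep M g ρ)
    (hδ : ∃ g ∈ W0 M, δ = rep M g ρ ∨ δ = -rep M g ρ)
    (h1 : 1 ≤ bf M β γ) (h2 : 1 ≤ bf M γ δ) : 1 ≤ bf M β δ := by
  rcases le_abs.1 (orb_abs hρ hβ hδ) with h | h
  · exact h
  · exfalso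
    refine no_facing hS (orb_root hρ hβ) (orb_root hρ hγ).neg (orb_root hρ hδ) ?_ (by linarith) ?_
    · rw [map_neg]; linarith
    · rw [map_neg, LinearMap.neg_apply]; linarith

/-- other transitivity -/
theorem orb_trans' (hS : Sl M.Group) {ρ : B → ℝ} (hρ : IsRoot M ρ) {β γ δ : B → ℝ}
    (hβ : ∃ g ∈ W0 M, β = rep M g ρ ∨ β = -rep M g ρ)
    (hγ : ∃ g ∈ W0 M, γ = rep M g ρ ∨ γ = -rep M g ρ)
    (hδ : ∃ g ∈ W0 M, δ = rep M g ρ ∨ δ = -rep M g ρ)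
    (h1 : bf M β γ ≤ -1) (h2 : bf M γ δ ≤ -1) : 1 ≤ bf M β δ := by
  rcases le_abs.1 (orb_abs hρ hβ hδ) with h | h
  · exact h
  · exact (no_facing hS (orb_root hρ hβ) (orb_root hρ hγ) (orb_root hρ hδ) h1 (by linarith) h2).elim

theorem orb_self {ρ : B → ℝ} : ∃ g ∈ W0 M, ρ = rep M g ρ ∨ ρ = -rep M g ρ :=
  ⟨1, (W0 M).one_mem, Or.inl (rep_one M ρ).symm⟩

theorem orb_mem {ρ : B → ℝ} {g : M.Group} (hg : g ∈ W0 M) :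
    ∃ h ∈ W0 M, rep M g ρ = rep M h ρ ∨ rep M g ρ = -rep M h ρ := ⟨g, hg, Or.inl rfl⟩

theorem orb_rep {ρ : B → ℝ} {β : B → ℝ} (hβ : ∃ g ∈ W0 M, β = rep M g ρ ∨ β = -rep M g ρ)
    {g : M.Group} (hg : g ∈ W0 M) :
    ∃ h ∈ W0 M, rep M g β = rep M h ρ ∨ rep M g β = -rep M h ρ := by
  obtain ⟨h, hh, h'⟩ := hβ
  refine ⟨g * h, (W0 M).mul_mem hg hh, ?_⟩
  rcases h' with rfl | rfl
  · left; rw [rep_mul]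
  · right; rw [rep_mul, map_neg]

/-- The stabiliser of the side of `ρ`. -/
def W1 (hS : Sl M.Group) {ρ : B → ℝ} (hρ : IsRoot M ρ) : Subgroup M.Group where
  carrier := {g | g ∈ W0 M ∧ 1 ≤ bf M (rep M g ρ) ρ}
  one_mem' := ⟨(W0 M).one_mem, by rw [rep_one, hρ.bf_self]⟩
  mul_mem' := by
    rintro g h ⟨hg, hg'⟩ ⟨hh, hh'⟩
    refine ⟨(W0 M).mul_mem hg hh, ?_⟩
    refine orb_trans hS hρ (orb_mem ((W0 M).mul_mem hg hh)) (orb_mem hg) orb_self ?_ hg'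
    rwa [rep_mul, rep_bf]
  inv_mem' := by
    rintro g ⟨hg, hg'⟩
    refine ⟨(W0 M).inv_mem hg, ?_⟩
    rwa [← rep_bf M g, rep_rep_inv, bf_symm]

theorem W1_finiteIndex (hS : Sl M.Group) {ρ : B → ℝ} (hρ : IsRoot M ρ) :
    (W1 hS hρ).FiniteIndex := by
  classical
  have : Finite (M.Group ⧸ W0 M) := inferInstance
  refine finiteIndex_of_map _ (fun g => ((g : M.Group ⧸ W0 M),
    decide (1 ≤ bf M (rep M (((g : M.Group ⧸ W0 M).out)⁻¹ * g) ρ) ρ))) ?_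
  intro x y hxy
  rw [Prod.mk.injEq] at hxy
  obtain ⟨h1, h2⟩ := hxy
  rw [decide_eq_decide, ← h1] at h2
  set d := (x : M.Group ⧸ W0 M).out with hd
  have hx : d⁻¹ * x ∈ W0 M := by
    rw [← QuotientGroup.eq, hd, QuotientGroup.out_eq']
  have hy : d⁻¹ * y ∈ W0 M := by
    rw [← QuotientGroup.eq, hd, QuotientGroup.out_eq', h1]
  have hxy : x⁻¹ * y = (d⁻¹ * x)⁻¹ * (d⁻¹ * y) := by group
  rw [hxy]
  set a := d⁻¹ * x
  set b := d⁻¹ * y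
  refine ⟨(W0 M).mul_mem ((W0 M).inv_mem hx) hy, ?_⟩
  rw [← rep_bf M a, ← rep_mul, mul_inv_cancel_left]
  by_cases hp : 1 ≤ bf M (rep M a ρ) ρ
  · refine orb_trans hS hρ (orb_mem hy) orb_self (orb_mem hx) (h2.1 hp) ?_
    rwa [bf_symm]
  · have hq : ¬ 1 ≤ bf M (rep M b ρ) ρ := fun h => hp (h2.2 h)
    have e1 := (le_abs.1 (W0_abs M hx hρ)).resolve_left hp
    have e2 := (le_abs.1 (W0_abs M hy hρ)).resolve_left hq
    refine orb_trans' hS hρ (orb_mem hy) orb_self (orb_mem hx) (by linarith) ?_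
    rw [bf_symm]; linarith

theorem Om_pair (hS : Sl M.Group) {ρ : B → ℝ} (hρ : IsRoot M ρ) {β γ : B → ℝ} (hβ : β ∈ Om M ρ)
    (hγ : γ ∈ Om M ρ) : 1 ≤ bf M β γ := by
  refine orb_trans hS hρ hβ.1 orb_self hγ.1 hβ.2 ?_
  rw [bf_symm]; exact hγ.2

theorem Om_rep (hS : Sl M.Group) {ρ : B → ℝ} (hρ : IsRoot M ρ) {g : M.Group} (hg : g ∈ W1 hS hρ)
    {β : B → ℝ} (hβ : β ∈ Om M ρ) : rep M g β ∈ Om M ρ := by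
  refine ⟨orb_rep hβ.1 hg.1, ?_⟩
  refine orb_trans hS hρ (orb_rep hβ.1 hg.1) (orb_mem hg.1) orb_self ?_ hg.2
  rw [rep_bf]; exact hβ.2

open Classical in
/-- sign indicator -/
noncomputable def ng (β : B → ℝ) : ℤ := if β ≤ 0 then 1 else 0

theorem ng_supp (w : M.Group) :
    {β : B → ℝ | IsRoot M β ∧ ng (rep M w β) - ng β ≠ 0}.Finite := by
  refine ((inv_finite w).union (((inv_finite w).image fun β => -β))).subset ?_
  rintro β ⟨hβ, hne⟩
  by_cases h1 : β ≤ 0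
  · right
    refine ⟨-β, ⟨hβ.neg, neg_nonneg.2 h1, ?_⟩, neg_neg β⟩
    rw [map_neg, neg_nonpos, ← (hβ.rep w).not_nonpos]
    intro h2
    apply hne
    simp [ng, h1, h2]
  · left
    refine ⟨hβ, hβ.not_nonpos.1 h1, ?_⟩
    by_contra h2
    apply hne
    simp [ng, h1, h2]

/-- the counting function -/
noncomputable def ff (M : CoxeterMatrix B) (ρ : B → ℝ) (w : M.Group) : ℤ :=
  ∑ᶠ β ∈ Om M ρ, (ng (rep M w⁻¹ β) - ng β)

theorem ff_supp {ρ : B → ℝ} (hρ : IsRoot M ρ) (w : M.Group) :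
    (Om M ρ ∩ Function.support fun β => ng (rep M w β) - ng β).Finite :=
  (ng_supp w).subset fun _ hβ => ⟨Om_root hρ hβ.1, hβ.2⟩

theorem ff_mul (hS : Sl M.Group) {ρ : B → ℝ} (hρ : IsRoot M ρ) {v : M.Group} (hv : v ∈ W1 hS hρ)
    (w : M.Group) : ff M ρ (v * w) = ff M ρ v + ff M ρ w := by
  have hbij : Set.BijOn (fun β => rep M v⁻¹ β) (Om M ρ) (Om M ρ) := by
    refine ⟨fun β hβ => Om_rep hS hρ ((W1 hS hρ).inv_mem hv) hβ, ?_, ?_⟩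
    · exact (rep M v⁻¹).injective.injOn
    · intro β hβ
      exact ⟨rep M v β, Om_rep hS hρ hv hβ, rep_inv_rep M v β⟩
  have h1 : ff M ρ w = ∑ᶠ β ∈ Om M ρ, (ng (rep M (v * w)⁻¹ β) - ng (rep M v⁻¹ β)) := by
    rw [ff]
    symm
    refine finsum_mem_eq_of_bijOn (fun β => rep M v⁻¹ β) hbij ?_
    intro β _
    simp only [mul_inv_rev, rep_mul]
  have h2 : (Om M ρ ∩ Function.support fun β =>
      ng (rep M (v * w)⁻¹ β) - ng (rep M v⁻¹ β)).Finite := by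
    refine ((ff_supp hρ (v * w)⁻¹).union (ff_supp hρ v⁻¹)).subset ?_
    rintro β ⟨h1, h2⟩
    by_contra hcon
    simp only [Set.mem_union, Set.mem_inter_iff, h1, true_and, Function.mem_support, not_or,
      not_not] at hcon
    apply h2
    dsimp only
    linarith [hcon.1, hcon.2]
  rw [h1, ff, ff, ← finsum_mem_add_distrib' (ff_supp hρ v⁻¹) h2]
  refine finsum_mem_congr rfl fun β _ => ?_
  ring

theorem finsum_mem_zero_of_nonneg {α : Type*} {s : Set α} {f : α → ℤ}
    (hf : (s ∩ Function.support f).Finite) (hs : ∑ᶠ a ∈ s, f a = 0)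
    (hp : ∀ a ∈ s, 0 ≤ f a) : ∀ a ∈ s, f a = 0 := by
  intro a ha
  by_contra hne
  rw [← finsum_mem_inter_support, finsum_mem_eq_finite_toFinset_sum _ hf] at hs
  rw [Finset.sum_eq_zero_iff_of_nonneg] at hs
  · exact hne (hs a (by simpa using ⟨ha, hne⟩))
  · intro b hb
    exact hp b (by simpa using (hf.mem_toFinset.1 hb).1)

theorem finsum_mem_zero_of_nonpos {α : Type*} {s : Set α} {f : α → ℤ}
    (hf : (s ∩ Function.support f).Finite) (hs : ∑ᶠ a ∈ s, f a = 0)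
    (hp : ∀ a ∈ s, f a ≤ 0) : ∀ a ∈ s, f a = 0 := by
  intro a ha
  by_contra hne
  rw [← finsum_mem_inter_support, finsum_mem_eq_finite_toFinset_sum _ hf] at hs
  rw [Finset.sum_eq_zero_iff_of_nonpos] at hs
  · exact hne (hs a (by simpa using ⟨ha, hne⟩))
  · intro b hb
    exact hp b (by simpa using (hf.mem_toFinset.1 hb).1)

theorem ff_zero (hS : Sl M.Group) {ρ : B → ℝ} (hρ : IsRoot M ρ) {u : M.Group}
    (hu : ff M ρ u = 0) {β : B → ℝ} (hβ : β ∈ Om M ρ) : ng (rep M u⁻¹ β) - ng β = 0 := by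
  have hval : ∀ β : B → ℝ, IsRoot M β → (0 < ng (rep M u⁻¹ β) - ng β → 0 ≤ β ∧ rep M u⁻¹ β ≤ 0) ∧
      (ng (rep M u⁻¹ β) - ng β < 0 → β ≤ 0 ∧ 0 ≤ rep M u⁻¹ β) := by
    intro β hβ
    rw [← hβ.not_nonpos, ← (hβ.rep u⁻¹).not_nonpos]
    generalize rep M u⁻¹ β = δ
    by_cases h1 : β ≤ 0 <;> by_cases h2 : δ ≤ 0 <;> simp [ng, h1, h2]
  have hno : ∀ β ∈ Om M ρ, ∀ γ ∈ Om M ρ, 0 < ng (rep M u⁻¹ β) - ng β →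
      ng (rep M u⁻¹ γ) - ng γ < 0 → False := by
    intro β hβ γ hγ h1 h2
    have rβ := Om_root hρ hβ
    have rγ := Om_root hρ hγ
    obtain ⟨a1, a2⟩ := (hval β rβ).1 h1
    obtain ⟨b1, b2⟩ := (hval γ rγ).2 h2
    have hB := Om_pair hS hρ hβ hγ
    refine noncross rβ rγ.neg (by rw [map_neg]; linarith) 1 u⁻¹ (by rwa [rep_one])
      (by rw [rep_one]; exact neg_nonneg.2 b1) a2 (by rw [map_neg]; exact neg_nonpos.2 b2)
  by_cases hpos : ∃ β ∈ Om M ρ, 0 < ng (rep M u⁻¹ β) - ng β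
  · obtain ⟨γ, hγ, h⟩ := hpos
    refine finsum_mem_zero_of_nonneg (ff_supp hρ u⁻¹) hu (fun δ hδ => ?_) β hβ
    by_contra hcon
    exact hno γ hγ δ hδ h (not_le.1 hcon)
  · push Not at hpos
    exact finsum_mem_zero_of_nonpos (ff_supp hρ u⁻¹) hu hpos β hβ

theorem allFP_of_sl (hS : Sl M.Group) : AllFP M.Group := by
  have : Finite (M.Group ⧸ W0 M) := inferInstance
  let J := (M.Group ⧸ W0 M) × B
  let ρ : J → B → ℝ := fun j => rep M (j.1.out)⁻¹ (al j.2)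
  have hρ : ∀ j, IsRoot M (ρ j) := fun j => (isRoot_al j.2).rep _
  let N : Subgroup M.Group := ⨅ j, W1 hS (hρ j)
  have : ∀ j, (W1 hS (hρ j)).FiniteIndex := fun j => W1_finiteIndex hS (hρ j)
  have : N.FiniteIndex := Subgroup.finiteIndex_iInf this
  have hN : ∀ g ∈ N, ∀ j, g ∈ W1 hS (hρ j) := fun g hg j => (Subgroup.mem_iInf.1 hg) j
  refine AllFP.of_finiteIndex N ?_
  obtain ⟨k, ⟨e⟩⟩ := Finite.exists_equiv_fin J
  let F : N →* (Fin k → Multiplicative ℤ) := MonoidHom.mk'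
    (fun g i => Multiplicative.ofAdd (ff M (ρ (e.symm i)) (g : M.Group))) (by
      intro a b
      funext i
      simp only [Subgroup.coe_mul, Pi.mul_apply]
      rw [ff_mul hS (hρ _) (hN a a.2 _), ofAdd_add])
  refine AllFP.of_injective (AllFP.pi_int k) F ?_
  rw [injective_iff_map_eq_one]
  rintro ⟨u, hu⟩ h
  apply Subtype.ext
  change u = 1
  have hff : ∀ j, ff M (ρ j) u = 0 := by
    intro j
    have := congrFun h (e j)
    have h2 : Multiplicative.ofAdd (ff M (ρ (e.symm (e j))) u) = 1 := this
    rw [e.symm_apply_apply] at h2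
    exact h2
  rw [← inv_eq_one]
  apply eq_one_of_inv_empty
  intro β hβ hpos
  -- β lies in ± Om for some j
  obtain ⟨w, i, rfl⟩ := hβ
  set j : J := ((w⁻¹ : M.Group), i) with hj
  have hg : w * ((w⁻¹ : M.Group) : M.Group ⧸ W0 M).out ∈ W0 M := by
    have : (w⁻¹)⁻¹ * ((w⁻¹ : M.Group) : M.Group ⧸ W0 M).out ∈ W0 M := by
      rw [← QuotientGroup.eq, QuotientGroup.out_eq']
    rwa [inv_inv] at this
  have hw : rep M w (al i) = rep M (w * ((w⁻¹ : M.Group) : M.Group ⧸ W0 M).out) (ρ j) := by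
    simp only [ρ, hj]
    rw [← rep_mul, mul_inv_cancel_right]
  have hroot := (isRoot_al (M := M) i).rep w
  by_contra hcon
  have hneg := (hroot.rep u⁻¹).not_nonneg.1 hcon
  rcases le_abs.1 (W0_abs M hg (hρ j)) with hc | hc
  · have hmem : rep M w (al i) ∈ Om M (ρ j) := ⟨⟨_, hg, Or.inl hw⟩, by rw [hw]; exact hc⟩
    have := ff_zero hS (hρ j) (hff j) hmem
    have h1 : ¬ rep M w (al i) ≤ 0 := hroot.not_nonpos.2 hpos
    rw [ng, ng, if_pos hneg, if_neg h1] at this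
    norm_num at this
  · have hmem : -rep M w (al i) ∈ Om M (ρ j) :=
      ⟨⟨_, hg, Or.inr (by rw [hw])⟩, by rw [hw, map_neg, LinearMap.neg_apply]; exact hc⟩
    have := ff_zero hS (hρ j) (hff j) hmem
    have h1 : ¬ 0 ≤ rep M u⁻¹ (rep M w (al i)) := hcon
    have h2 : ¬ rep M u⁻¹ (-rep M w (al i)) ≤ 0 := by
      rw [map_neg, neg_nonpos]; exact h1
    rw [ng, ng, if_neg h2, if_pos (neg_nonpos.2 hpos)] at this
    norm_num at this

end

end CoxCoh

namespace CoxCoh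

section Graph

variable {V : Type*}

theorem reach_closed {G : SimpleGraph V} {a b : V} (h : G.Reachable a b) (A : Set V) (ha : a ∈ A)
    (hA : ∀ u ∈ A, ∀ v, G.Adj u v → v ∈ A) : b ∈ A := by
  obtain ⟨p⟩ := h
  induction p with
  | nil => exact ha
  | cons hadj p ih => exact ih (hA _ ha _ hadj)

theorem exists_geodesic {K : SimpleGraph V} {x y : V} (h : K.Reachable x y) :
    ∃ (n : ℕ) (p : ℕ → V), p 0 = x ∧ p n = y ∧ (∀ i < n, K.Adj (p i) (p (i + 1))) ∧
      (∀ i ≤ n, ∀ j ≤ n, i < j → p i ≠ p j) ∧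
      (∀ i ≤ n, ∀ j ≤ n, i + 1 < j → ¬ K.Adj (p i) (p j)) := by
  obtain ⟨w, hw⟩ := h.exists_walk_length_eq_dist
  have hd : ∀ i ≤ w.length, K.dist x (w.getVert i) = i := by
    intro i hi
    have h1 := SimpleGraph.dist_le (w.take i)
    rw [SimpleGraph.Walk.take_length] at h1
    have h2 := SimpleGraph.dist_le (w.drop i)
    rw [SimpleGraph.Walk.drop_length] at h2
    have h3 := SimpleGraph.Reachable.dist_triangle_left (w.take i).reachable y
    omega
  refine ⟨w.length, w.getVert, by simp, by simp, fun i hi => w.adj_getVert_succ hi, ?_, ?_⟩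
  · intro i hi j hj hij he
    have := hd i hi
    rw [he, hd j hj] at this
    omega
  · intro i hi j hj hij hadj
    have h3 := SimpleGraph.Reachable.dist_triangle_left (w.take i).reachable (w.getVert j)
    rw [hd i hi, hd j hj, SimpleGraph.dist_eq_one_iff_adj.2 hadj] at h3
    omega

/-- The graph with edges incident to `S` removed. -/
def cut (Γ : SimpleGraph V) (S : Set V) : SimpleGraph V where
  Adj u v := Γ.Adj u v ∧ u ∉ S ∧ v ∉ S
  symm := ⟨fun _ _ h => ⟨h.1.symm, h.2.2, h.2.1⟩⟩
  loopless := ⟨fun _ h => h.1.ne rfl⟩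

/-- The graph component. -/
def comp (Γ : SimpleGraph V) (S : Set V) (a : V) : Set V := {v | (cut Γ S).Reachable a v}

theorem comp_disj {Γ : SimpleGraph V} {S : Set V} {a v : V} (ha : a ∉ S) (hv : v ∈ comp Γ S a) :
    v ∉ S :=
  reach_closed (A := Sᶜ) hv ha fun _ _ _ h => h.2.2

theorem comp_adj {Γ : SimpleGraph V} {S : Set V} {a u v : V} (ha : a ∉ S) (hu : u ∈ comp Γ S a)
    (h : Γ.Adj u v) (hv : v ∉ S) : v ∈ comp Γ S a :=
  SimpleGraph.Reachable.trans hu (SimpleGraph.Adj.reachable ⟨h, comp_disj ha hu, hv⟩)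

theorem exists_path_comp {Γ : SimpleGraph V} {S : Set V} {a x y u v : V} (ha : a ∉ S)
    (hxS : x ∈ S) (hyS : y ∈ S) (hxy : x ≠ y) (hna : ¬ Γ.Adj x y)
    (hu : u ∈ comp Γ S a) (hux : Γ.Adj u x) (hv : v ∈ comp Γ S a) (hvy : Γ.Adj v y) :
    ∃ (n : ℕ) (p : ℕ → V), 2 ≤ n ∧ p 0 = x ∧ p n = y ∧ (∀ i, 0 < i → i < n → p i ∈ comp Γ S a) ∧
      (∀ i < n, Γ.Adj (p i) (p (i + 1))) ∧
      (∀ i ≤ n, ∀ j ≤ n, i < j → p i ≠ p j) ∧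
      (∀ i ≤ n, ∀ j ≤ n, i + 1 < j → ¬ Γ.Adj (p i) (p j)) := by
  set A := comp Γ S a with hA
  let K : SimpleGraph V :=
    { Adj := fun s t => Γ.Adj s t ∧ (s ∈ A ∨ s = x ∨ s = y) ∧ (t ∈ A ∨ t = x ∨ t = y)
      symm := ⟨fun _ _ h => ⟨h.1.symm, h.2.2, h.2.1⟩⟩
      loopless := ⟨fun _ h => h.1.ne rfl⟩ }
  have hK : ∀ t ∈ A, K.Reachable a t := by
    intro t ht
    have : t ∈ {t | t ∈ A ∧ K.Reachable a t} := by
      refine reach_closed ht _ ⟨SimpleGraph.Reachable.refl a, SimpleGraph.Reachable.refl a⟩ ?_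
      rintro s ⟨hs, hr⟩ t hst
      have htA : t ∈ A := SimpleGraph.Reachable.trans hs hst.reachable
      exact ⟨htA, hr.trans (SimpleGraph.Adj.reachable ⟨hst.1, Or.inl hs, Or.inl htA⟩)⟩
    exact this.2
  have hr : K.Reachable x y := by
    have h1 : K.Adj u x := ⟨hux, Or.inl hu, Or.inr (Or.inl rfl)⟩
    have h2 : K.Adj v y := ⟨hvy, Or.inl hv, Or.inr (Or.inr rfl)⟩
    exact (h1.symm.reachable.trans (hK u hu).symm).trans ((hK v hv).trans h2.reachable)
  obtain ⟨n, p, h0, hn, hadj, hne, hnadj⟩ := exists_geodesic hr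
  have hn2 : 2 ≤ n := by
    by_contra hcon
    have : n = 0 ∨ n = 1 := by omega
    rcases this with rfl | rfl
    · exact hxy (h0.symm.trans hn)
    · have := hadj 0 (by omega)
      rw [h0, hn] at this
      exact hna this.1
  have hmem : ∀ i ≤ n, p i ∈ A ∨ p i = x ∨ p i = y := by
    intro i hi
    rcases hi.lt_or_eq with h | rfl
    · exact (hadj i h).2.1
    · exact Or.inr (Or.inr hn)
  refine ⟨n, p, hn2, h0, hn, ?_, fun i hi => (hadj i hi).1, hne, ?_⟩
  · intro i h1 h2
    rcases hmem i h2.le with h | h | h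
    · exact h
    · exact absurd (h0.trans h.symm) (hne 0 (by omega) i h2.le h1)
    · exact absurd (h.trans hn.symm) (hne i h2.le n le_rfl h2)
  · intro i hi j hj hij h
    exact hnadj i hi j hj hij ⟨h, hmem i hi, hmem j hj⟩

theorem cycle_emb {Γ : SimpleGraph V} {N : ℕ} (f : ℕ → V)
    (hinj : ∀ i j, i < j → j < N → f i ≠ f j)
    (hadj : ∀ i j, i < j → j < N → (Γ.Adj (f i) (f j) ↔ (j = i + 1 ∨ (i = 0 ∧ j + 1 = N)))) :
    Nonempty (SimpleGraph.cycleGraph N ↪g Γ) := by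
  have hc : ∀ i j : Fin N, (i : ℕ) < j → ((SimpleGraph.cycleGraph N).Adj i j ↔
      ((j : ℕ) = i + 1 ∨ ((i : ℕ) = 0 ∧ (j : ℕ) + 1 = N))) := by
    intro i j hij
    rw [SimpleGraph.cycleGraph_adj', Fin.sub_val_of_le (Fin.le_def.2 hij.le), Fin.val_sub]
    have : N - (j : ℕ) + i < N := by omega
    rw [Nat.mod_eq_of_lt this]
    omega
  refine ⟨⟨⟨fun i => f i, ?_⟩, ?_⟩⟩
  · intro i j h
    dsimp only at h
    rcases lt_trichotomy (i : ℕ) j with hl | he | hl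
    · exact absurd h (hinj _ _ hl j.2)
    · exact Fin.ext he
    · exact absurd h.symm (hinj _ _ hl i.2)
  · intro i j
    change Γ.Adj (f i) (f j) ↔ _
    rcases lt_trichotomy (i : ℕ) j with hl | he | hl
    · rw [hadj _ _ hl j.2, hc _ _ hl]
    · have : i = j := Fin.ext he
      subst this
      simp
    · rw [SimpleGraph.adj_comm, SimpleGraph.adj_comm _ i j, hadj _ _ hl i.2, hc _ _ hl]

theorem comp_edge {Γ : SimpleGraph V} {S : Set V} {a x b : V} (hb : b ∉ S)
    (hx : (cut Γ (S \ {x})).Reachable a b) (hab : ¬ (cut Γ S).Reachable a b) (ha : a ∉ S) :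
    ∃ u ∈ comp Γ S a, Γ.Adj u x := by
  by_contra hcon
  push Not at hcon
  apply hab
  refine reach_closed (A := comp Γ S a) hx (SimpleGraph.Reachable.refl a) ?_
  rintro u hu v ⟨h1, h2, h3⟩
  refine comp_adj ha hu h1 fun hvS => ?_
  have : v ≠ x := by rintro rfl; exact hcon u hu h1
  exact h3 ⟨hvS, this⟩

theorem chordal_split [Finite V] {Γ : SimpleGraph V} (hΓ : Γ.NoInducedCycleGT3) {a b : V}
    (hab : a ≠ b) (hnab : ¬ Γ.Adj a b) :
    ∃ V1 V2 : Set V, V1 ∪ V2 = Set.univ ∧ Γ.IsClique (V1 ∩ V2) ∧ V1 ≠ Set.univ ∧ V2 ≠ Set.univ ∧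
      ∀ u v, u ∉ V2 → v ∉ V1 → ¬ Γ.Adj u v := by
  let P : Set V → Prop := fun S => a ∉ S ∧ b ∉ S ∧ ¬ (cut Γ S).Reachable a b
  have hP0 : P {a, b}ᶜ := by
    refine ⟨by simp, by simp, fun h => ?_⟩
    have : b ∈ ({a} : Set V) := by
      refine reach_closed h _ rfl ?_
      rintro u rfl v ⟨h1, h2, h3⟩
      simp only [Set.mem_compl_iff, Set.mem_insert_iff, Set.mem_singleton_iff, not_not] at h3
      rcases h3 with rfl | rfl
      · rfl
      · exact absurd h1 hnab
    exact hab this.symm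
  obtain ⟨S, hS⟩ := (Set.toFinite {S | P S}).exists_minimal ⟨_, hP0⟩
  obtain ⟨haS, hbS, hr⟩ := hS.prop
  have hmin : ∀ x ∈ S, (cut Γ (S \ {x})).Reachable a b := by
    intro x hx
    by_contra hcon
    have := hS.le_of_le (y := S \ {x}) ⟨fun h => haS h.1, fun h => hbS h.1, hcon⟩
      Set.diff_subset
    exact (this hx).2 rfl
  have hr' : ¬ (cut Γ S).Reachable b a := fun h => hr h.symm
  have hAB : ∀ s ∈ comp Γ S a, ∀ t ∈ comp Γ S b, s ≠ t ∧ ¬ Γ.Adj s t := by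
    intro s hs t ht
    have key : t ∉ comp Γ S a := fun h => hr (SimpleGraph.Reachable.trans h
      (SimpleGraph.Reachable.symm ht))
    refine ⟨?_, fun h => key (comp_adj haS hs h (comp_disj hbS ht))⟩
    rintro rfl
    exact key hs
  have hclique : Γ.IsClique S := by
    intro x hx y hy hxy
    by_contra hna
    obtain ⟨u, hu, hux⟩ := comp_edge hbS (hmin x hx) hr haS
    obtain ⟨v, hv, hvy⟩ := comp_edge hbS (hmin y hy) hr haS
    obtain ⟨u', hu', hux'⟩ := comp_edge haS (hmin x hx).symm hr' hbS
    obtain ⟨v', hv', hvy'⟩ := comp_edge haS (hmin y hy).symm hr' hbS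
    obtain ⟨n, p, hn2, p0, pn, pA, padj, pne, pnadj⟩ :=
      exists_path_comp haS hx hy hxy hna hu hux hv hvy
    obtain ⟨m, q, hm2, q0, qm, qB, qadj, qne, qnadj⟩ :=
      exists_path_comp hbS hx hy hxy hna hu' hux' hv' hvy'
    let f : ℕ → V := fun k => if k ≤ n then p k else q (n + m - k)
    have fp : ∀ k, k ≤ n → f k = p k := fun k hk => if_pos hk
    have fq : ∀ k, n ≤ k → f k = q (n + m - k) := by
      intro k hk
      rcases hk.eq_or_lt with rfl | hk
      · rw [fp _ le_rfl, pn, ← qm]; congr 1; omega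
      · exact if_neg (not_le.2 hk)
    refine (hΓ (n + m) (by omega)).false (cycle_emb (Γ := Γ) (N := n + m) f ?_ ?_).some
    · intro i j hij hj
      by_cases h1 : j ≤ n
      · rw [fp i (by omega), fp j h1]
        exact pne i (by omega) j h1 hij
      by_cases h2 : n ≤ i
      · rw [fq i h2, fq j (by omega)]
        exact (qne _ (by omega) _ (by omega) (by omega)).symm
      rw [fq j (by omega), fp i (by omega)]
      by_cases h3 : i = 0
      · subst h3
        rw [p0, ← q0]
        exact qne _ (by omega) _ (by omega) (by omega)
      · exact (hAB _ (pA i (by omega) (by omega)) _ (qB _ (by omega) (by omega))).1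
    · intro i j hij hj
      by_cases h1 : j ≤ n
      · rw [fp i (by omega), fp j h1]
        by_cases h : j = i + 1
        · subst h
          simp [padj i (by omega)]
        · have := pnadj i (by omega) j h1 (by omega)
          simp only [this, false_iff]
          omega
      by_cases h2 : n ≤ i
      · rw [fq i h2, fq j (by omega)]
        by_cases h : j = i + 1
        · subst h
          have := (qadj (n + m - (i + 1)) (by omega)).symm
          rw [show n + m - (i + 1) + 1 = n + m - i by omega] at this
          simp [this]
        · have := qnadj (n + m - j) (by omega) (n + m - i) (by omega) (by omega)
          rw [SimpleGraph.adj_comm] at this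
          simp only [this, false_iff]
          omega
      rw [fq j (by omega), fp i (by omega)]
      by_cases h3 : i = 0
      · subst h3
        rw [p0, ← q0]
        by_cases h : j + 1 = n + m
        · have := qadj 0 (by omega)
          rw [show n + m - j = 0 + 1 by omega]
          simp only [this, true_iff]
          exact Or.inr ⟨trivial, h⟩
        · have := qnadj 0 (by omega) (n + m - j) (by omega) (by omega)
          simp only [this, false_iff]
          omega
      · have := (hAB _ (pA i (by omega) (by omega)) _ (qB (n + m - j) (by omega) (by omega))).2
        simp only [this, false_iff]
        omega
  refine ⟨comp Γ S a ∪ S, (comp Γ S a)ᶜ, ?_, ?_, ?_, ?_, ?_⟩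
  · ext v
    simp only [Set.mem_union, Set.mem_compl_iff, Set.mem_univ, iff_true]
    tauto
  · refine hclique.subset ?_
    rintro v ⟨h1 | h1, h2⟩
    · exact absurd h1 h2
    · exact h1
  · intro h
    have : b ∈ comp Γ S a ∪ S := h ▸ Set.mem_univ b
    rcases this with h | h
    · exact hr h
    · exact hbS h
  · intro h
    have : a ∈ (comp Γ S a)ᶜ := h ▸ Set.mem_univ a
    exact this (SimpleGraph.Reachable.refl a)
  · intro u v hu hv hadj
    rw [Set.mem_compl_iff, not_not] at hu
    exact hv (Or.inl (comp_adj haS hu hadj fun h => hv (Or.inr h)))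

end Graph

end CoxCoh

namespace CoxCoh

section Final

open Monoid

theorem Sl.of_inj {A H : Type*} [Group A] [Group H] (hA : Sl A) (j : H →* A)
    (hj : Function.Injective j) : Sl H := fun C =>
  hA.transfer (MonoidHom.id A) Function.injective_id j hj C (fun x _ => ⟨x, rfl⟩)

theorem Coh.of_inj {A H : Type*} [Group A] [Group H] (hA : Coh A) (j : H →* A)
    (hj : Function.Injective j) : Coh H := fun C hC =>
  hA.transfer (MonoidHom.id A) Function.injective_id j hj C (fun x _ => ⟨x, rfl⟩) hC

variable {V : Type*}

theorem simple_eq0 {M : CoxeterMatrix V} (v : V) : M.toCoxeterSystem.simple v = M.simple v := by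
  rw [M.toCoxeterSystem_simple]

theorem hom_ext_simple {M : CoxeterMatrix V} {G : Type*} [Group G] {f g : M.Group →* G}
    (h : ∀ v, f (M.simple v) = g (M.simple v)) : f = g :=
  M.toCoxeterSystem.ext_simple fun v => by rw [simple_eq0]; exact h v

/-- The amalgamated product embeds the Coxeter group. -/
theorem coh_split [Finite V] (M : CoxeterMatrix V) (U : Bool → Set V)
    (hcov : ∀ v, ∃ i, v ∈ U i)
    (h0 : ∀ v w, (¬ ∃ i, v ∈ U i ∧ w ∈ U i) → M v w = 0)
    (hA : ∀ i, Coh (M.restrict (U i)).Group)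
    (hK : Sl (M.restrict (⋂ i, U i)).Group) : Coh M.Group := by
  have hU : ∀ i, ∀ v : (⋂ i, U i : Set V), (v : V) ∈ U i := fun i v => Set.mem_iInter.1 v.2 i
  let φ : ∀ i, (M.restrict (⋂ i, U i)).Group →* (M.restrict (U i)).Group := fun i =>
    para (M.restrict (U i)) (M.restrict (⋂ i, U i)) (fun v => ⟨v, hU i v⟩) fun _ _ => rfl
  have hφ : ∀ i, Function.Injective (φ i) := fun i =>
    para_injective (M.restrict (U i)) (M.restrict (⋂ i, U i)) (fun v => ⟨v, hU i v⟩)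
      (fun v w h => Subtype.ext (congrArg (fun x : U i => (x : V)) h)) fun _ _ => rfl
  have hcoh := coh_pushout hφ hA hK
  choose c hc using hcov
  let s : V → PushoutI φ := fun v =>
    PushoutI.of (φ := φ) (c v) ((M.restrict (U (c v))).simple ⟨v, hc v⟩)
  have hs : ∀ i v (h : v ∈ U i), s v = PushoutI.of (φ := φ) i ((M.restrict (U i)).simple ⟨v, h⟩) := by
    intro i v h
    by_cases hi : i = c v
    · subst hi; rfl
    · have hv : v ∈ ⋂ i, U i := by
        rw [Set.mem_iInter]
        intro k
        have : k = i ∨ k = c v := by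
          revert hi
          generalize c v = d
          cases i <;> cases d <;> cases k <;> simp
        rcases this with rfl | rfl
        · exact h
        · exact hc v
      have key : ∀ k (h : v ∈ U k), PushoutI.of (φ := φ) k ((M.restrict (U k)).simple ⟨v, h⟩) =
          PushoutI.base φ ((M.restrict (⋂ i, U i)).simple ⟨v, hv⟩) := by
        intro k h
        rw [← PushoutI.of_apply_eq_base φ k]
        congr 1
      exact (key _ _).trans (key _ _).symm
  have hrel : M.IsLiftable s := by
    intro v w
    by_cases h : ∃ i, v ∈ U i ∧ w ∈ U i
    · obtain ⟨i, hv, hw⟩ := h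
      rw [hs i v hv, hs i w hw, ← map_mul, ← map_pow]
      have := (M.restrict (U i)).toCoxeterSystem.simple_mul_simple_pow ⟨v, hv⟩ ⟨w, hw⟩
      rw [simple_eq0, simple_eq0] at this
      have h2 : (M.restrict (U i)) ⟨v, hv⟩ ⟨w, hw⟩ = M v w := rfl
      rw [h2] at this
      rw [this, map_one]
    · rw [h0 v w h, pow_zero]
  let g : M.Group →* PushoutI φ := M.toCoxeterSystem.lift ⟨s, hrel⟩
  have hg : ∀ v, g (M.simple v) = s v := by
    intro v
    rw [← simple_eq0]
    exact M.toCoxeterSystem.lift_apply_simple hrel v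
  let q : PushoutI φ →* M.Group := PushoutI.lift
    (fun i => para M (M.restrict (U i)) (fun v => (v : V)) fun _ _ => rfl)
    (para M (M.restrict (⋂ i, U i)) (fun v => (v : V)) fun _ _ => rfl) (by
      intro i
      refine hom_ext_simple fun v => ?_
      have e1 : φ i ((M.restrict (⋂ i, U i)).simple v) =
        (M.restrict (U i)).simple ⟨v, hU i v⟩ :=
        para_simple (M.restrict (U i)) (M.restrict (⋂ i, U i)) (fun v => ⟨v, hU i v⟩)
          (fun _ _ => rfl) v
      rw [MonoidHom.comp_apply, e1]
      exact (para_simple M (M.restrict (U i)) (fun v => (v : V)) (fun _ _ => rfl) _).trans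
        (para_simple M (M.restrict (⋂ i, U i)) (fun v => (v : V)) (fun _ _ => rfl) v).symm)
  have hqg : q.comp g = MonoidHom.id _ := by
    refine hom_ext_simple fun v => ?_
    rw [MonoidHom.comp_apply, hg]
    change q (PushoutI.of (φ := φ) (c v) _) = _
    rw [PushoutI.lift_of]
    exact para_simple M (M.restrict (U (c v))) (fun v => (v : V)) (fun _ _ => rfl) ⟨v, hc v⟩
  refine hcoh.of_inj g (Function.LeftInverse.injective (g := q) fun x => ?_)
  exact DFunLike.congr_fun hqg x

theorem coh_main (n : ℕ) : ∀ {V : Type} [Finite V] (_ : Nat.card V = n) (Γ : SimpleGraph V)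
    (M : CoxeterMatrix V) (_ : M.IsMatrixOf Γ) (_ : Γ.NoInducedCycleGT3)
    (_ : ∀ S : Set V, Γ.IsClique S → Sl (M.restrict S).Group), Coh M.Group := by
  induction n using Nat.strong_induction_on with
  | _ n ih =>
  intro V _ hn Γ M hM hch hcl
  by_cases hcomp : ∃ a b : V, a ≠ b ∧ ¬ Γ.Adj a b
  · obtain ⟨a, b, hab, hnab⟩ := hcomp
    obtain ⟨V1, V2, hun, hS, h1, h2, hne⟩ := chordal_split hch hab hnab
    let U : Bool → Set V := fun i => cond i V1 V2
    have hUi : (⋂ i, U i) = V1 ∩ V2 := by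
      ext v
      simp [U, and_comm]
    have hUne : ∀ i, U i ≠ Set.univ := by
      intro i; cases i
      · exact h2
      · exact h1
    refine coh_split M U ?_ ?_ ?_ ?_
    · intro v
      have : v ∈ V1 ∪ V2 := hun ▸ Set.mem_univ v
      rcases this with h | h
      · exact ⟨true, h⟩
      · exact ⟨false, h⟩
    · intro v w hvw
      have hv : v ∈ V1 ∪ V2 := hun ▸ Set.mem_univ v
      have hw : w ∈ V1 ∪ V2 := hun ▸ Set.mem_univ w
      have hn1 : ¬ (v ∈ V1 ∧ w ∈ V1) := fun h => hvw ⟨true, h⟩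
      have hn2 : ¬ (v ∈ V2 ∧ w ∈ V2) := fun h => hvw ⟨false, h⟩
      simp only [Set.mem_union] at hv hw
      refine hM.2 v w ?_ ?_
      · rintro rfl; tauto
      · by_cases h : v ∈ V1
        · exact hne v w (by tauto) (by tauto)
        · intro hadj
          exact hne w v (by tauto) h hadj.symm
    · intro i
      refine ih (Nat.card (U i)) ?_ rfl (Γ.induce (U i)) (M.restrict (U i)) ?_ ?_ ?_
      · rw [← hn, Nat.card_coe_set_eq, ← Set.ncard_univ]
        exact Set.ncard_lt_ncard (Set.ssubset_univ_iff.2 (hUne i))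
      · exact ⟨fun v w h => hM.1 v w h, fun v w hvw h =>
          hM.2 v w (fun he => hvw (Subtype.ext he)) h⟩
      · intro k hk
        exact ⟨fun e => (hch k hk).false (e.trans (SimpleGraph.Embedding.induce (U i)))⟩
      · intro T hT
        have hcT : Γ.IsClique (Subtype.val '' T) := by
          rintro _ ⟨x, hx, rfl⟩ _ ⟨y, hy, rfl⟩ hxy
          exact hT hx hy fun h => hxy (congrArg _ h)
        refine (hcl _ hcT).of_inj (para (M.restrict (Subtype.val '' T)) ((M.restrict (U i)).restrict T)
          (fun t => ⟨((t : U i) : V), t, t.2, rfl⟩) fun _ _ => rfl) (para_injective _ _ _ ?_ _)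
        intro s t h
        exact Subtype.ext (Subtype.ext (congrArg (fun x : (Subtype.val '' T : Set V) => (x : V)) h))
    · rw [hUi]
      exact hcl _ hS
  · push Not at hcomp
    classical
    cases nonempty_fintype V
    have h1 : Sl (M.restrict Set.univ).Group := hcl _ fun x _ y _ hxy => hcomp x y hxy
    have h2 : Sl M.Group := h1.of_inj (para (M.restrict Set.univ) M (fun v => ⟨v, trivial⟩)
      fun _ _ => rfl) (para_injective _ _ _ (fun v w h => congrArg
        (fun x : (Set.univ : Set V) => (x : V)) h) _)
    intro H _
    exact allFP_of_sl h2 H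

end Final

end CoxCoh

/-- If the Coxeter graph `Γ` (with edge labels in `{2,3,4,...}` recorded by
the Coxeter matrix `M`) has no induced cycle of length greater than `3`, and the Coxeter group
of every complete induced subgraph of `Γ` is slender, then the Coxeter group `C(Γ)` is
coherent. -/
theorem coxeterGroup_coherent_of_noInducedCycleGT3_of_cliques_slender
    {V : Type} [Fintype V] (Γ : SimpleGraph V) (M : CoxeterMatrix V)
    (hM : M.IsMatrixOf Γ)
    (hchordal : Γ.NoInducedCycleGT3)
    (hclique : ∀ S : Set V, Γ.IsClique S → Group.Slender (M.restrict S).Group) :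
    Group.Coherent M.Group := by
  intro H hH
  have h := CoxCoh.coh_main _ rfl Γ M hM hchordal hclique H hH
  obtain ⟨n, s, hs, ⟨e⟩⟩ := h.exists_mulEquiv_presentedGroup
  exact ⟨n, s, hs, ⟨e.symm⟩⟩
end

section
/- Let Γ = (V,E) be a finite simplicial graph with an edge labeling ψ : E → {2,3,4,...}. If Γ is a tree, then the Coxeter group C(Γ) is coherent. -/
namespace CohTree

open RegularWreathProduct

/-- A group with a finite index subgroup embedding into a free group is coherent. -/
theorem coherent_of_virtually_free {G : Type} [Group G] (K : Subgroup G) [K.FiniteIndex]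
    {L : Type} [Group L] [IsFreeGroup L] (j : K →* L) (hj : Function.Injective j) :
    Group.Coherent G := by
  intro H hH
  have hHfg : Group.FG H := (Group.fg_iff_subgroup_fg H).2 hH
  obtain ⟨n, f, hf⟩ : ∃ (n : ℕ) (f : FreeGroup (Fin n) →* H), Function.Surjective f := by
    obtain ⟨S, hS⟩ := hHfg.out
    obtain ⟨n, ⟨e⟩⟩ := Finite.exists_equiv_fin S
    refine ⟨n, FreeGroup.lift (fun i => ((e.symm i : S) : H)), ?_⟩
    rw [FreeGroup.lift_surjective_iff_closure_range_eq_top]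
    have h1 : Set.range (fun i => ((e.symm i : S) : H)) = (S : Set H) := by
      ext x
      constructor
      · rintro ⟨i, rfl⟩
        exact (e.symm i).2
      · intro hx
        exact ⟨e ⟨x, hx⟩, by simp⟩
    rw [h1, hS]
  let N : Subgroup H := K.subgroupOf H
  let i : N →* K :=
    { toFun := fun x => ⟨x.1.1, x.2⟩
      map_one' := rfl
      map_mul' := fun _ _ => rfl }
  have hi : Function.Injective i := by
    intro x y h
    apply Subtype.ext
    apply Subtype.ext
    exact congrArg (fun z : K => (z : G)) h
  have hfree : IsFreeGroup N :=
    IsFreeGroup.ofMulEquiv ((j.comp i).ofInjective (hj.comp hi)).symm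
  let A : Subgroup (FreeGroup (Fin n)) := N.comap f
  have hNfi : N.FiniteIndex := inferInstance
  have hAfi : A.FiniteIndex :=
    ⟨by rw [Subgroup.index_comap_of_surjective N hf]; exact hNfi.index_ne_zero⟩
  have hAfg : Group.FG A := inferInstance
  let q : A →* N := f.subgroupComap N
  have hq : Function.Surjective q := f.subgroupComap_surjective_of_surjective N hf
  choose t ht using hq
  let s : N →* A := IsFreeGroup.lift (fun a => t (IsFreeGroup.of a))
  have hs : ∀ x, q (s x) = x := by
    have : q.comp s = MonoidHom.id N := by
      apply IsFreeGroup.ext_hom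
      intro a
      simp [s, ht]
    intro x
    exact DFunLike.congr_fun this x
  obtain ⟨S, hS⟩ := hAfg.out
  let g : A → FreeGroup (Fin n) := fun x => ((x⁻¹ * s (q x) : A) : FreeGroup (Fin n))
  let rels : Set (FreeGroup (Fin n)) := g '' (S : Set A)
  have hker : Subgroup.normalClosure rels = f.ker := by
    apply le_antisymm
    · apply Subgroup.normalClosure_le_normal
      rintro _ ⟨x, -, rfl⟩
      have h1 : q (x⁻¹ * s (q x)) = 1 := by simp [hs]
      have h2 := congrArg (fun z : N => (z : H)) h1
      exact h2
    · intro x hx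
      have hx1 : f x = 1 := hx
      have hxA : x ∈ A := by
        change f x ∈ N
        rw [hx1]; exact N.one_mem
      have key : ∀ y : A, (QuotientGroup.mk' (Subgroup.normalClosure rels)) (y : FreeGroup (Fin n))
          = (QuotientGroup.mk' (Subgroup.normalClosure rels)) (s (q y) : FreeGroup (Fin n)) := by
        intro y
        have hy : y ∈ Subgroup.closure (S : Set A) := by rw [hS]; trivial
        induction hy using Subgroup.closure_induction with
        | mem y hy =>
          have : g y ∈ Subgroup.normalClosure rels :=
            Subgroup.subset_normalClosure ⟨y, hy, rfl⟩
          rw [QuotientGroup.mk'_apply, QuotientGroup.mk'_apply, QuotientGroup.eq]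
          exact this
        | one => simp
        | mul a b _ _ ha hb =>
          simp only [Subgroup.coe_mul, map_mul] at *
          rw [ha, hb]
        | inv a _ ha =>
          simp only [Subgroup.coe_inv, map_inv] at *
          rw [ha]
      have h1 := key ⟨x, hxA⟩
      have h2 : q ⟨x, hxA⟩ = 1 := Subtype.ext hx1
      rw [h2] at h1
      simp only [map_one, Subgroup.coe_one] at h1
      exact (QuotientGroup.eq_one_iff x).1 h1
  refine ⟨n, rels, S.finite_toSet.image g, ⟨?_⟩⟩
  exact (QuotientGroup.quotientMulEquivOfEq hker).trans
    (QuotientGroup.quotientKerEquivOfSurjective f hf)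

/-- A homomorphism out of a dihedral group. -/
theorem dihedral_map {C : Type} [Group C] (m : ℕ) (a b : C) (ha : a * a = 1) (hb : b * b = 1)
    (hab : (a * b) ^ m = 1) :
    ∃ θ : DihedralGroup m → C, (∀ i, θ (.sr i) = a * θ (.r i)) ∧
      ∀ d, θ (.sr 1 * d) = b * θ d := by
  have hz : (zmultiplesHom (Additive C) (Additive.ofMul (a * b))) (m : ℤ) = 0 := by
    rw [zmultiplesHom_apply, natCast_zsmul, ← ofMul_pow, hab, ofMul_one]
  let h : ZMod m →+ Additive C := ZMod.lift m ⟨_, hz⟩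
  let k : ZMod m → C := fun i => (h i).toMul
  have hk1 : k 1 = a * b := by
    have : h ((1 : ℤ) : ZMod m) = Additive.ofMul (a * b) := by
      rw [ZMod.lift_coe]; simp
    rw [Int.cast_one] at this
    simp only [k, this, toMul_ofMul]
  have hka : ∀ i j, k (i + j) = k i * k j := by
    intro i j
    simp only [k, map_add, toMul_add]
  have hkn : k (-1) = b * a := by
    have : k (-1) * k 1 = 1 := by
      rw [← hka]; simp [k]
    rw [hk1] at this
    rw [eq_inv_of_mul_eq_one_left this, mul_inv_rev, inv_eq_of_mul_eq_one_left ha,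
      inv_eq_of_mul_eq_one_left hb]
  refine ⟨fun d => match d with | .r i => k i | .sr i => a * k i, fun i => rfl, ?_⟩
  rintro (i | i)
  · simp only [DihedralGroup.sr_mul_r]
    rw [hka, hk1, ← mul_assoc, ← mul_assoc, ha, one_mul]
  · simp only [DihedralGroup.sr_mul_sr]
    rw [sub_eq_neg_add, hka, hkn, mul_assoc]

/-- Extending a wreath product lift from one vertex to an adjacent one. -/
theorem step {C L Q : Type} [Group C] [Group L] [Group Q] (pr : L →* C)
    (hpr : Function.Surjective pr) (m : ℕ) (sv sw : C) (hv : sv * sv = 1) (hw : sw * sw = 1)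
    (hvw : (sv * sw) ^ m = 1) (qv qw : Q) (hqw : qw * qw = 1)
    (hqvw : (qw * qv) ^ m = 1)
    (e : Q →* DihedralGroup m) (hev : e qv = .sr 0) (hew : e qw = .sr 1)
    (T : L ≀ᵣ Q) (hT : T * T = 1) (hTr : T.right = qv) (hTl : ∀ x, pr (T.left x) = sv) :
    ∃ U : L ≀ᵣ Q, U * U = 1 ∧ U.right = qw ∧ (∀ x, pr (U.left x) = sw) ∧ (U * T) ^ m = 1 := by
  obtain ⟨θ, hθ1, hθ2⟩ := dihedral_map m sv sw hv hw hvw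
  choose o ho using hpr
  let P : Q → L := fun x => match e x with
    | .r i => o (θ (.r i))
    | .sr i => T.left x * o (θ (.r i))
  have hPr : ∀ x i, e x = .r i → P x = o (θ (.r i)) := by
    intro x i h; simp only [P, h]
  have hPs : ∀ x i, e x = .sr i → P x = T.left x * o (θ (.r i)) := by
    intro x i h; simp only [P, h]
  have hprP : ∀ x, pr (P x) = θ (e x) := by
    intro x
    rcases h : e x with i | i
    · rw [hPr x i h, ho]
    · rw [hPs x i h, map_mul, ho, hTl, hθ1]
  let Pc : L ≀ᵣ Q := ⟨P, 1⟩
  have hTT : ∀ x, T.left x * T.left (qv⁻¹ * x) = 1 := by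
    intro x
    have := congrFun (congrArg RegularWreathProduct.left hT) x
    simpa [hTr] using this
  have hTP : T = Pc * inl qv * Pc⁻¹ := by
    apply RegularWreathProduct.ext
    · funext x
      have goal : T.left x = P x * (P (qv⁻¹ * x))⁻¹ := by
        rcases h : e x with i | i
        · have h' : e (qv⁻¹ * x) = .sr i := by
            rw [map_mul, map_inv, hev, h]; simp
          rw [hPr x i h, hPs _ i h', mul_inv_rev, mul_inv_cancel_left]
          exact eq_inv_of_mul_eq_one_left (hTT x)
        · have h' : e (qv⁻¹ * x) = .r i := by
            rw [map_mul, map_inv, hev, h]; simp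
          rw [hPs x i h, hPr _ i h', mul_inv_cancel_right]
      simpa [Pc] using goal
    · simp [Pc, hTr]
  let U : L ≀ᵣ Q := Pc * inl qw * Pc⁻¹
  refine ⟨U, ?_, ?_, ?_, ?_⟩
  · have : U * U = Pc * (inl (qw * qw)) * Pc⁻¹ := by simp only [U, map_mul]; group
    rw [this, hqw]; simp
  · simp [U, Pc]
  · intro x
    have : U.left x = P x * (P (qw⁻¹ * x))⁻¹ := by simp [U, Pc]
    rw [this, map_mul, map_inv, hprP, hprP, map_mul, map_inv, hew, DihedralGroup.inv_sr, hθ2]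
    rw [mul_inv_rev, mul_inv_cancel_left]
    exact inv_eq_of_mul_eq_one_left hw
  · have : U * T = Pc * (inl (qw * qv)) * Pc⁻¹ := by
      rw [hTP]; simp only [U, map_mul]; group
    rw [this, conj_pow, ← map_pow, hqvw]; simp

/-- Rooting a tree. -/
theorem exists_parent {V : Type} (Γ : SimpleGraph V) (h : Γ.IsTree) (r : V) :
    ∃ (p : V → V) (d : V → ℕ), p r = r ∧ (∀ w, w ≠ r → d (p w) < d w) ∧
      (∀ w, w ≠ r → Γ.Adj w (p w)) ∧
      (∀ v w, Γ.Adj v w → (v ≠ r ∧ p v = w) ∨ (w ≠ r ∧ p w = v)) := by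
  choose P hP hPu using fun v => h.existsUnique_path v r
  simp only at hP hPu
  have hnil : ∀ w, w ≠ r → ¬ (P w).Nil := fun w hw hn => hw hn.eq
  refine ⟨fun w => (P w).snd, fun w => (P w).length, ?_, ?_, ?_, ?_⟩
  · change (P r).snd = r
    rw [← hPu r SimpleGraph.Walk.nil SimpleGraph.Walk.IsPath.nil]
    rfl
  · intro w hw
    have h1 := hPu _ (P w).tail (hP w).tail
    have h2 := SimpleGraph.Walk.length_tail_add_one (hnil w hw)
    simp only
    rw [← h1]
    omega
  · intro w hw
    exact SimpleGraph.Walk.adj_snd (hnil w hw)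
  · intro v w hvw
    by_cases hs : w ∈ (P v).support
    · left
      refine ⟨?_, (h.isAcyclic.eq_snd_of_adj_start (hP v) hvw hs).symm⟩
      rintro rfl
      rw [← hPu v SimpleGraph.Walk.nil SimpleGraph.Walk.IsPath.nil] at hs
      simp at hs
      exact hvw.ne hs.symm
    · right
      have hp : (SimpleGraph.Walk.cons hvw.symm (P v)).IsPath := (hP v).cons hs
      have := hPu w _ hp
      constructor
      · rintro rfl
        exact hs (P v).end_mem_support
      · change (P w).snd = v
        rw [← this]; simp

end CohTree

/-- If the Coxeter graph `Γ` (with edge labels in `{2,3,4,...}` recorded by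
the Coxeter matrix `M`) is a tree, then the Coxeter group `C(Γ)` is coherent. -/
theorem coxeterGroup_coherent_of_isTree
    {V : Type} [Fintype V] (Γ : SimpleGraph V) (M : CoxeterMatrix V)
    (hM : M.IsMatrixOf Γ)
    (htree : Γ.IsTree) :
    Group.Coherent M.Group := by
  classical
  obtain ⟨hM1, hM2⟩ := hM
  obtain ⟨r⟩ : Nonempty V := htree.connected.nonempty
  obtain ⟨p, d, hpr, hpd, hpa, hadj⟩ := CohTree.exists_parent Γ htree r
  let cs := M.toCoxeterSystem
  -- liftability criterion
  have hlift : ∀ {G : Type} [Group G] (f : V → G), (∀ v, f v * f v = 1) →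
      (∀ w, w ≠ r → (f w * f (p w)) ^ M w (p w) = 1) → M.IsLiftable f := by
    intro G _ f h1 h2 v w
    by_cases hvw : v = w
    · subst hvw; simp [h1]
    by_cases ha : Γ.Adj v w
    · rcases hadj v w ha with ⟨hv, rfl⟩ | ⟨hw, rfl⟩
      · exact h2 v hv
      · have := h2 w hw
        rw [M.symmetric (p w) w]
        have h3 : f (p w) * f w = (f w * f (p w))⁻¹ := by
          rw [mul_inv_rev, inv_eq_of_mul_eq_one_left (h1 _), inv_eq_of_mul_eq_one_left (h1 _)]
        rw [h3, inv_pow, this, inv_one]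
    · rw [hM2 v w hvw ha, pow_zero]
  -- the finite quotient
  let m : V → ℕ := fun w => M w (p w)
  have hm0 : ∀ w, m w ≠ 0 := by
    intro w
    by_cases hw : w = r
    · subst hw; simp [m, hpr]
    · have := hM1 w (p w) (hpa w hw)
      simp only [m]; omega
  have : ∀ w, NeZero (m w) := fun w => ⟨hm0 w⟩
  let desc : V → V → Prop := fun w u => ∃ k : ℕ, p^[k] u = w
  have hdself : ∀ w, desc w w := fun w => ⟨0, rfl⟩
  have hdp : ∀ w u, u ≠ w → (desc w u ↔ desc w (p u)) := by
    intro w u hu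
    constructor
    · rintro ⟨k, hk⟩
      cases k with
      | zero => exact absurd hk hu
      | succ k => exact ⟨k, hk⟩
    · rintro ⟨k, hk⟩
      exact ⟨k + 1, hk⟩
  have hdle : ∀ k u, d (p^[k] u) ≤ d u := by
    intro k
    induction k with
    | zero => intro u; exact le_rfl
    | succ k ih =>
      intro u
      refine (ih (p u)).trans ?_
      by_cases hu : u = r
      · subst hu; rw [hpr]
      · exact (hpd u hu).le
  have hdn : ∀ w, w ≠ r → ¬ desc w (p w) := by
    rintro w hw ⟨k, hk⟩
    have h1 := hdle k (p w)
    rw [hk] at h1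
    exact absurd (hpd w hw) (by omega)
  let φ : V → ∀ w, DihedralGroup (m w) := fun u w => if desc w u then .sr 1 else .sr 0
  have hφ1 : ∀ u, φ u * φ u = 1 := by
    intro u
    funext w
    simp only [φ, Pi.mul_apply, Pi.one_apply]
    split_ifs <;> exact DihedralGroup.sr_mul_self _
  have hφ2 : ∀ u, u ≠ r → (φ u * φ (p u)) ^ M u (p u) = 1 := by
    intro u hu
    funext w
    simp only [φ, Pi.mul_apply, Pi.pow_apply, Pi.one_apply]
    by_cases huw : u = w
    · subst huw
      rw [if_pos (hdself u), if_neg (hdn u hu), DihedralGroup.sr_mul_sr, DihedralGroup.r_pow]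
      have : ((M u (p u) : ℕ) : ZMod (m u)) = 0 := ZMod.natCast_self (m u)
      rw [this, mul_zero, DihedralGroup.r_zero]
    · by_cases hd : desc w u
      · rw [if_pos hd, if_pos ((hdp w u huw).1 hd), DihedralGroup.sr_mul_self, one_pow]
      · rw [if_neg hd, if_neg (fun h => hd ((hdp w u huw).2 h)), DihedralGroup.sr_mul_self,
          one_pow]
  -- the free group
  let pr : FreeGroup V →* M.Group := PresentedGroup.mk M.relationsSet
  have hprs : Function.Surjective pr := PresentedGroup.mk_surjective _
  let Good : V → (FreeGroup V ≀ᵣ (∀ w, DihedralGroup (m w))) → Prop := fun v T =>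
    T * T = 1 ∧ T.right = φ v ∧ ∀ x, pr (T.left x) = cs.simple v
  have hroot : ∃ T, Good r T := by
    obtain ⟨o, ho⟩ := hprs (cs.simple r)
    let P : DihedralGroup (m r) → FreeGroup V := fun y =>
      match y with
      | .r _ => o
      | .sr _ => o⁻¹
    refine ⟨⟨fun x => P (x r), φ r⟩, ?_, rfl, ?_⟩
    · apply RegularWreathProduct.ext
      · funext x
        have hφr : φ r r = .sr 1 := if_pos (hdself r)
        have goal : P (x r) * P ((φ r r)⁻¹ * x r) = 1 := by
          rw [hφr]
          rcases x r with i | i <;> simp [P]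
        simpa using goal
      · exact hφ1 r
    · intro x
      change pr (P (x r)) = cs.simple r
      rcases x r with i | i
      · exact ho
      · simp only [P, map_inv, ho, cs.inv_simple]
  have hstep : ∀ w, w ≠ r → ∀ T, Good (p w) T → ∃ U, Good w U ∧ (U * T) ^ M w (p w) = 1 := by
    rintro w hw T ⟨hT1, hT2, hT3⟩
    obtain ⟨U, h1, h2, h3, h4⟩ := CohTree.step pr hprs (m w) (cs.simple (p w)) (cs.simple w)
      (cs.simple_mul_simple_self _) (cs.simple_mul_simple_self _)
      (cs.simple_mul_simple_pow' _ _) (φ (p w)) (φ w) (hφ1 w) (hφ2 w hw)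
      (Pi.evalMonoidHom _ w) (if_neg (hdn w hw)) (if_pos (hdself w)) T hT1 hT2 hT3
    exact ⟨U, ⟨h1, h2, h3⟩, h4⟩
  have hall : ∀ n : ℕ, ∃ a : V → (FreeGroup V ≀ᵣ (∀ w, DihedralGroup (m w))),
      ∀ w, d w < n → Good w (a w) ∧ (w ≠ r → (a w * a (p w)) ^ M w (p w) = 1) := by
    intro n
    induction n with
    | zero => exact ⟨fun _ => 1, fun w hw => absurd hw (Nat.not_lt_zero _)⟩
    | succ n ih =>
      obtain ⟨a, ha⟩ := ih
      obtain ⟨T0, hT0⟩ := hroot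
      have hex : ∀ w, ∃ U, d w < n + 1 → Good w U ∧
          (w ≠ r → (U * a (p w)) ^ M w (p w) = 1) := by
        intro w
        by_cases hw : w = r
        · exact ⟨T0, fun _ => ⟨hw ▸ hT0, fun h => absurd hw h⟩⟩
        · by_cases hn : d w < n + 1
          · have h1 := hpd w hw
            obtain ⟨U, hU, hU'⟩ := hstep w hw _ (ha (p w) (by omega)).1
            exact ⟨U, fun _ => ⟨hU, fun _ => hU'⟩⟩
          · exact ⟨1, fun h => absurd h hn⟩
      choose b hb using hex
      refine ⟨fun w => if d w < n then a w else b w, fun w hw => ?_⟩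
      by_cases hn : d w < n
      · simp only [if_pos hn]
        refine ⟨(ha w hn).1, fun hwr => ?_⟩
        have h1 := hpd w hwr
        rw [if_pos (by omega)]
        exact (ha w hn).2 hwr
      · simp only [if_neg hn]
        refine ⟨(hb w hw).1, fun hwr => ?_⟩
        have h1 := hpd w hwr
        rw [if_pos (by omega)]
        exact (hb w hw).2 hwr
  obtain ⟨a, ha⟩ := hall (Finset.univ.sup d + 1)
  replace ha := fun w => ha w (Nat.lt_succ_of_le (Finset.le_sup (Finset.mem_univ w)))
  have hal : M.IsLiftable a := hlift a (fun v => (ha v).1.1) (fun w hw => (ha w).2 hw)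
  let Φ := cs.lift ⟨a, hal⟩
  have hΦs : ∀ v, Φ (cs.simple v) = a v := fun v => cs.lift_apply_simple hal v
  have hΦ : ∀ g x, pr ((Φ g).left x) = g := by
    intro g
    induction g using cs.simple_induction_left with
    | one => intro x; simp
    | mul_simple_left g v ih =>
      intro x
      rw [map_mul, RegularWreathProduct.mul_left, Pi.mul_apply, map_mul, ih, hΦs,
        (ha v).1.2.2]
  let ρ := RegularWreathProduct.rightHom.comp Φ
  let K := ρ.ker
  have : K.FiniteIndex := inferInstance
  have hK : ∀ k : K, (Φ k).right = 1 := fun k => k.2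
  let j : K →* FreeGroup V :=
    { toFun := fun k => (Φ k).left 1
      map_one' := by simp
      map_mul' := by
        intro k l
        simp [hK k] }
  refine CohTree.coherent_of_virtually_free K j ?_
  intro k l hkl
  apply Subtype.ext
  rw [← hΦ k 1, ← hΦ l 1]
  exact congrArg pr hkl
end
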